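/- Assume the Riemann Hypothesis. Fix real numbers κ and η, a number ϑ with 0 < ϑ < 1/2, and a polynomial P with P(0) = 0. Then as T → ∞, Σ_{T<γ≤2T} | ζ(ρ + 2πiκ/log T) · M(ρ + 2πiη/log T, P) |² ≪ T log T, where ρ = 1/2 + iγ runs over the nontrivial zeros of ζ with ordinate in (T,2T], counted with multiplicity. -/

import Mathlib

open Filter MeasureTheory
open scoped Real

noncomputable section

/-- The multiplicity (order of vanishing) of the Riemann zeta function at a point `z`:
the least `n` such that the `n`-th derivative of `ζ` at `z` is nonzero. -/
def zetaMult (z : ℂ) : ℕ := sInf {n : ℕ | iteratedDeriv n riemannZeta z ≠ 0}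

/-- Under RH, the set of ordinates `γ` with `0 < γ ≤ T` of nontrivial zeros `1/2 + iγ` of `ζ`. -/
def zetaOrds (T : ℝ) : Set ℝ :=
  {γ : ℝ | 0 < γ ∧ γ ≤ T ∧ riemannZeta (1 / 2 + γ * Complex.I) = 0}

/-- The multiplicity of the zero of `ζ` at `1/2 + iγ`. -/
def ordMult (γ : ℝ) : ℕ := zetaMult (1 / 2 + γ * Complex.I)

/-- `N(T)`: the number of ordinates of nontrivial zeros in `(0, T]`, counted with multiplicity. -/
def zetaN (T : ℝ) : ℕ := ∑ᶠ γ ∈ zetaOrds T, ordMult γ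

/-- The next ordinate of a nontrivial zero strictly above `γ`. -/
def nextOrd (γ : ℝ) : ℝ :=
  sInf {γ' : ℝ | γ < γ' ∧ riemannZeta (1 / 2 + γ' * Complex.I) = 0}

/-- The mollifier `M(s, P) = Σ_{n ≤ y} μ(n) P(log(y/n)/log y) n^{-s}` with `y = T^ϑ`. -/
def moll (T ϑ : ℝ) (P : Polynomial ℝ) (s : ℂ) : ℂ :=
  ∑ n ∈ Finset.Icc 1 ⌊T ^ ϑ⌋₊,
    (ArithmeticFunction.moebius n : ℂ) *
      (P.eval (Real.log (T ^ ϑ / n) / Real.log (T ^ ϑ)) : ℝ) * (n : ℂ) ^ (-s)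

lemma mz_moeb_le (n : ℕ) : |((ArithmeticFunction.moebius n : ℤ) : ℝ)| ≤ 1 := by
  have := ArithmeticFunction.abs_moebius_le_one (n := n)
  rw [← Int.cast_abs]; exact_mod_cast this

lemma mz_mu_sum_floor (N : ℕ) (hN : 1 ≤ N) :
    ∑ n ∈ Finset.Ioc 0 N, ((ArithmeticFunction.moebius n : ℤ) : ℝ) * ((N / n : ℕ) : ℝ) = 1 := by
  have h := ArithmeticFunction.sum_Ioc_mul_zeta_eq_sum
    (ArithmeticFunction.moebius) N
  rw [ArithmeticFunction.moebius_mul_coe_zeta] at h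
  have h1 : ∑ n ∈ Finset.Ioc 0 N, (1 : ArithmeticFunction ℤ) n = 1 := by
    rw [Finset.sum_eq_single 1]
    · simp
    · intro b _ hb; simp [ArithmeticFunction.one_apply_ne hb]
    · intro h; simp at h; omega
  rw [h1] at h
  have h2 := congrArg (fun z : ℤ => (z : ℝ)) h
  simp only [Int.cast_sum, Int.cast_mul, Int.cast_one, Int.cast_natCast] at h2
  exact h2.symm

def mz_m1 : ArithmeticFunction ℝ := ⟨fun n => (ArithmeticFunction.moebius n : ℝ) / n, by simp⟩
def mz_i1 : ArithmeticFunction ℝ := ⟨fun n => 1 / n, by simp⟩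

lemma mz_m1_i1 : mz_m1 * mz_i1 = 1 := by
  ext n
  rcases Nat.eq_zero_or_pos n with rfl | hn
  · simp
  have h := congrArg (fun f : ArithmeticFunction ℤ => f n) ArithmeticFunction.moebius_mul_coe_zeta
  rw [ArithmeticFunction.coe_mul_zeta_apply] at h
  rw [ArithmeticFunction.mul_apply]
  have : ∀ x ∈ n.divisorsAntidiagonal, mz_m1 x.1 * mz_i1 x.2
      = (ArithmeticFunction.moebius x.1 : ℝ) / n := by
    intro x hx
    rw [Nat.mem_divisorsAntidiagonal] at hx
    have h1 : x.1 ≠ 0 := by rintro h; simp [h] at hx; omega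
    have h2 : x.2 ≠ 0 := by rintro h; simp [h] at hx; omega
    show (ArithmeticFunction.moebius x.1 : ℝ) / x.1 * (1 / x.2) = _
    rw [← hx.1]; push_cast; field_simp
  rw [Finset.sum_congr rfl this, ← Finset.sum_div, Nat.sum_divisorsAntidiagonal (f := fun i _ => (ArithmeticFunction.moebius i : ℝ))]
  have h3 : ∑ i ∈ n.divisors, (ArithmeticFunction.moebius i : ℝ) = (((1 : ArithmeticFunction ℤ) n : ℤ) : ℝ) := by
    rw [← h]; push_cast; rfl
  rw [h3]
  by_cases h1 : n = 1
  · subst h1; simp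
  · simp [ArithmeticFunction.one_apply_ne h1]

lemma mz_mu_sum_harm (N : ℕ) (hN : 1 ≤ N) :
    ∑ n ∈ Finset.Ioc 0 N, ((ArithmeticFunction.moebius n : ℤ) : ℝ) / n * ((harmonic (N / n) : ℚ) : ℝ) = 1 := by
  have h := ArithmeticFunction.sum_Ioc_mul_eq_sum_sum mz_m1 mz_i1 N
  rw [mz_m1_i1] at h
  have h1 : ∑ n ∈ Finset.Ioc 0 N, (1 : ArithmeticFunction ℝ) n = 1 := by
    rw [Finset.sum_eq_single 1]
    · simp
    · intro b _ hb; simp [ArithmeticFunction.one_apply_ne hb]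
    · intro h; simp at h; omega
  rw [h1] at h
  rw [h]
  refine Finset.sum_congr rfl fun n hn => ?_
  show _ = (ArithmeticFunction.moebius n : ℝ) / n * _
  congr 1
  rw [harmonic_eq_sum_Icc]
  push_cast
  refine Finset.sum_congr (by ext; simp; omega) fun m _ => ?_
  show _ = 1 / (m : ℝ)
  simp

lemma mz_m_bound (x : ℝ) (hx : 1 ≤ x) :
    |∑ n ∈ Finset.Ioc 0 ⌊x⌋₊, ((ArithmeticFunction.moebius n : ℤ) : ℝ) / n| ≤ 2 := by
  have hN : 1 ≤ ⌊x⌋₊ := by rwa [Nat.one_le_floor_iff]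
  have h := mz_mu_sum_floor _ hN
  have hd : x * ∑ n ∈ Finset.Ioc 0 ⌊x⌋₊, ((ArithmeticFunction.moebius n : ℤ) : ℝ) / n - 1 =
      ∑ n ∈ Finset.Ioc 0 ⌊x⌋₊, ((ArithmeticFunction.moebius n : ℤ) : ℝ) * (x / n - ((⌊x⌋₊ / n : ℕ) : ℝ)) := by
    rw [← h, Finset.mul_sum, ← Finset.sum_sub_distrib]
    refine Finset.sum_congr rfl fun n _ => ?_
    ring
  have hb : |∑ n ∈ Finset.Ioc 0 ⌊x⌋₊, ((ArithmeticFunction.moebius n : ℤ) : ℝ) * (x / n - ((⌊x⌋₊ / n : ℕ) : ℝ))| ≤ x := by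
    calc _ ≤ ∑ n ∈ Finset.Ioc 0 ⌊x⌋₊, (1 : ℝ) := by
          refine (Finset.abs_sum_le_sum_abs _ _).trans (Finset.sum_le_sum fun n hn => ?_)
          rw [abs_mul]
          have h2 : |x / n - ((⌊x⌋₊ / n : ℕ) : ℝ)| ≤ 1 := by
            rw [← Nat.floor_div_natCast, abs_le]
            have := Nat.floor_le (a := x / n) (by positivity)
            have := Nat.lt_floor_add_one (x / n)
            constructor <;> linarith
          calc _ ≤ 1 * 1 := mul_le_mul (mz_moeb_le n) h2 (abs_nonneg _) zero_le_one
            _ = 1 := by norm_num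
      _ = ⌊x⌋₊ := by simp
      _ ≤ x := Nat.floor_le (by linarith)
  rw [← hd] at hb
  set S := ∑ n ∈ Finset.Ioc 0 ⌊x⌋₊, ((ArithmeticFunction.moebius n : ℤ) : ℝ) / n
  rw [abs_le] at hb ⊢
  constructor
  · nlinarith
  · nlinarith

/-- R(q,x) -/
def mz_R (q : ℕ) (x : ℝ) : ℝ :=
  ∑ n ∈ Finset.Ioc 0 ⌊x⌋₊ with Nat.Coprime n q, ((ArithmeticFunction.moebius n : ℤ) : ℝ) / n * Real.log (x / n)

lemma mz_harm_err (z : ℝ) (hz : 1 ≤ z) :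
    |((harmonic ⌊z⌋₊ : ℚ) : ℝ) - Real.log z - Real.eulerMascheroniConstant| ≤ 2 / z := by
  set n := ⌊z⌋₊ with hn
  have hN : 1 ≤ n := by rw [hn]; rwa [Nat.one_le_floor_iff]
  have hN' : (1 : ℝ) ≤ n := by exact_mod_cast hN
  have h1 := Real.eulerMascheroniSeq_lt_eulerMascheroniConstant n
  have h2 := Real.eulerMascheroniConstant_lt_eulerMascheroniSeq' n
  rw [Real.eulerMascheroniSeq] at h1
  rw [Real.eulerMascheroniSeq', if_neg (by omega)] at h2
  have h3 : (n : ℝ) ≤ z := Nat.floor_le (by linarith)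
  have h4 : z < n + 1 := Nat.lt_floor_add_one z
  have h5 : Real.log n ≤ Real.log z := Real.log_le_log (by linarith) h3
  have h6 : Real.log z ≤ Real.log (n + 1) := Real.log_le_log (by linarith) h4.le
  have h7 : Real.log (n + 1) - Real.log n ≤ 2 / z := by
    rw [← Real.log_div (by linarith) (by linarith)]
    have : ((n : ℝ) + 1) / n = 1 + 1 / n := by field_simp
    rw [this]
    refine (Real.log_le_sub_one_of_pos (by positivity)).trans ?_
    rw [add_sub_cancel_left, div_le_div_iff₀ (by linarith) (by linarith)]
    linarith
  rw [abs_le]; constructor <;> linarith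

lemma mz_R1 (x : ℝ) (hx : 1 ≤ x) : |mz_R 1 x| ≤ 5 := by
  have hN : 1 ≤ ⌊x⌋₊ := by rwa [Nat.one_le_floor_iff]
  have h := mz_mu_sum_harm _ hN
  have hm := mz_m_bound x hx
  have e : mz_R 1 x = 1 - Real.eulerMascheroniConstant * (∑ n ∈ Finset.Ioc 0 ⌊x⌋₊, ((ArithmeticFunction.moebius n : ℤ) : ℝ) / n)
     - ∑ n ∈ Finset.Ioc 0 ⌊x⌋₊, ((ArithmeticFunction.moebius n : ℤ) : ℝ) / n * (((harmonic (⌊x⌋₊ / n) : ℚ) : ℝ) - Real.log (x / n) - Real.eulerMascheroniConstant) := by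
    conv_rhs => rw [← h]
    rw [Finset.mul_sum, ← Finset.sum_sub_distrib, ← Finset.sum_sub_distrib, mz_R]
    simp only [Nat.coprime_one_right_eq_true, Finset.filter_true]
    refine Finset.sum_congr rfl fun n _ => ?_
    ring
  have hb : |∑ n ∈ Finset.Ioc 0 ⌊x⌋₊, ((ArithmeticFunction.moebius n : ℤ) : ℝ) / n * (((harmonic (⌊x⌋₊ / n) : ℚ) : ℝ) - Real.log (x / n) - Real.eulerMascheroniConstant)| ≤ 2 := by
    calc _ ≤ ∑ n ∈ Finset.Ioc 0 ⌊x⌋₊, (2 / x : ℝ) := by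
          refine (Finset.abs_sum_le_sum_abs _ _).trans (Finset.sum_le_sum fun n hn => ?_)
          rw [Finset.mem_Ioc] at hn
          have hn0 : (0 : ℝ) < n := by exact_mod_cast hn.1
          have hnx : (n : ℝ) ≤ x := by
            have := Nat.floor_le (a := x) (by linarith)
            have h2 : (n : ℝ) ≤ ⌊x⌋₊ := by exact_mod_cast hn.2
            linarith
          have h2 := mz_harm_err (x / n) (by rwa [one_le_div hn0])
          rw [Nat.floor_div_natCast] at h2
          rw [abs_mul, abs_div, Nat.abs_cast]
          calc _ ≤ (1 / n) * (2 / (x / n)) := by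
                apply mul_le_mul _ h2 (abs_nonneg _) (by positivity)
                gcongr; exact mz_moeb_le n
            _ = 2 / x := by field_simp
      _ = ⌊x⌋₊ * (2 / x) := by simp
      _ ≤ x * (2 / x) := by gcongr; exact Nat.floor_le (by linarith)
      _ = 2 := by field_simp
  have g1 := Real.one_half_lt_eulerMascheroniConstant
  have g2 := Real.eulerMascheroniConstant_lt_two_thirds
  rw [e]
  set S := ∑ n ∈ Finset.Ioc 0 ⌊x⌋₊, ((ArithmeticFunction.moebius n : ℤ) : ℝ) / n
  rw [abs_le] at hb hm ⊢
  constructor <;> nlinarith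

def mz_Psi (q : ℕ) : ℝ := ∏ p ∈ q.primeFactors, (1 - 1 / (p : ℝ))⁻¹

lemma mz_R_lt_one (q : ℕ) (x : ℝ) (hx : x < 1) : mz_R q x = 0 := by
  have : ⌊x⌋₊ = 0 := by rwa [Nat.floor_eq_zero]
  simp [mz_R, this]

lemma mz_R_rec (p q : ℕ) (hp : p.Prime) (hpq : ¬ p ∣ q) (x : ℝ) :
    mz_R (p * q) x = mz_R q x + 1 / p * mz_R (p * q) (x / p) := by
  have hp0 : (0 : ℝ) < p := by exact_mod_cast hp.pos
  have hsplit : mz_R q x = mz_R (p * q) x +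
      ∑ n ∈ Finset.Ioc 0 ⌊x⌋₊ with Nat.Coprime n q ∧ p ∣ n,
        ((ArithmeticFunction.moebius n : ℤ) : ℝ) / n * Real.log (x / n) := by
    rw [mz_R, ← Finset.sum_filter_add_sum_filter_not _ (fun n => ¬ p ∣ n), Finset.filter_filter, Finset.filter_filter, mz_R]
    congr 1
    · apply Finset.sum_congr _ (fun _ _ => rfl)
      ext n
      simp only [Finset.mem_filter, Nat.coprime_mul_iff_right]
      rw [show Nat.Coprime n p ↔ ¬ p ∣ n from by rw [Nat.coprime_comm, hp.coprime_iff_not_dvd]]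
      tauto
    · simp
  have h2 : ∑ n ∈ Finset.Ioc 0 ⌊x⌋₊ with Nat.Coprime n q ∧ p ∣ n,
        ((ArithmeticFunction.moebius n : ℤ) : ℝ) / n * Real.log (x / n) = - (1 / p * mz_R (p * q) (x / p)) := by
    have e1 : ∑ n ∈ Finset.Ioc 0 ⌊x⌋₊ with Nat.Coprime n q ∧ p ∣ n,
        ((ArithmeticFunction.moebius n : ℤ) : ℝ) / n * Real.log (x / n) =
        ∑ i ∈ Finset.Ioc 0 ⌊x / p⌋₊ with Nat.Coprime i q,
          ((ArithmeticFunction.moebius (p * i) : ℤ) : ℝ) / (p * i : ℕ) * Real.log (x / (p * i : ℕ)) := by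
      symm
      apply Finset.sum_bij (fun i _ => p * i)
      · intro i hi
        simp only [Finset.mem_filter, Finset.mem_Ioc, Nat.floor_div_natCast] at hi ⊢
        refine ⟨⟨Nat.mul_pos hp.pos hi.1.1, ?_⟩, ?_, Dvd.intro _ rfl⟩
        · have := (Nat.le_div_iff_mul_le hp.pos).1 hi.1.2
          rwa [mul_comm]
        · rw [Nat.coprime_mul_iff_left]
          exact ⟨hp.coprime_iff_not_dvd.2 hpq, hi.2⟩
      · intro a _ b _ h; exact Nat.eq_of_mul_eq_mul_left hp.pos h
      · intro n hn
        simp only [Finset.mem_filter, Finset.mem_Ioc] at hn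
        obtain ⟨i, rfl⟩ := hn.2.2
        refine ⟨i, ?_, rfl⟩
        simp only [Finset.mem_filter, Finset.mem_Ioc, Nat.floor_div_natCast]
        rw [Nat.coprime_mul_iff_left] at hn
        refine ⟨⟨Nat.pos_of_mul_pos_left hn.1.1, ?_⟩, hn.2.1.2⟩
        rw [Nat.le_div_iff_mul_le hp.pos, mul_comm]; exact hn.1.2
      · intro i _; rfl
    rw [e1, mz_R, Finset.mul_sum, ← Finset.sum_neg_distrib, Finset.sum_filter, Finset.sum_filter]
    refine Finset.sum_congr rfl fun i hi => ?_
    simp only [Nat.coprime_mul_iff_right]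
    by_cases h1 : Nat.Coprime i q
    · by_cases h3 : Nat.Coprime i p
      · rw [if_pos h1, if_pos ⟨h3, h1⟩,
          ArithmeticFunction.isMultiplicative_moebius.map_mul_of_coprime h3.symm,
          ArithmeticFunction.moebius_apply_prime hp]
        push_cast
        rw [div_div x]
        field_simp
      · rw [if_pos h1, if_neg (by tauto)]
        have h4 : p ∣ i := by
          rw [Nat.coprime_comm, hp.coprime_iff_not_dvd] at h3; exact not_not.1 h3
        have h5 : ArithmeticFunction.moebius (p * i) = 0 := by
          apply ArithmeticFunction.moebius_eq_zero_of_not_squarefree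
          intro hs
          obtain ⟨j, rfl⟩ := h4
          have := hs p ⟨j, by ring⟩
          exact hp.one_lt.ne' (Nat.isUnit_iff.1 this)
        rw [h5]; simp
    · simp [h1]
  rw [hsplit, h2]; ring

lemma mz_Psi_pos_aux (p : ℕ) (hp : p.Prime) : (0 : ℝ) < 1 - 1 / p := by
  have : (2 : ℝ) ≤ p := by exact_mod_cast hp.two_le
  rw [sub_pos, div_lt_one (by linarith)]; linarith

lemma mz_one_le_Psi (q : ℕ) : 1 ≤ mz_Psi q := by
  unfold mz_Psi
  refine Finset.prod_induction _ (fun z : ℝ => 1 ≤ z) (fun a b ha hb => one_le_mul_of_one_le_of_one_le ha hb) le_rfl ?_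
  intro p hp
  have h := mz_Psi_pos_aux p (Nat.prime_of_mem_primeFactors hp)
  rw [one_le_inv₀ h]
  have : (0 : ℝ) ≤ 1 / p := by positivity
  linarith

lemma mz_R_bound (q : ℕ) (hq : q ≠ 0) (x : ℝ) : |mz_R q x| ≤ 5 * mz_Psi q := by
  induction q using induction_on_primes generalizing x with
  | zero => exact absurd rfl hq
  | one =>
    rcases le_or_gt 1 x with h | h
    · simpa [mz_Psi] using mz_R1 x h
    · rw [mz_R_lt_one _ _ h]; simp [mz_Psi]
  | prime_mul p a hp ih =>
    have ha : a ≠ 0 := by rintro rfl; simp at hq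
    by_cases hpa : p ∣ a
    · have h1 : mz_R (p * a) x = mz_R a x := by
        unfold mz_R
        apply Finset.sum_congr _ (fun _ _ => rfl)
        ext n
        simp only [Finset.mem_filter, Nat.coprime_mul_iff_right]
        constructor
        · tauto
        · rintro ⟨h1, h2⟩; exact ⟨h1, Nat.Coprime.coprime_dvd_right hpa h2, h2⟩
      have h2 : mz_Psi (p * a) = mz_Psi a := by
        unfold mz_Psi
        rw [Nat.primeFactors_mul hp.ne_zero ha, hp.primeFactors]
        congr 1
        rw [Finset.union_eq_right]
        simp [hp, hpa, ha]
      rw [h1, h2]; exact ih ha x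
    · have hP := mz_Psi_pos_aux p hp
      have h2 : mz_Psi (p * a) = (1 - 1 / (p : ℝ))⁻¹ * mz_Psi a := by
        unfold mz_Psi
        rw [Nat.primeFactors_mul hp.ne_zero ha, hp.primeFactors, Finset.prod_union]
        · simp
        · simp [hpa]
      have key : ∀ n : ℕ, ∀ x : ℝ, ⌊x⌋₊ ≤ n → |mz_R (p * a) x| ≤ 5 * mz_Psi (p * a) := by
        intro n
        induction n with
        | zero =>
          intro x hx
          rw [mz_R_lt_one _ _ (by rw [← Nat.floor_eq_zero]; omega)]
          have := mz_one_le_Psi (p * a)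
          simp; linarith
        | succ n ihn =>
          intro x hx
          rcases lt_or_ge x 1 with h | h
          · rw [mz_R_lt_one _ _ h]
            have := mz_one_le_Psi (p * a)
            simp; linarith
          have h3 : ⌊x / p⌋₊ ≤ n := by
            rw [Nat.floor_div_natCast]
            have h5 : 0 < ⌊x⌋₊ := by rwa [Nat.floor_pos]
            have := Nat.div_lt_self h5 hp.one_lt
            omega
          have h4 := ihn _ h3
          rw [mz_R_rec p a hp hpa]
          have h5 := ih ha x
          calc _ ≤ |mz_R a x| + |1 / p * mz_R (p * a) (x / p)| := abs_add_le _ _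
            _ ≤ 5 * mz_Psi a + 1 / p * (5 * mz_Psi (p * a)) := by
                rw [abs_mul, abs_of_nonneg (a := (1 / (p : ℝ))) (by positivity)]
                gcongr
            _ = 5 * mz_Psi (p * a) := by
                have : mz_Psi a = (1 - 1 / (p : ℝ)) * mz_Psi (p * a) := by
                  rw [h2]; field_simp
                rw [this]; ring
      exact key _ x le_rfl

lemma mz_taylor (g g1 g2 : ℝ → ℂ) (h1 : ∀ x, HasDerivAt g (g1 x) x) (h2 : ∀ x, HasDerivAt g1 (g2 x) x)
    (hg2 : Continuous g2) (g0 : g 0 = 0) (t : ℝ) (ht : 0 ≤ t) (ht1 : t ≤ 1) :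
    g t = g1 0 * t + ∫ s in (0:ℝ)..1, ((max (t - s) 0 : ℝ) : ℂ) * g2 s := by
  have hc : Continuous fun s : ℝ => ((max (t - s) 0 : ℝ) : ℂ) * g2 s := by fun_prop
  rw [← intervalIntegral.integral_add_adjacent_intervals (b := t) (hc.intervalIntegrable _ _) (hc.intervalIntegrable _ _)]
  have e2 : ∫ s in t..1, ((max (t - s) 0 : ℝ) : ℂ) * g2 s = 0 := by
    rw [intervalIntegral.integral_congr (g := fun _ => (0:ℂ))]
    · simp
    · intro s hs
      rw [Set.uIcc_of_le ht1] at hs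
      simp only
      rw [max_eq_right (by linarith [hs.1])]; simp
  have e1 : ∫ s in (0:ℝ)..t, ((max (t - s) 0 : ℝ) : ℂ) * g2 s = ∫ s in (0:ℝ)..t, ((t - s : ℝ) : ℂ) * g2 s := by
    apply intervalIntegral.integral_congr
    intro s hs
    rw [Set.uIcc_of_le ht] at hs
    simp only
    rw [max_eq_left (by linarith [hs.2])]
  have e3 : ∫ s in (0:ℝ)..t, ((t - s : ℝ) : ℂ) * g2 s = (((t - t : ℝ) : ℂ) * g1 t + g t) - (((t - 0 : ℝ) : ℂ) * g1 0 + g 0) := by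
    apply intervalIntegral.integral_eq_sub_of_hasDerivAt (f := fun s => ((t - s : ℝ) : ℂ) * g1 s + g s)
    · intro s _
      have hd : HasDerivAt (fun s : ℝ => ((t - s : ℝ) : ℂ)) (-1) s := by
        have := ((hasDerivAt_id s).const_sub t).ofReal_comp
        simpa using this
      refine ((hd.mul (h2 s)).add (h1 s)).congr_deriv ?_
      ring
    · apply Continuous.intervalIntegrable; fun_prop
  rw [e1, e2, e3, g0]; simp; ring

lemma mz_R_shift (q : ℕ) (X Y s : ℝ) (hY : 0 < Y) (hX : 0 < X) (hs : 0 ≤ s) :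
    ∑ j ∈ Finset.Ioc 0 ⌊X⌋₊ with Nat.Coprime j q,
      ((ArithmeticFunction.moebius j : ℤ) : ℝ) / j * max (Real.log (X / j) / Y - s) 0
      = 1 / Y * mz_R q (X * Real.exp (-(s * Y))) := by
  rw [mz_R, Finset.mul_sum]
  symm
  have hle : X * Real.exp (-(s * Y)) ≤ X := by
    apply mul_le_of_le_one_right hX.le
    rw [Real.exp_le_one_iff]; have := mul_nonneg hs hY.le; linarith
  have hlog : ∀ j : ℕ, 0 < j → Real.log (X * Real.exp (-(s * Y)) / j) = Real.log (X / j) - s * Y := by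
    intro j hj
    have hj' : (0 : ℝ) < j := by exact_mod_cast hj
    rw [mul_div_right_comm, Real.log_mul (by positivity) (Real.exp_ne_zero _), Real.log_exp]; ring
  have hsub : Finset.filter (fun j => Nat.Coprime j q) (Finset.Ioc 0 ⌊X * Real.exp (-(s * Y))⌋₊) ⊆
      Finset.filter (fun j => Nat.Coprime j q) (Finset.Ioc 0 ⌊X⌋₊) := by
    apply Finset.filter_subset_filter
    apply Finset.Ioc_subset_Ioc_right
    exact Nat.floor_le_floor hle
  rw [← Finset.sum_subset hsub (f := fun j : ℕ => ((ArithmeticFunction.moebius j : ℤ) : ℝ) / j * max (Real.log (X / j) / Y - s) 0)]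
  · refine Finset.sum_congr rfl fun j hj => ?_
    simp only [Finset.mem_filter, Finset.mem_Ioc] at hj
    have hj' : (0 : ℝ) < j := by exact_mod_cast hj.1.1
    have h1 : (j : ℝ) ≤ X * Real.exp (-(s * Y)) := (Nat.le_floor_iff (by positivity)).1 hj.1.2
    have h2 : 0 ≤ Real.log (X * Real.exp (-(s * Y)) / j) := Real.log_nonneg (by rwa [one_le_div hj'])
    rw [hlog j hj.1.1] at h2 ⊢
    rw [max_eq_left]
    · field_simp
    · rw [sub_nonneg, le_div_iff₀ hY]; linarith
  · intro j hj hj2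
    simp only [Finset.mem_filter, Finset.mem_Ioc] at hj hj2
    have hj' : (0 : ℝ) < j := by exact_mod_cast hj.1.1
    have h1 : X * Real.exp (-(s * Y)) < j := by
      by_contra hcon
      exact hj2 ⟨⟨hj.1.1, (Nat.le_floor_iff (by positivity)).2 (not_lt.1 hcon)⟩, hj.2⟩
    have h2 : Real.log (X * Real.exp (-(s * Y)) / j) ≤ 0 := Real.log_nonpos (by positivity) (by rw [div_le_one hj']; exact h1.le)
    rw [hlog j hj.1.1] at h2
    rw [max_eq_right]
    · simp
    · rw [sub_nonpos, div_le_iff₀ hY]; linarith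

structure mz_C2 (g g1 g2 : ℝ → ℂ) (A : ℝ) : Prop where
  h1 : ∀ x, HasDerivAt g (g1 x) x
  h2 : ∀ x, HasDerivAt g1 (g2 x) x
  c2 : Continuous g2
  g0 : g 0 = 0
  b1 : ‖g1 0‖ ≤ A
  b2 : ∀ v ∈ Set.Icc (0:ℝ) 1, ‖g2 v‖ ≤ A

lemma mz_A3 {g g1 g2 : ℝ → ℂ} {A : ℝ} (hg : mz_C2 g g1 g2 A) (Y X : ℝ) (hY : 0 < Y) (hX : 1 ≤ X)
    (hXY : Real.log X ≤ Y) (q : ℕ) (hq : q ≠ 0) :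
    ‖∑ j ∈ Finset.Ioc 0 ⌊X⌋₊ with Nat.Coprime j q,
      ((ArithmeticFunction.moebius j : ℤ) : ℂ) / j * g (Real.log (X / j) / Y)‖ ≤ 10 * A * mz_Psi q / Y := by
  have hA : 0 ≤ A := (norm_nonneg _).trans hg.b1
  have hPsi := mz_one_le_Psi q
  have e : ∑ j ∈ Finset.Ioc 0 ⌊X⌋₊ with Nat.Coprime j q,
      ((ArithmeticFunction.moebius j : ℤ) : ℂ) / j * g (Real.log (X / j) / Y) =
      g1 0 * ((1 / Y * mz_R q X : ℝ) : ℂ) +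
      ∫ s in (0:ℝ)..1, ((1 / Y * mz_R q (X * Real.exp (-(s * Y))) : ℝ) : ℂ) * g2 s := by
    have e1 : ∀ j ∈ Finset.filter (fun j => Nat.Coprime j q) (Finset.Ioc 0 ⌊X⌋₊),
        ((ArithmeticFunction.moebius j : ℤ) : ℂ) / j * g (Real.log (X / j) / Y) =
        g1 0 * ((((ArithmeticFunction.moebius j : ℤ) : ℝ) / j * max (Real.log (X / j) / Y - 0) 0 : ℝ) : ℂ)
        + ∫ s in (0:ℝ)..1, ((((ArithmeticFunction.moebius j : ℤ) : ℝ) / j * max (Real.log (X / j) / Y - s) 0 : ℝ) : ℂ) * g2 s := by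
      intro j hj
      simp only [Finset.mem_filter, Finset.mem_Ioc] at hj
      have hj' : (1 : ℝ) ≤ j := by exact_mod_cast hj.1.1
      have h1 : (j : ℝ) ≤ X := (Nat.le_floor_iff (by linarith)).1 hj.1.2
      have h2 : 0 ≤ Real.log (X / j) / Y := div_nonneg (Real.log_nonneg (by rw [one_le_div]; exact h1; linarith)) hY.le
      have h3 : Real.log (X / j) / Y ≤ 1 := by
        rw [div_le_one hY]
        refine le_trans (Real.log_le_log (by positivity) ?_) hXY
        exact div_le_self (by linarith) hj'
      rw [mz_taylor g g1 g2 hg.h1 hg.h2 hg.c2 hg.g0 _ h2 h3, mul_add, ← intervalIntegral.integral_const_mul, sub_zero,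
        max_eq_left h2]
      congr 1
      · push_cast; ring
      · apply intervalIntegral.integral_congr
        intro s _
        simp only
        push_cast; ring
    rw [Finset.sum_congr rfl e1, Finset.sum_add_distrib]
    congr 1
    · rw [← Finset.mul_sum, ← Complex.ofReal_sum, mz_R_shift q X Y 0 hY (by linarith) le_rfl]
      simp
    · rw [← intervalIntegral.integral_finsetSum]
      · apply intervalIntegral.integral_congr
        intro s hs
        rw [Set.uIcc_of_le zero_le_one] at hs
        simp only
        rw [← Finset.sum_mul, ← Complex.ofReal_sum, mz_R_shift q X Y s hY (by linarith) hs.1]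
      · intro j _
        apply Continuous.intervalIntegrable
        have := hg.c2
        fun_prop
  rw [e]
  refine (norm_add_le _ _).trans ?_
  have hb : ∀ x, ‖((1 / Y * mz_R q x : ℝ) : ℂ)‖ ≤ 5 * mz_Psi q / Y := by
    intro x
    rw [Complex.norm_real, norm_mul, Real.norm_eq_abs, Real.norm_eq_abs, abs_of_pos (by positivity), one_div, inv_mul_eq_div]
    gcongr
    exact mz_R_bound q hq x
  have t1 : ‖g1 0 * ((1 / Y * mz_R q X : ℝ) : ℂ)‖ ≤ A * (5 * mz_Psi q / Y) := by
    rw [norm_mul]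
    exact mul_le_mul hg.b1 (hb X) (norm_nonneg _) hA
  have t2 : ‖∫ s in (0:ℝ)..1, ((1 / Y * mz_R q (X * Real.exp (-(s * Y))) : ℝ) : ℂ) * g2 s‖ ≤ (5 * mz_Psi q / Y) * A := by
    refine (intervalIntegral.norm_integral_le_of_norm_le_const (C := (5 * mz_Psi q / Y) * A) ?_).trans (by simp)
    intro s hs
    rw [Set.uIoc_of_le zero_le_one] at hs
    rw [norm_mul]
    exact mul_le_mul (hb _) (hg.b2 s ⟨hs.1.le, hs.2⟩) (norm_nonneg _) (by positivity)
  calc _ ≤ A * (5 * mz_Psi q / Y) + (5 * mz_Psi q / Y) * A := add_le_add t1 t2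
    _ = _ := by ring

def mz_invsqrt : ArithmeticFunction ℝ := ⟨fun n => (Real.sqrt n)⁻¹, by simp⟩
lemma mz_invsqrt_mult : mz_invsqrt.IsMultiplicative := by
  refine ⟨by show (Real.sqrt (1:ℕ))⁻¹ = 1; simp, fun {m n} _ => ?_⟩
  show (Real.sqrt (m * n : ℕ))⁻¹ = (Real.sqrt m)⁻¹ * (Real.sqrt n)⁻¹
  push_cast
  rw [Real.sqrt_mul (by positivity), mul_inv]
def mz_inv : ArithmeticFunction ℝ := ⟨fun n => ((n : ℝ))⁻¹, by simp⟩
lemma mz_inv_mult : mz_inv.IsMultiplicative := by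
  refine ⟨by show ((1:ℕ) : ℝ)⁻¹ = 1; simp, fun {m n} _ => ?_⟩
  show ((m * n : ℕ) : ℝ)⁻¹ = (m : ℝ)⁻¹ * (n : ℝ)⁻¹
  push_cast
  rw [mul_inv]

lemma mz_prime_ineq (p : ℕ) (hp : p.Prime) :
    ((1 - 1 / (p : ℝ))⁻¹) ^ 3 ≤ (if p < 16 then 8 else 1) * (1 + (Real.sqrt p)⁻¹) := by
  have h2 : (2 : ℝ) ≤ p := by exact_mod_cast hp.two_le
  have hpos := mz_Psi_pos_aux p hp
  split_ifs with h
  · have h3 : (1 - 1 / (p : ℝ))⁻¹ ≤ 2 := by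
      rw [inv_le_comm₀ hpos (by norm_num)]
      have : 1 / (p : ℝ) ≤ 1 / 2 := by gcongr
      linarith
    calc ((1 - 1 / (p : ℝ))⁻¹) ^ 3 ≤ 2 ^ 3 := by gcongr
      _ ≤ 8 * (1 + (Real.sqrt p)⁻¹) := by
        have : 0 ≤ (Real.sqrt p)⁻¹ := by positivity
        linarith
  · set x := (Real.sqrt p)⁻¹ with hx
    have hx0 : 0 ≤ x := by positivity
    have hx2 : 1 / (p : ℝ) = x ^ 2 := by rw [hx, inv_pow, Real.sq_sqrt (by linarith)]; simp
    have hx4 : x ≤ 1 / 4 := by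
      rw [hx, one_div]
      gcongr
      rw [show (4 : ℝ) = Real.sqrt 16 by rw [show (16 : ℝ) = 4 ^ 2 by norm_num]; simp]
      apply Real.sqrt_le_sqrt
      push Not at h
      exact_mod_cast h
    rw [hx2] at hpos ⊢
    rw [inv_pow, inv_le_iff_one_le_mul₀ (by positivity)]
    have : (1 - 3 * x ^ 2) ≤ (1 - x ^ 2) ^ 3 := by nlinarith [sq_nonneg x, pow_nonneg hx0 4]
    have h5 : 1 ≤ (1 + x) * (1 - 3 * x ^ 2) := by nlinarith
    nlinarith

lemma mz_Psi3 (q : ℕ) (hq : Squarefree q) :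
    mz_Psi q ^ 3 ≤ 8 ^ 16 * ∑ d ∈ q.divisors, (Real.sqrt d)⁻¹ := by
  have h1 := mz_invsqrt_mult.prodPrimeFactors_one_add_of_squarefree hq
  have h1' : ∏ p ∈ q.primeFactors, (1 + (Real.sqrt p)⁻¹) = ∑ d ∈ q.divisors, (Real.sqrt d)⁻¹ := h1
  rw [← h1', mz_Psi, ← Finset.prod_pow]
  calc ∏ p ∈ q.primeFactors, ((1 - 1 / (p : ℝ))⁻¹) ^ 3
      ≤ ∏ p ∈ q.primeFactors, ((if p < 16 then 8 else 1) * (1 + (Real.sqrt p)⁻¹)) := by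
        apply Finset.prod_le_prod
        · intro p hp
          have := mz_Psi_pos_aux p (Nat.prime_of_mem_primeFactors hp)
          positivity
        · intro p hp
          exact mz_prime_ineq p (Nat.prime_of_mem_primeFactors hp)
    _ = (∏ p ∈ q.primeFactors, (if p < 16 then (8:ℝ) else 1)) * ∏ p ∈ q.primeFactors, (1 + (Real.sqrt p)⁻¹) := Finset.prod_mul_distrib
    _ ≤ 8 ^ 16 * _ := by
        gcongr
        rw [Finset.prod_ite]
        simp only [Finset.prod_const, one_pow, mul_one]
        apply pow_le_pow_right₀ (by norm_num)
        calc _ ≤ (Finset.range 16).card := by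
              apply Finset.card_le_card
              intro p; simp
          _ = 16 := by simp

lemma mz_sigma (q : ℕ) (hq : Squarefree q) :
    ∑ d ∈ q.divisors, (d : ℝ) ≤ q * mz_Psi q := by
  have h1 := mz_inv_mult.prodPrimeFactors_one_add_of_squarefree hq
  have h1' : ∏ p ∈ q.primeFactors, (1 + (p : ℝ)⁻¹) = ∑ d ∈ q.divisors, (d : ℝ)⁻¹ := h1
  have hq0 : q ≠ 0 := hq.ne_zero
  have h2 : ∑ d ∈ q.divisors, (d : ℝ) = q * ∑ d ∈ q.divisors, (d : ℝ)⁻¹ := by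
    rw [← Nat.sum_div_divisors, Finset.mul_sum]
    refine Finset.sum_congr rfl fun d hd => ?_
    rw [Nat.cast_div (Nat.dvd_of_mem_divisors hd)]
    · rfl
    · have := Nat.pos_of_mem_divisors hd
      positivity
  rw [h2, ← h1']
  gcongr
  apply Finset.prod_le_prod
  · intro p _; positivity
  · intro p hp
    have hpos := mz_Psi_pos_aux p (Nat.prime_of_mem_primeFactors hp)
    rw [← one_div (a := (p : ℝ)), le_inv_comm₀ (by positivity) hpos, inv_eq_one_div, le_div_iff₀ (by positivity)]
    have : (0:ℝ) ≤ 1 / p := by positivity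
    nlinarith

lemma mz_sum_invsqrt : Summable (fun d : ℕ => (d : ℝ)⁻¹ * (Real.sqrt d)⁻¹) := by
  have := Real.summable_nat_rpow_inv.2 (show (1:ℝ) < 3 / 2 by norm_num)
  refine this.congr fun d => ?_
  rcases Nat.eq_zero_or_pos d with rfl | hd
  · simp
  have hd' : (0:ℝ) < d := by exact_mod_cast hd
  rw [← mul_inv, Real.sqrt_eq_rpow, show (3 / 2 : ℝ) = 1 + 1 / 2 by norm_num, Real.rpow_add hd', Real.rpow_one]

lemma mz_harm_le (N : ℕ) (hN : 1 ≤ N) : ∑ m ∈ Finset.Ioc 0 N, (m : ℝ)⁻¹ ≤ 1 + Real.log N := by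
  have := harmonic_le_one_add_log N
  rw [harmonic_eq_sum_Icc] at this
  push_cast at this
  refine le_trans (le_of_eq ?_) this
  exact Finset.sum_congr (by ext; simp; omega) fun m _ => rfl

def mz_CA : ℝ := 8 ^ 16 * ∑' d : ℕ, (d : ℝ)⁻¹ * (Real.sqrt d)⁻¹
lemma mz_CA_nonneg : 0 ≤ mz_CA := by
  unfold mz_CA
  have : 0 ≤ ∑' d : ℕ, (d : ℝ)⁻¹ * (Real.sqrt d)⁻¹ := tsum_nonneg fun d => by positivity
  positivity

lemma mz_A4 (N : ℕ) (hN : 1 ≤ N) :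
    ∑ q ∈ Finset.Ioc 0 N with Squarefree q, mz_Psi q ^ 3 / q ≤ mz_CA * (1 + Real.log N) := by
  calc ∑ q ∈ Finset.Ioc 0 N with Squarefree q, mz_Psi q ^ 3 / q
      ≤ ∑ q ∈ Finset.Ioc 0 N with Squarefree q, (8 ^ 16 * ∑ d ∈ q.divisors, (Real.sqrt d)⁻¹) / q := by
        refine Finset.sum_le_sum fun q hq => ?_
        gcongr
        exact mz_Psi3 q (Finset.mem_filter.1 hq).2
    _ ≤ ∑ q ∈ Finset.Ioc 0 N, (8 ^ 16 * ∑ d ∈ q.divisors, (Real.sqrt d)⁻¹) / q := by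
        apply Finset.sum_le_sum_of_subset_of_nonneg (Finset.filter_subset _ _)
        intro q _ _
        positivity
    _ = 8 ^ 16 * ∑ q ∈ Finset.Ioc 0 N, ∑ x ∈ q.divisorsAntidiagonal, ((x.1 : ℝ)⁻¹ * (Real.sqrt x.1)⁻¹) * (x.2 : ℝ)⁻¹ := by
        rw [Finset.mul_sum]
        refine Finset.sum_congr rfl fun q hq => ?_
        rw [mul_div_assoc]
        congr 1
        rw [Finset.sum_div, ← Nat.sum_divisorsAntidiagonal (f := fun i _ => (Real.sqrt i)⁻¹ / (q : ℝ))]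
        refine Finset.sum_congr rfl fun x hx => ?_
        rw [← (Nat.mem_divisorsAntidiagonal.1 hx).1]
        push_cast
        rw [div_eq_mul_inv, mul_inv]; ring
    _ ≤ 8 ^ 16 * ∑ d ∈ Finset.Ioc 0 N, ∑ m ∈ Finset.Ioc 0 N, ((d : ℝ)⁻¹ * (Real.sqrt d)⁻¹) * (m : ℝ)⁻¹ := by
        apply mul_le_mul_of_nonneg_left _ (by positivity)
        rw [← Finset.sum_product', Finset.sum_sigma']
        have : ∑ x ∈ (Finset.Ioc 0 N).sigma (fun q => q.divisorsAntidiagonal), ((x.2.1 : ℝ)⁻¹ * (Real.sqrt x.2.1)⁻¹) * (x.2.2 : ℝ)⁻¹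
          = ∑ x ∈ ((Finset.Ioc 0 N).sigma (fun q => q.divisorsAntidiagonal)).image (fun x => x.2), ((x.1 : ℝ)⁻¹ * (Real.sqrt x.1)⁻¹) * (x.2 : ℝ)⁻¹ := by
          rw [Finset.sum_image]
          rintro ⟨a, x⟩ hx ⟨b, z⟩ hz h
          simp only [Finset.coe_sigma, Set.mem_sigma_iff, Finset.mem_coe, Nat.mem_divisorsAntidiagonal] at hx hz h
          subst h
          obtain rfl : a = b := hx.2.1.symm.trans hz.2.1
          rfl
        rw [this]
        apply Finset.sum_le_sum_of_subset_of_nonneg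
        · intro x hx
          simp only [Finset.mem_image, Finset.mem_sigma, Nat.mem_divisorsAntidiagonal, Finset.mem_Ioc, Finset.mem_product] at hx ⊢
          obtain ⟨⟨a, z⟩, h, rfl⟩ := hx
          simp only at h
          have hp : 0 < z.1 * z.2 := by omega
          have h1 := Nat.pos_of_mul_pos_right hp
          have h2 := Nat.pos_of_mul_pos_left hp
          have h3 := Nat.le_mul_of_pos_right z.1 h2
          have h4 := Nat.le_mul_of_pos_left z.2 h1
          simp only
          omega
        · intro _ _ _; positivity
    _ = 8 ^ 16 * ((∑ d ∈ Finset.Ioc 0 N, (d : ℝ)⁻¹ * (Real.sqrt d)⁻¹) * (∑ m ∈ Finset.Ioc 0 N, (m : ℝ)⁻¹)) := by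
        rw [Finset.sum_mul_sum]
    _ ≤ 8 ^ 16 * ((∑' d : ℕ, (d : ℝ)⁻¹ * (Real.sqrt d)⁻¹) * (1 + Real.log N)) := by
        have t := mz_harm_le N hN
        have t2 := mz_sum_invsqrt.sum_le_tsum (Finset.Ioc 0 N) (fun d _ => by positivity)
        gcongr
    _ = _ := by rw [mz_CA]; ring

def mz_b (g : ℝ → ℂ) (y : ℝ) (k : ℕ) : ℂ :=
  ((ArithmeticFunction.moebius k : ℤ) : ℂ) * g (Real.log (y / k) / Real.log y)

def mz_beta (g : ℝ → ℂ) (y : ℝ) (q : ℕ) : ℂ :=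
  ∑ k ∈ Finset.Ioc 0 ⌊y⌋₊ with q ∣ k, mz_b g y k / k

lemma mz_beta_nsq (g : ℝ → ℂ) (y : ℝ) (q : ℕ) (hq : ¬ Squarefree q) : mz_beta g y q = 0 := by
  apply Finset.sum_eq_zero
  intro k hk
  rw [mz_b, ArithmeticFunction.moebius_eq_zero_of_not_squarefree]
  · simp
  · intro h; exact hq (h.squarefree_of_dvd (Finset.mem_filter.1 hk).2)

lemma mz_beta_bound {g g1 g2 : ℝ → ℂ} {A : ℝ} (hg : mz_C2 g g1 g2 A) (y : ℝ) (hy : 1 < y) (q : ℕ) (hq : 0 < q) :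
    ‖mz_beta g y q‖ ≤ 10 * A * mz_Psi q / (q * Real.log y) := by
  have hY : 0 < Real.log y := Real.log_pos hy
  have hA : 0 ≤ A := (norm_nonneg _).trans hg.b1
  have hPsi := mz_one_le_Psi q
  have hq' : (1 : ℝ) ≤ q := by exact_mod_cast hq
  rcases lt_or_ge y q with hlt | hle
  · have : mz_beta g y q = 0 := by
      apply Finset.sum_eq_zero
      intro k hk
      simp only [Finset.mem_filter, Finset.mem_Ioc] at hk
      have h1 := Nat.le_of_dvd hk.1.1 hk.2
      have h2 : (k : ℝ) ≤ y := (Nat.le_floor_iff (by linarith)).1 hk.1.2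
      have h3 : (q : ℝ) ≤ k := by exact_mod_cast h1
      linarith
    rw [this, norm_zero]; positivity
  have e : mz_beta g y q = ((ArithmeticFunction.moebius q : ℤ) : ℂ) / q * ∑ j ∈ Finset.Ioc 0 ⌊y / q⌋₊ with Nat.Coprime j q,
      ((ArithmeticFunction.moebius j : ℤ) : ℂ) / j * g (Real.log (y / q / j) / Real.log y) := by
    have e1 : mz_beta g y q = ∑ j ∈ Finset.Ioc 0 ⌊y / q⌋₊, mz_b g y (q * j) / (q * j : ℕ) := by
      symm
      apply Finset.sum_bij (fun i _ => q * i)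
      · intro i hi
        simp only [Finset.mem_filter, Finset.mem_Ioc, Nat.floor_div_natCast] at hi ⊢
        refine ⟨⟨Nat.mul_pos hq hi.1, ?_⟩, Dvd.intro _ rfl⟩
        have := (Nat.le_div_iff_mul_le hq).1 hi.2
        rwa [mul_comm]
      · intro a _ b _ h; exact Nat.eq_of_mul_eq_mul_left hq h
      · intro n hn
        simp only [Finset.mem_filter, Finset.mem_Ioc] at hn
        obtain ⟨i, rfl⟩ := hn.2
        refine ⟨i, ?_, rfl⟩
        simp only [Finset.mem_Ioc, Nat.floor_div_natCast]
        refine ⟨Nat.pos_of_mul_pos_left hn.1.1, ?_⟩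
        rw [Nat.le_div_iff_mul_le hq, mul_comm]; exact hn.1.2
      · intro i _; rfl
    rw [e1, Finset.mul_sum, Finset.sum_filter]
    refine Finset.sum_congr rfl fun j hj => ?_
    split_ifs with h
    · rw [mz_b, ArithmeticFunction.isMultiplicative_moebius.map_mul_of_coprime h.symm]
      push_cast
      rw [div_div y]
      have : (q : ℂ) ≠ 0 := by exact_mod_cast hq.ne'
      have : (j : ℂ) ≠ 0 := by have := (Finset.mem_Ioc.1 hj).1; exact_mod_cast this.ne'
      field_simp
    · rw [mz_b, ArithmeticFunction.moebius_eq_zero_of_not_squarefree]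
      · simp
      · rw [Nat.squarefree_mul_iff]
        rintro ⟨h1, _⟩; exact h h1.symm
  have h1 : 1 ≤ y / q := by rwa [one_le_div (by linarith)]
  have h2 : Real.log (y / q) ≤ Real.log y := Real.log_le_log (by linarith) (div_le_self (by linarith) hq')
  have h3 := mz_A3 hg (Real.log y) (y / q) hY h1 h2 q hq.ne'
  rw [e, norm_mul]
  calc _ ≤ (1 / q : ℝ) * (10 * A * mz_Psi q / Real.log y) := by
        apply mul_le_mul _ h3 (norm_nonneg _) (by positivity)
        rw [norm_div, Complex.norm_natCast, Complex.norm_intCast]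
        gcongr
        exact mz_moeb_le q
    _ = _ := by field_simp

lemma mz_K {g g1 g2 : ℝ → ℂ} {A : ℝ} (hg : mz_C2 g g1 g2 A) (y : ℝ) (hy : Real.exp 1 ≤ y)
    (E : ℕ → ℝ) (B : ℝ) (hB : 0 ≤ B) (hE : ∀ d ∈ Finset.Ioc 0 ⌊y⌋₊, |E d| ≤ B * d) :
    ‖∑ h ∈ Finset.Ioc 0 ⌊y⌋₊, ∑ k ∈ Finset.Ioc 0 ⌊y⌋₊,
      mz_b g y h * (starRingEnd ℂ) (mz_b g y k) * ((E (Nat.gcd h k) / (h * k) : ℝ) : ℂ)‖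
      ≤ 200 * mz_CA * A ^ 2 * B / Real.log y := by
  have hy1 : 1 < y := lt_of_lt_of_le (by simp) hy
  have hY : 1 ≤ Real.log y := by rw [Real.le_log_iff_exp_le (by linarith)]; exact hy
  have hA : 0 ≤ A := (norm_nonneg _).trans hg.b1
  set N := ⌊y⌋₊ with hN
  have hN1 : 1 ≤ N := by rw [hN, Nat.one_le_floor_iff]; exact hy1.le
  set e : ℕ → ℝ := fun q => ∑ x ∈ q.divisorsAntidiagonal, ((ArithmeticFunction.moebius x.1 : ℤ) : ℝ) * E x.2 with he
  have hinv : ∀ n > 0, ∑ i ∈ n.divisors, e i = E n := by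
    rw [ArithmeticFunction.sum_eq_iff_sum_mul_moebius_eq]
    intro n hn; rfl
  have hmain : ∑ h ∈ Finset.Ioc 0 N, ∑ k ∈ Finset.Ioc 0 N,
      mz_b g y h * (starRingEnd ℂ) (mz_b g y k) * ((E (Nat.gcd h k) / (h * k) : ℝ) : ℂ) =
      ∑ q ∈ Finset.Ioc 0 N, (e q : ℂ) * (mz_beta g y q * (starRingEnd ℂ) (mz_beta g y q)) := by
    have h1 : ∀ h ∈ Finset.Ioc 0 N, ∀ k ∈ Finset.Ioc 0 N,
        mz_b g y h * (starRingEnd ℂ) (mz_b g y k) * ((E (Nat.gcd h k) / (h * k) : ℝ) : ℂ) =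
        ∑ q ∈ Finset.Ioc 0 N, (e q : ℂ) * ((if q ∣ h then mz_b g y h / h else 0) * (if q ∣ k then (starRingEnd ℂ) (mz_b g y k / k) else 0)) := by
      intro h hh k hk
      rw [Finset.mem_Ioc] at hh hk
      have hg0 : 0 < Nat.gcd h k := Nat.gcd_pos_of_pos_left _ hh.1
      rw [← hinv _ hg0]
      have h2 : (Nat.gcd h k).divisors = (Finset.Ioc 0 N).filter (fun q => q ∣ h ∧ q ∣ k) := by
        ext q
        simp only [Nat.mem_divisors, Finset.mem_filter, Finset.mem_Ioc, Nat.dvd_gcd_iff]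
        constructor
        · rintro ⟨h3, _⟩
          exact ⟨⟨Nat.pos_of_dvd_of_pos h3.1 hh.1, (Nat.le_of_dvd hh.1 h3.1).trans hh.2⟩, h3⟩
        · rintro ⟨_, h3⟩; exact ⟨h3, hg0.ne'⟩
      rw [h2, Finset.sum_filter]
      push_cast
      rw [Finset.sum_div, Finset.mul_sum]
      refine Finset.sum_congr rfl fun q _ => ?_
      by_cases ha : q ∣ h <;> by_cases hb : q ∣ k <;> simp [ha, hb]
      field_simp
    rw [Finset.sum_congr rfl fun h hh => Finset.sum_congr rfl fun k hk => h1 h hh k hk]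
    rw [Finset.sum_congr rfl fun h hh => Finset.sum_comm, Finset.sum_comm]
    refine Finset.sum_congr rfl fun q _ => ?_
    rw [mz_beta, map_sum, Finset.sum_filter, Finset.sum_filter, Finset.sum_mul_sum, Finset.mul_sum]
    refine Finset.sum_congr rfl fun h _ => ?_
    rw [Finset.mul_sum]
  rw [hmain]
  refine (norm_sum_le _ _).trans ?_
  have hb : ∀ q ∈ Finset.Ioc 0 N, ‖(e q : ℂ) * (mz_beta g y q * (starRingEnd ℂ) (mz_beta g y q))‖ ≤
      if Squarefree q then 100 * A ^ 2 * B / Real.log y ^ 2 * (mz_Psi q ^ 3 / q) else 0 := by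
    intro q hq
    split_ifs with hsq
    · rw [Finset.mem_Ioc] at hq
      have hq' : (0 : ℝ) < q := by exact_mod_cast hq.1
      have hPsi := mz_one_le_Psi q
      have h1 : |e q| ≤ B * (q * mz_Psi q) := by
        rw [he]
        calc _ ≤ ∑ x ∈ q.divisorsAntidiagonal, B * (x.2 : ℝ) := by
              refine (Finset.abs_sum_le_sum_abs _ _).trans (Finset.sum_le_sum fun x hx => ?_)
              rw [Nat.mem_divisorsAntidiagonal] at hx
              have hx2 : x.2 ∣ q := Dvd.intro_left _ hx.1
              rw [abs_mul]
              have := hE x.2 (Finset.mem_Ioc.2 ⟨Nat.pos_of_dvd_of_pos hx2 hq.1, (Nat.le_of_dvd hq.1 hx2).trans hq.2⟩)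
              calc _ ≤ 1 * |E x.2| := by gcongr; exact mz_moeb_le _
                _ ≤ _ := by rw [one_mul]; exact this
          _ = B * ∑ d ∈ q.divisors, (d : ℝ) := by
              rw [← Finset.mul_sum, Nat.sum_divisorsAntidiagonal' (f := fun _ i => (i : ℝ))]
          _ ≤ _ := by gcongr; exact mz_sigma q hsq
      have h2 := mz_beta_bound hg y hy1 q hq.1
      rw [norm_mul, norm_mul, RCLike.norm_conj, Complex.norm_real, Real.norm_eq_abs]
      calc _ ≤ (B * (q * mz_Psi q)) * ((10 * A * mz_Psi q / (q * Real.log y)) * (10 * A * mz_Psi q / (q * Real.log y))) := by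
            gcongr
        _ = _ := by field_simp; ring
    · rw [mz_beta_nsq _ _ _ hsq]; simp
  refine (Finset.sum_le_sum hb).trans ?_
  rw [← Finset.sum_filter, ← Finset.mul_sum]
  have h4 := mz_A4 N hN1
  have h5 : Real.log N ≤ Real.log y := Real.log_le_log (by exact_mod_cast hN1) (Nat.floor_le (by linarith))
  have hCA := mz_CA_nonneg
  calc _ ≤ 100 * A ^ 2 * B / Real.log y ^ 2 * (mz_CA * (2 * Real.log y)) := by
        gcongr
        refine h4.trans ?_
        gcongr
        linarith
    _ = _ := by field_simp; ring

lemma mz_C2_exists {g g1 g2 : ℝ → ℂ} (h1 : ∀ x, HasDerivAt g (g1 x) x) (h2 : ∀ x, HasDerivAt g1 (g2 x) x)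
    (c2 : Continuous g2) (g0 : g 0 = 0) : ∃ A, mz_C2 g g1 g2 A := by
  obtain ⟨B, hB⟩ := (isCompact_Icc (a := (0:ℝ)) (b := 1)).exists_bound_of_continuousOn c2.continuousOn
  exact ⟨max ‖g1 0‖ B, h1, h2, c2, g0, le_max_left _ _, fun v hv => (hB v hv).trans (le_max_right _ _)⟩

lemma mz_C2_exp {g g1 g2 : ℝ → ℂ} {A : ℝ} (hg : mz_C2 g g1 g2 A) :
    ∃ g1' g2' A', mz_C2 (fun v => g v * Complex.exp (v - 1)) g1' g2' A' := by
  have hc : Continuous g := continuous_iff_continuousAt.2 fun x => (hg.h1 x).continuousAt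
  have hc1 : Continuous g1 := continuous_iff_continuousAt.2 fun x => (hg.h2 x).continuousAt
  have hc2 := hg.c2
  have he : ∀ x : ℝ, HasDerivAt (fun v : ℝ => Complex.exp (v - 1)) (Complex.exp (x - 1)) x := by
    intro x
    have h := ((Complex.ofRealCLM.hasDerivAt (x := x)).sub_const 1).cexp
    simpa using h
  refine ⟨fun v => (g1 v + g v) * Complex.exp (v - 1), fun v => (g2 v + 2 * g1 v + g v) * Complex.exp (v - 1), ?_⟩
  apply mz_C2_exists
  · intro x
    refine ((hg.h1 x).mul (he x)).congr_deriv ?_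
    ring
  · intro x
    refine (((hg.h2 x).add (hg.h1 x)).mul (he x)).congr_deriv ?_
    simp only [Pi.add_apply]
    ring
  · fun_prop
  · simp [hg.g0]

def mz_c (g : ℝ → ℂ) (y : ℝ) (m : ℕ) : ℂ :=
  ∑ k ∈ Finset.Ioc 0 ⌊y⌋₊ with k ∣ m, mz_b g y k

lemma mz_zeta_bd : ∃ Y0 : ℝ, 1 ≤ Y0 ∧ ∀ Y ≥ Y0, ∑' n : ℕ, 1 / (n : ℝ) ^ (1 + 1 / Y) ≤ 2 * Y := by
  have h := tendsto_sub_mul_tsum_nat_rpow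
  have h1 : Tendsto (fun Y : ℝ => 1 + 1 / Y) atTop (nhdsWithin 1 (Set.Ioi 1)) := by
    apply tendsto_nhdsWithin_of_tendsto_nhds_of_eventually_within
    · have : Tendsto (fun Y : ℝ => 1 + 1 / Y) atTop (nhds (1 + 0)) := by
        apply Tendsto.const_add
        exact (tendsto_inv_atTop_zero (𝕜 := ℝ)).congr fun Y => (one_div Y).symm
      simpa using this
    · filter_upwards [eventually_gt_atTop 0] with Y hY
      have : 0 < 1 / Y := by positivity
      simp only [Set.mem_Ioi]; linarith
  have h2 := (h.comp h1).eventually (Iio_mem_nhds (show (1:ℝ) < 2 by norm_num))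
  obtain ⟨Y0, hY0⟩ := eventually_atTop.1 h2
  refine ⟨max 1 Y0, le_max_left _ _, fun Y hY => ?_⟩
  have h3 := hY0 Y ((le_max_right _ _).trans hY)
  have hY1 : 1 ≤ Y := (le_max_left _ _).trans hY
  simp only [Function.comp, add_sub_cancel_left] at h3
  rw [one_div, inv_mul_lt_iff₀ (by linarith)] at h3
  simp only [one_div] at h3 ⊢
  linarith

lemma mz_tsum_dvd (s : ℝ) (hs : 1 < s) (Q : ℕ) (hQ : 0 < Q) :
    HasSum (fun m : ℕ => if Q ∣ m then 1 / (m : ℝ) ^ s else 0) (1 / (Q : ℝ) ^ s * ∑' n : ℕ, 1 / (n : ℝ) ^ s) := by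
  have hinj : Function.Injective (fun n : ℕ => Q * n) := fun a b h => Nat.eq_of_mul_eq_mul_left hQ h
  rw [← hinj.hasSum_iff]
  · have h := ((Real.summable_one_div_nat_rpow.2 hs).hasSum).mul_left (1 / (Q : ℝ) ^ s)
    refine h.congr_fun ?_ |> fun x => x
    intro n
    simp only [Function.comp, dvd_mul_right, if_true]
    push_cast
    rw [Real.mul_rpow (by positivity) (by positivity)]
    field_simp
  · intro m hm
    rw [if_neg]
    rintro ⟨n, rfl⟩
    exact hm ⟨n, rfl⟩

lemma mz_rankin_id (g : ℝ → ℂ) (y : ℝ) (s : ℝ) (hs : 1 < s) (M : ℕ) :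
    ∑ m ∈ Finset.Ioc 0 M, ‖mz_c g y m‖ ^ 2 / (m : ℝ) ^ s ≤
    ‖∑ h ∈ Finset.Ioc 0 ⌊y⌋₊, ∑ k ∈ Finset.Ioc 0 ⌊y⌋₊, mz_b g y h * (starRingEnd ℂ) (mz_b g y k)
       * ((1 / (Nat.lcm h k : ℝ) ^ s * ∑' n : ℕ, 1 / (n : ℝ) ^ s : ℝ) : ℂ)‖ := by
  set S := ∑ h ∈ Finset.Ioc 0 ⌊y⌋₊, ∑ k ∈ Finset.Ioc 0 ⌊y⌋₊, mz_b g y h * (starRingEnd ℂ) (mz_b g y k)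
       * ((1 / (Nat.lcm h k : ℝ) ^ s * ∑' n : ℕ, 1 / (n : ℝ) ^ s : ℝ) : ℂ) with hS
  have h1 : HasSum (fun m : ℕ => ∑ h ∈ Finset.Ioc 0 ⌊y⌋₊, ∑ k ∈ Finset.Ioc 0 ⌊y⌋₊, mz_b g y h * (starRingEnd ℂ) (mz_b g y k)
       * (((if Nat.lcm h k ∣ m then 1 / (m : ℝ) ^ s else 0 : ℝ)) : ℂ)) S := by
    apply hasSum_sum
    intro h hh
    apply hasSum_sum
    intro k hk
    apply HasSum.mul_left
    rw [Complex.hasSum_ofReal]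
    apply mz_tsum_dvd s hs
    rw [Finset.mem_Ioc] at hh hk
    exact Nat.lcm_pos hh.1 hk.1
  have h2 : ∀ m : ℕ, ∑ h ∈ Finset.Ioc 0 ⌊y⌋₊, ∑ k ∈ Finset.Ioc 0 ⌊y⌋₊, mz_b g y h * (starRingEnd ℂ) (mz_b g y k)
       * (((if Nat.lcm h k ∣ m then 1 / (m : ℝ) ^ s else 0 : ℝ)) : ℂ) = ((‖mz_c g y m‖ ^ 2 / (m : ℝ) ^ s : ℝ) : ℂ) := by
    intro m
    rw [Complex.ofReal_div, Complex.ofReal_pow, ← Complex.mul_conj', mz_c, map_sum, Finset.sum_filter, Finset.sum_filter, Finset.sum_mul_sum, Finset.sum_div]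
    refine Finset.sum_congr rfl fun h _ => ?_
    rw [Finset.sum_div]
    refine Finset.sum_congr rfl fun k _ => ?_
    by_cases ha : h ∣ m <;> by_cases hb : k ∣ m <;> simp [ha, hb, Nat.lcm_dvd_iff]
    rw [div_eq_mul_inv]
  simp only [h2] at h1
  have h3 := Complex.hasSum_re h1
  simp only [Complex.ofReal_re] at h3
  refine (sum_le_hasSum (Finset.Ioc 0 M) (fun m _ => by positivity) h3).trans (Complex.re_le_norm S)
  
lemma mz_C {g g1 g2 : ℝ → ℂ} {A : ℝ} (hg : mz_C2 g g1 g2 A) (Λ : ℝ) :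
    ∃ C Y0 : ℝ, 0 ≤ C ∧ 1 ≤ Y0 ∧ ∀ y : ℝ, 1 < y → Y0 ≤ Real.log y → ∀ M : ℕ, Real.log M ≤ Λ * Real.log y →
      ∑ m ∈ Finset.Ioc 0 M, ‖mz_c g y m‖ ^ 2 / (m : ℝ) ≤ C := by
  obtain ⟨g1', g2', A', hg'⟩ := mz_C2_exp hg
  obtain ⟨Y0, hY0, hz⟩ := mz_zeta_bd
  have hCA := mz_CA_nonneg
  refine ⟨Real.exp Λ * (2 * (200 * mz_CA * A' ^ 2 * Real.exp 1)), Y0, by positivity, hY0, fun y hy1 hy M hM => ?_⟩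
  set Y := Real.log y with hY
  have hYpos : 0 < Y := by linarith
  have hye : Real.exp 1 ≤ y := by rw [← Real.le_log_iff_exp_le (by linarith)]; linarith
  have hs : 1 < 1 + 1 / Y := by have : 0 < 1 / Y := by positivity
                                linarith
  have h1 := mz_rankin_id g y (1 + 1 / Y) hs M
  have h2 : ∑ m ∈ Finset.Ioc 0 M, ‖mz_c g y m‖ ^ 2 / (m : ℝ) ≤ Real.exp Λ * ∑ m ∈ Finset.Ioc 0 M, ‖mz_c g y m‖ ^ 2 / (m : ℝ) ^ (1 + 1 / Y) := by
    rw [Finset.mul_sum]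
    refine Finset.sum_le_sum fun m hm => ?_
    rw [Finset.mem_Ioc] at hm
    have hm0 : (0 : ℝ) < m := by exact_mod_cast hm.1
    have h3 : (m : ℝ) ^ (1 / Y) ≤ Real.exp Λ := by
      rw [Real.rpow_def_of_pos hm0, Real.exp_le_exp, mul_one_div, div_le_iff₀ hYpos]
      refine le_trans (Real.log_le_log hm0 ?_) hM
      exact_mod_cast hm.2
    rw [Real.rpow_add hm0, Real.rpow_one, div_mul_eq_div_div, ← mul_div_assoc, le_div_iff₀ (by positivity), mul_comm]
    gcongr
  refine h2.trans (mul_le_mul_of_nonneg_left (h1.trans ?_) (Real.exp_pos _).le)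
  have h4 := mz_K hg' y hye (fun d => (d : ℝ) ^ (1 + 1 / Y)) (Real.exp 1) (Real.exp_pos _).le (by
    intro d hd
    rw [Finset.mem_Ioc] at hd
    have hd0 : (0 : ℝ) < d := by exact_mod_cast hd.1
    have hdy : (d : ℝ) ≤ y := (Nat.le_floor_iff (by linarith)).1 hd.2
    rw [abs_of_pos (by positivity), Real.rpow_add hd0, Real.rpow_one, mul_comm]
    gcongr
    rw [Real.rpow_def_of_pos hd0, Real.exp_le_exp, mul_one_div, div_le_one hYpos]
    exact Real.log_le_log hd0 hdy)
  set Z := ∑' n : ℕ, 1 / (n : ℝ) ^ (1 + 1 / Y) with hZ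
  have hZ2 : Z ≤ 2 * Y := hz Y hy
  have hZ0 : 0 ≤ Z := tsum_nonneg fun n => by positivity
  have h5 : ∑ h ∈ Finset.Ioc 0 ⌊y⌋₊, ∑ k ∈ Finset.Ioc 0 ⌊y⌋₊, mz_b g y h * (starRingEnd ℂ) (mz_b g y k)
       * ((1 / (Nat.lcm h k : ℝ) ^ (1 + 1 / Y) * Z : ℝ) : ℂ) = 
       (Z : ℂ) * ∑ h ∈ Finset.Ioc 0 ⌊y⌋₊, ∑ k ∈ Finset.Ioc 0 ⌊y⌋₊,
      mz_b (fun v => g v * Complex.exp (v - 1)) y h * (starRingEnd ℂ) (mz_b (fun v => g v * Complex.exp (v - 1)) y k) * ((((Nat.gcd h k : ℕ) : ℝ) ^ (1 + 1 / Y) / (h * k) : ℝ) : ℂ) := by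
    rw [Finset.mul_sum]
    refine Finset.sum_congr rfl fun h hh => ?_
    rw [Finset.mul_sum]
    refine Finset.sum_congr rfl fun k hk => ?_
    rw [Finset.mem_Ioc] at hh hk
    have hh0 : (0 : ℝ) < h := by exact_mod_cast hh.1
    have hk0 : (0 : ℝ) < k := by exact_mod_cast hk.1
    have hbb : ∀ n : ℕ, 0 < n → mz_b (fun v => g v * Complex.exp (v - 1)) y n = mz_b g y n * (((n : ℝ) ^ (-(1 / Y)) : ℝ) : ℂ) := by
      intro n hn
      have hn0 : (0 : ℝ) < n := by exact_mod_cast hn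
      rw [mz_b, mz_b, ← mul_assoc]
      congr 1
      rw [Real.rpow_def_of_pos hn0, Complex.ofReal_exp, Real.log_div (by linarith) hn0.ne']
      congr 1
      rw [← hY]
      push_cast
      have : (Y : ℂ) ≠ 0 := by exact_mod_cast hYpos.ne'
      field_simp
      ring
    rw [hbb h hh.1, hbb k hk.1, map_mul, Complex.conj_ofReal]
    have h6 : 1 / (Nat.lcm h k : ℝ) ^ (1 + 1 / Y) = (h : ℝ) ^ (-(1 / Y)) * (k : ℝ) ^ (-(1 / Y)) * (((Nat.gcd h k : ℕ) : ℝ) ^ (1 + 1 / Y) / (h * k)) := by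
      have h7 : (Nat.gcd h k : ℝ) * (Nat.lcm h k : ℝ) = h * k := by exact_mod_cast Nat.gcd_mul_lcm h k
      have hg0 : (0 : ℝ) < Nat.gcd h k := by exact_mod_cast Nat.gcd_pos_of_pos_left _ hh.1
      have hl0 : (0 : ℝ) < Nat.lcm h k := by exact_mod_cast Nat.lcm_pos hh.1 hk.1
      have h8 : ((Nat.gcd h k : ℝ) * (Nat.lcm h k : ℝ)) ^ (1 + 1 / Y) = ((h : ℝ) * k) ^ (1 + 1 / Y) := by rw [h7]
      rw [Real.mul_rpow hg0.le hl0.le, Real.mul_rpow hh0.le hk0.le, Real.rpow_add hh0, Real.rpow_add hk0, Real.rpow_one, Real.rpow_one] at h8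
      rw [Real.rpow_neg hh0.le, Real.rpow_neg hk0.le]
      have p1 : 0 < (h : ℝ) ^ (1 / Y) := by positivity
      have p2 : 0 < (k : ℝ) ^ (1 / Y) := by positivity
      have p3 : 0 < (Nat.lcm h k : ℝ) ^ (1 + 1 / Y) := by positivity
      generalize (Nat.lcm h k : ℝ) ^ (1 + 1 / Y) = a at *
      generalize (Nat.gcd h k : ℝ) ^ (1 + 1 / Y) = b at *
      generalize (h : ℝ) ^ (1 / Y) = c at *
      generalize (k : ℝ) ^ (1 / Y) = d at *
      field_simp
      linarith
    rw [h6]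
    push_cast
    ring
  rw [h5, norm_mul, Complex.norm_real, Real.norm_eq_abs, abs_of_nonneg hZ0]
  calc _ ≤ (2 * Y) * (200 * mz_CA * A' ^ 2 * Real.exp 1 / Y) := by
        gcongr
    _ = _ := by field_simp

lemma mz_geo (q : ℝ) (h0 : 0 ≤ q) (h1 : q < 1) :
    HasSum (fun n : ℤ => if n = 0 then 0 else q ^ n.natAbs) (2 * (q / (1 - q))) := by
  have hg : HasSum (fun n : ℕ => q ^ (n + 1)) (q / (1 - q)) := by
    have := (hasSum_geometric_of_lt_one h0 h1).mul_left q
    simpa [pow_succ', div_eq_mul_inv] using this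
  have ha : HasSum (fun n : ℕ => if ((n : ℤ)) = 0 then 0 else q ^ (n : ℤ).natAbs) (q / (1 - q)) := by
    rw [← hasSum_nat_add_iff' 1]
    simp only [Finset.range_one, Finset.sum_singleton, Nat.cast_zero, if_true, sub_zero]
    refine hg.congr_fun ?_ |> fun x => x
    intro n
    rw [if_neg (by omega)]
    rfl
  have hb : HasSum (fun n : ℕ => if (-((n : ℤ) + 1)) = 0 then 0 else q ^ (-((n : ℤ) + 1)).natAbs) (q / (1 - q)) := by
    refine hg.congr_fun ?_ |> fun x => x
    intro n
    rw [if_neg (by omega)]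
    congr 1
  rw [two_mul]
  exact HasSum.of_nat_of_neg_add_one ha hb

lemma mz_theta (V x : ℝ) (hV : 1 ≤ V) :
    Summable (fun n : ℤ => Real.exp (-π * ((x + n) / V) ^ 2)) ∧
    |∑' n : ℤ, Real.exp (-π * ((x + n) / V) ^ 2) - V| ≤ V * (3 * Real.exp (-π * V)) := by
  have hV0 : 0 < V := by linarith
  have ha : 0 < ((V ^ 2 : ℝ) : ℂ).re := by rw [Complex.ofReal_re]; positivity
  have h := Complex.tsum_exp_neg_quadratic ha (-Complex.I * x)
  have h1 : ((V ^ 2 : ℝ) : ℂ) ^ (1 / 2 : ℂ) = V := by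
    have : ((1 / 2 : ℂ)) = ((1 / 2 : ℝ) : ℂ) := by push_cast; rfl
    rw [this, ← Complex.ofReal_cpow (by positivity), ← Real.sqrt_eq_rpow, Real.sqrt_sq hV0.le]
  have h2 : ∀ n : ℤ, Complex.exp (-π / ((V ^ 2 : ℝ) : ℂ) * (n + Complex.I * (-Complex.I * x)) ^ 2) = ((Real.exp (-π * ((x + n) / V) ^ 2) : ℝ) : ℂ) := by
    intro n
    push_cast
    congr 1
    have : Complex.I * (-Complex.I * x) = x := by rw [← mul_assoc, mul_neg, Complex.I_mul_I]; simp
    rw [this]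
    ring
  simp_rw [h2] at h
  rw [h1, ← Complex.ofReal_tsum] at h
  set q := Real.exp (-π * V) with hq
  have hq0 : 0 < q := Real.exp_pos _
  have hq1 : q ≤ 1 / 4 := by
    rw [hq]
    have : Real.exp (-π * V) ≤ Real.exp (-3) := by
      rw [Real.exp_le_exp]; nlinarith [Real.pi_gt_three]
    have h3 : Real.exp (-3) ≤ 1 / 4 := by
      rw [Real.exp_neg, one_div]
      gcongr
      linarith [Real.add_one_le_exp (3:ℝ)]
    linarith
  have hgeo := mz_geo q hq0.le (by linarith)
  set F : ℤ → ℂ := fun n => Complex.exp (-π * ((V ^ 2 : ℝ) : ℂ) * n ^ 2 + 2 * π * (-Complex.I * x) * n) with hF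
  have hF0 : ∀ n, ‖if n = 0 then 0 else F n‖ ≤ if n = 0 then 0 else q ^ n.natAbs := by
    intro n
    split_ifs with hn
    · simp
    · rw [hF, hq]
      simp only
      rw [Complex.norm_exp, ← Real.exp_nat_mul, Real.exp_le_exp]
      have : (-π * ((V ^ 2 : ℝ) : ℂ) * n ^ 2 + 2 * π * (-Complex.I * x) * n).re = -π * V ^ 2 * n ^ 2 := by
        have : (-π * ((V ^ 2 : ℝ) : ℂ) * n ^ 2 + 2 * π * (-Complex.I * x) * n) = ((-π * V ^ 2 * n ^ 2 : ℝ) : ℂ) + ((-(2 * π * x * n) : ℝ) : ℂ) * Complex.I := by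
          push_cast; ring
        rw [this, Complex.add_re, Complex.re_ofReal_mul, Complex.ofReal_re, Complex.I_re]; ring
      rw [this]
      have h4 : (n : ℝ) ^ 2 = (n.natAbs : ℝ) ^ 2 := by
        rw [Nat.cast_natAbs]; push_cast; rw [sq_abs]
      rw [h4]
      have h5 : (1 : ℝ) ≤ n.natAbs := by exact_mod_cast Int.natAbs_pos.2 hn
      have : (n.natAbs : ℝ) * V ≤ V ^ 2 * (n.natAbs : ℝ) ^ 2 := by nlinarith [mul_le_mul hV h5 zero_le_one hV0.le]
      nlinarith [Real.pi_pos]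
  have hsum := Summable.of_norm_bounded hgeo.summable hF0
  have hFs : HasSum F (1 + ∑' n, (if n = 0 then 0 else F n)) := by
    have hA : HasSum (fun n : ℤ => if n = 0 then (1:ℂ) else 0) 1 := hasSum_ite_eq 0 1
    refine (hA.add hsum.hasSum).congr_fun ?_ |> fun x => x
    intro n
    by_cases hn : n = 0
    · simp [hn, hF]
    · simp [hn]
  have h6 : ‖∑' n, (if n = 0 then 0 else F n)‖ ≤ 3 * q := by
    refine (tsum_of_norm_bounded hgeo hF0).trans ?_
    rw [← mul_div_assoc, div_le_iff₀ (by linarith)]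
    nlinarith
  rw [hFs.tsum_eq] at h
  set S := ∑' n : ℤ, Real.exp (-π * ((x + n) / V) ^ 2) with hS
  have h7 : ∑' n, (if n = 0 then 0 else F n) = (((S - V) / V : ℝ) : ℂ) := by
    have : (V : ℂ) ≠ 0 := by exact_mod_cast hV0.ne'
    push_cast
    rw [eq_div_iff this]
    field_simp at h
    linear_combination h
  rw [h7, Complex.norm_real, Real.norm_eq_abs, abs_div, abs_of_pos hV0, div_le_iff₀ hV0] at h6
  refine ⟨?_, by linarith⟩
  by_contra hns
  rw [tsum_eq_zero_of_not_summable hns] at hS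
  rw [hS, zero_sub, abs_neg, abs_of_pos hV0] at h6
  nlinarith

lemma mz_gauss_int (V : ℝ) (hV : 0 < V) : Integrable (fun x : ℝ => Real.exp (-π * (x / V) ^ 2)) := by
  have := integrable_exp_neg_mul_sq (b := π / V ^ 2) (by positivity)
  refine this.congr (Eventually.of_forall fun x => ?_)
  simp only
  congr 1
  field_simp

lemma mz_gauss_per (V : ℝ) (hV : 1 ≤ V) (p : ℝ → ℝ) (hp : Measurable p) (hp1 : ∀ x, |p x| ≤ 1)
    (hper : ∀ x, p (x + 1) = p x) :
    |(∫ x, Real.exp (-π * (x / V) ^ 2) * p x) - V * ∫ x in (0:ℝ)..1, p x| ≤ V * (3 * Real.exp (-π * V)) := by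
  have hV0 : 0 < V := by linarith
  have hperZ : ∀ (n : ℤ) x, p (x + n) = p x := by
    have : Function.Periodic p 1 := hper
    intro n x
    have := this.int_mul n x
    simpa using this
  have hw := mz_gauss_int V hV0
  have hwp : Integrable (fun x => Real.exp (-π * (x / V) ^ 2) * p x) :=
    hw.mul_bdd (c := 1) hp.aestronglyMeasurable (Eventually.of_forall hp1)
  have hs1 := hwp.hasSum_intervalIntegral_comp_add_int
  have hs2 := hw.hasSum_intervalIntegral_comp_add_int
  simp only [hperZ] at hs1
  simp_rw [intervalIntegral.integral_of_le zero_le_one] at hs1 hs2 ⊢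
  have hi : ∀ n : ℤ, Integrable (fun x : ℝ => Real.exp (-π * ((x + n) / V) ^ 2)) (volume.restrict (Set.Ioc 0 1)) := by
    intro n
    exact (hw.comp_add_right (n : ℝ)).integrableOn
  have hi2 : ∀ n : ℤ, Integrable (fun x : ℝ => Real.exp (-π * ((x + n) / V) ^ 2) * p x) (volume.restrict (Set.Ioc 0 1)) := by
    intro n
    exact (hi n).mul_bdd (c := 1) hp.aestronglyMeasurable (Eventually.of_forall hp1)
  have hpi : Integrable p (volume.restrict (Set.Ioc 0 1)) :=
    Integrable.of_bound hp.aestronglyMeasurable 1 (Eventually.of_forall hp1)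
  have hnorm : Summable (fun n : ℤ => ∫ x in Set.Ioc (0:ℝ) 1, ‖Real.exp (-π * ((x + n) / V) ^ 2) * p x‖) := by
    refine Summable.of_nonneg_of_le (fun n => integral_nonneg fun x => norm_nonneg _) (fun n => ?_) hs2.summable
    apply integral_mono (hi2 n).norm (hi n)
    intro x
    simp only
    rw [norm_mul, Real.norm_eq_abs, Real.norm_eq_abs, abs_of_pos (Real.exp_pos _)]
    exact mul_le_of_le_one_right (Real.exp_pos _).le (hp1 x)
  have hs3 := hasSum_integral_of_summable_integral_norm hi2 hnorm
  have e1 := hs1.unique hs3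
  rw [e1]
  have e2 : ∀ x : ℝ, ∑' n : ℤ, Real.exp (-π * ((x + n) / V) ^ 2) * p x = (∑' n : ℤ, Real.exp (-π * ((x + n) / V) ^ 2)) * p x :=
    fun x => tsum_mul_right
  simp_rw [e2]
  have hmeas : Measurable (fun x : ℝ => ∑' n : ℤ, Real.exp (-π * ((x + n) / V) ^ 2)) := by
    apply Measurable.tsum
    intro n; fun_prop
  have hb : ∀ x : ℝ, |∑' n : ℤ, Real.exp (-π * ((x + n) / V) ^ 2) - V| ≤ V * (3 * Real.exp (-π * V)) := fun x => (mz_theta V x hV).2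
  have hi4 : Integrable (fun x => (∑' n : ℤ, Real.exp (-π * ((x + n) / V) ^ 2)) * p x) (volume.restrict (Set.Ioc 0 1)) := by
    apply Integrable.of_bound (hmeas.mul hp).aestronglyMeasurable (V + V * (3 * Real.exp (-π * V)))
    refine Eventually.of_forall fun x => ?_
    rw [Pi.mul_apply, norm_mul]
    have h1 := hb x
    have h2 : ‖∑' n : ℤ, Real.exp (-π * ((x + n) / V) ^ 2)‖ ≤ V + V * (3 * Real.exp (-π * V)) := by
      rw [Real.norm_eq_abs]
      calc _ = |(∑' n : ℤ, Real.exp (-π * ((x + n) / V) ^ 2) - V) + V| := by rw [sub_add_cancel]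
        _ ≤ _ := (abs_add_le _ _).trans (by rw [abs_of_pos hV0]; linarith)
    calc _ ≤ (V + V * (3 * Real.exp (-π * V))) * 1 := mul_le_mul h2 (hp1 x) (abs_nonneg _) (by positivity)
      _ = _ := mul_one _
  rw [← integral_const_mul, ← integral_sub hi4 (hpi.const_mul V)]
  have := norm_integral_le_of_norm_le_const (μ := volume.restrict (Set.Ioc (0:ℝ) 1)) (C := V * (3 * Real.exp (-π * V)))
    (f := fun x => (∑' n : ℤ, Real.exp (-π * ((x + n) / V) ^ 2)) * p x - V * p x) (Eventually.of_forall fun x => by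
      rw [← sub_mul, norm_mul]
      calc _ ≤ (V * (3 * Real.exp (-π * V))) * 1 := mul_le_mul (hb x) (hp1 x) (abs_nonneg _) (by positivity)
        _ = _ := mul_one _)
  simpa using this

lemma mz_gauss_perQ (U Q : ℝ) (hQ : 0 < Q) (hU : Q ≤ U) (p : ℝ → ℝ) (hp : Measurable p) (hp1 : ∀ x, |p x| ≤ 1)
    (hper : ∀ x, p (x + Q) = p x) :
    |(∫ x, Real.exp (-π * (x / U) ^ 2) * p x) - U / Q * ∫ x in (0:ℝ)..Q, p x| ≤ U * (3 * Real.exp (-π * (U / Q))) := by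
  have h := mz_gauss_per (U / Q) (by rwa [one_le_div hQ]) (fun x => p (Q * x)) (by fun_prop) (fun x => hp1 _)
    (fun x => by rw [mul_add, mul_one, hper])
  have e1 := Measure.integral_comp_mul_left (fun x => Real.exp (-π * (x / U) ^ 2) * p x) Q
  have e2 := intervalIntegral.integral_comp_mul_left (a := 0) (b := 1) p hQ.ne'
  simp only [mul_zero, mul_one, smul_eq_mul] at e1 e2
  have e3 : ∀ x : ℝ, Real.exp (-π * (x / (U / Q)) ^ 2) * p (Q * x) = Real.exp (-π * ((Q * x) / U) ^ 2) * p (Q * x) := by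
    intro x; congr 3; field_simp
  simp_rw [e3] at h
  rw [e1, e2, abs_of_pos (inv_pos.2 hQ)] at h
  have e4 : ∀ I J : ℝ, Q⁻¹ * I - U / Q * (Q⁻¹ * J) = Q⁻¹ * (I - U / Q * J) := by intro I J; ring
  rw [e4, abs_mul, abs_of_pos (inv_pos.2 hQ), inv_mul_le_iff₀ hQ] at h
  refine h.trans (le_of_eq ?_)
  field_simp

lemma mz_fr_per (n : ℕ) (hn : 0 < n) (x : ℝ) : Int.fract ((x + n) / n) = Int.fract (x / n) := by
  have : (n : ℝ) ≠ 0 := by positivity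
  rw [add_div, div_self this, Int.fract_add_one]

lemma mz_fr_dist (n : ℕ) (hn : 0 < n) (x : ℝ) :
    ∑ i ∈ Finset.range n, Int.fract ((x + i) / n) = Int.fract x + ((n : ℝ) - 1) / 2 := by
  have hn0 : (0 : ℝ) < n := by positivity
  have hstep : ∀ x : ℝ, ∑ i ∈ Finset.range n, Int.fract ((x + 1 + i) / n) = ∑ i ∈ Finset.range n, Int.fract ((x + i) / n) := by
    intro x
    have h1 := Finset.sum_range_succ (fun i : ℕ => Int.fract ((x + i) / (n : ℝ))) n
    have h2 := Finset.sum_range_succ' (fun i : ℕ => Int.fract ((x + i) / (n : ℝ))) n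
    rw [h1] at h2
    simp only [Nat.cast_zero, add_zero] at h2
    rw [mz_fr_per n hn] at h2
    have h3 := add_right_cancel h2
    rw [h3]
    refine Finset.sum_congr rfl fun i _ => ?_
    push_cast; ring_nf
  have hper : Function.Periodic (fun x : ℝ => ∑ i ∈ Finset.range n, Int.fract ((x + i) / n)) 1 := hstep
  have e := hper.sub_int_mul_eq (x := x) ⌊x⌋
  simp only [mul_one] at e
  rw [Int.self_sub_floor] at e
  rw [← e]
  have : ∀ i ∈ Finset.range n, Int.fract ((Int.fract x + i) / n) = Int.fract x / n + i * (1 / n) := by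
    intro i hi
    have hi' : (i : ℝ) + 1 ≤ n := by exact_mod_cast Finset.mem_range.1 hi
    rw [Int.fract_eq_self.2]
    · ring
    · constructor
      · have := Int.fract_nonneg x; positivity
      · rw [div_lt_one hn0]; linarith [Int.fract_lt_one x]
  rw [Finset.sum_congr rfl this, Finset.sum_add_distrib, ← Finset.sum_mul]
  have hg := Finset.sum_range_id_mul_two n
  have hg' : (∑ i ∈ Finset.range n, (i : ℝ)) * 2 = n * (n - 1) := by
    have := congrArg (Nat.cast : ℕ → ℝ) hg
    push_cast [Nat.cast_sub hn] at this
    simpa using this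
  have : (∑ i ∈ Finset.range n, (i : ℝ)) = n * (n - 1) / 2 := by linarith
  rw [this]
  simp
  field_simp

lemma mz_sum_per (F : ℕ → ℝ) (n : ℕ) (hF : ∀ i, F (i + n) = F i) (g : ℕ) :
    ∑ i ∈ Finset.range (g * n), F i = g * ∑ i ∈ Finset.range n, F i := by
  have hF' : ∀ g i, F (g * n + i) = F i := by
    intro g i
    induction g with
    | zero => simp
    | succ g ih => rw [show (g + 1) * n + i = (g * n + i) + n by ring, hF, ih]
  induction g with
  | zero => simp
  | succ g ih =>
    rw [add_mul, one_mul, Finset.sum_range_add, ih]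
    simp only [hF']
    push_cast; ring

lemma mz_sum_perm (F : ℕ → ℝ) (n : ℕ) (hn : 0 < n) (hF : ∀ i, F (i + n) = F i) (k : ℕ) (hk : Nat.Coprime n k) :
    ∑ i ∈ Finset.range n, F (k * i) = ∑ i ∈ Finset.range n, F i := by
  have hF' : ∀ i, F (i % n) = F i := by
    intro i
    have : ∀ g i, F (i + n * g) = F i := by
      intro g i
      induction g with
      | zero => simp
      | succ g ih => rw [show i + n * (g + 1) = (i + n * g) + n by ring, hF, ih]
    conv_rhs => rw [← Nat.mod_add_div i n]
    rw [this]
  have himg : (Finset.range n).image (fun i => (k * i) % n) = Finset.range n := by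
    apply Finset.eq_of_subset_of_card_le
    · intro j hj
      simp only [Finset.mem_image] at hj
      obtain ⟨i, _, rfl⟩ := hj
      exact Finset.mem_range.2 (Nat.mod_lt _ hn)
    · rw [Finset.card_image_of_injOn]
      intro i hi j hj hij
      simp only [Finset.coe_range, Set.mem_Iio] at hi hj
      have : k * i ≡ k * j [MOD n] := hij
      have := Nat.ModEq.cancel_left_of_coprime hk this
      exact Nat.ModEq.eq_of_lt_of_lt this hi hj
  have hinj : Set.InjOn (fun i => (k * i) % n) (Finset.range n) := by
    intro i hi j hj hij
    simp only [Finset.coe_range, Set.mem_Iio] at hi hj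
    have : k * i ≡ k * j [MOD n] := hij
    have := Nat.ModEq.cancel_left_of_coprime hk this
    exact Nat.ModEq.eq_of_lt_of_lt this hi hj
  conv_rhs => rw [← himg]
  rw [Finset.sum_image hinj]
  exact Finset.sum_congr rfl fun i _ => (hF' _).symm

def mz_r (H : ℝ) (k : ℕ) (u : ℝ) : ℝ := Int.fract ((u + H) / k) - Int.fract (u / k)

lemma mz_r_meas (H : ℝ) (k : ℕ) : Measurable (mz_r H k) := by
  unfold mz_r; fun_prop

lemma mz_r_le (H : ℝ) (k : ℕ) (u : ℝ) : |mz_r H k u| ≤ 1 := by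
  unfold mz_r
  rw [abs_le]
  constructor <;> linarith [Int.fract_nonneg ((u + H) / k), Int.fract_nonneg (u / k), Int.fract_lt_one ((u + H) / k), Int.fract_lt_one (u / k)]

lemma mz_r_per (H : ℝ) (k : ℕ) (hk : 0 < k) (u : ℝ) : mz_r H k (u + k) = mz_r H k u := by
  unfold mz_r
  rw [mz_fr_per k hk, add_right_comm, mz_fr_per k hk]

/-- distribution for divisors -/
lemma mz_S1 (H : ℝ) (g h' : ℕ) (hg : 0 < g) (hh : 0 < h') (u : ℝ) :
    ∑ i ∈ Finset.range h', mz_r H (g * h') (u + g * i) = mz_r H g u := by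
  have hg0 : (0 : ℝ) < g := by positivity
  have hh0 : (0 : ℝ) < h' := by positivity
  unfold mz_r
  rw [Finset.sum_sub_distrib]
  have e1 : ∀ x : ℝ, ∀ i : ℕ, (x + g * i) / ((g * h' : ℕ) : ℝ) = (x / g + i) / h' := by
    intro x i; push_cast; field_simp
  simp_rw [add_right_comm u _ H, e1]
  rw [mz_fr_dist h' hh, mz_fr_dist h' hh]
  ring

lemma mz_S (H : ℝ) (h k : ℕ) (hh : 0 < h) (hk : 0 < k) (u : ℝ) :
    ∑ i ∈ Finset.range h, mz_r H h (u + k * i) = (Nat.gcd h k) * mz_r H (Nat.gcd h k) u := by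
  obtain ⟨h', k', hc, e1, e2⟩ := Nat.exists_coprime h k
  set g := Nat.gcd h k with hg
  have hg0 : 0 < g := Nat.gcd_pos_of_pos_left _ hh
  have hh' : 0 < h' := by rcases Nat.eq_zero_or_pos h' with h0 | h0; · simp [h0] at e1; omega
                          · exact h0
  have hper : ∀ i : ℕ, mz_r H h (u + g * ((i + h' : ℕ) : ℝ)) = mz_r H h (u + g * (i : ℝ)) := by
    intro i
    rw [← mz_r_per H h hh (u + g * (i:ℝ))]
    congr 1
    conv_rhs => rw [e1]
    push_cast; ring
  have a1 : ∀ i : ℕ, mz_r H h (u + k * i) = (fun j : ℕ => mz_r H h (u + g * j)) (k' * i) := by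
    intro i
    simp only
    congr 1
    conv_lhs => rw [e2]
    push_cast; ring
  have a2 : ∑ i ∈ Finset.range h, mz_r H h (u + k * i) = g * ∑ i ∈ Finset.range h', mz_r H h (u + k * i) := by
    conv_lhs => rw [show Finset.range h = Finset.range (g * h') by rw [mul_comm, ← e1]]
    apply mz_sum_per (fun i : ℕ => mz_r H h (u + k * i)) h'
    intro i
    have : (k : ℝ) * ((i + h' : ℕ) : ℝ) = k * i + h * k' := by
      have e1' : (h : ℝ) = h' * g := by exact_mod_cast e1
      have e2' : (k : ℝ) = k' * g := by exact_mod_cast e2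
      rw [e1', e2']; push_cast; ring
    rw [this, ← add_assoc]
    have hp : Function.Periodic (mz_r H h) h := mz_r_per H h hh
    have := hp.nat_mul k' (u + k * i)
    rw [mul_comm (k' : ℝ)] at this
    exact this
  rw [a2]
  congr 1
  simp_rw [a1]
  rw [mz_sum_perm (fun j : ℕ => mz_r H h (u + g * j)) h' hh' hper k' hc]
  conv_lhs => rw [show h = g * h' by rw [mul_comm, ← e1]]
  exact mz_S1 H g h' hg0 hh' u

lemma mz_J (h : ℕ) (k : ℝ) (p q : ℝ → ℝ) (hp : Measurable p) (hq : Measurable q)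
    (hp1 : ∀ x, |p x| ≤ 1) (hq1 : ∀ x, |q x| ≤ 1) (hper : ∀ x, p (x + k) = p x) :
    ∫ u in (0:ℝ)..(h * k), q u * p u = ∫ u in (0:ℝ)..k, (∑ i ∈ Finset.range h, q (u + k * i)) * p u := by
  have hint : ∀ (c : ℝ) (a b : ℝ), IntervalIntegrable (fun u => q (u + c) * p u) volume a b := by
    intro c a b
    rw [intervalIntegrable_iff]
    refine Measure.integrableOn_of_bounded (M := 1) (by simp) (by fun_prop) (Eventually.of_forall fun x => ?_)
    rw [norm_mul]
    exact mul_le_one₀ (hq1 _) (norm_nonneg _) (hp1 _)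
  have hint0 : ∀ (a b : ℝ), IntervalIntegrable (fun u => q u * p u) volume a b := by
    intro a b; simpa using hint 0 a b
  have hs := intervalIntegral.sum_integral_adjacent_intervals (f := fun u => q u * p u) (μ := volume) (a := fun i : ℕ => (i : ℝ) * k) (n := h)
    (fun i _ => hint0 _ _)
  simp only [Nat.cast_zero, zero_mul] at hs
  rw [← hs]
  simp_rw [Finset.sum_mul]
  rw [intervalIntegral.integral_finsetSum (fun i _ => hint _ _ _)]
  refine Finset.sum_congr rfl fun i _ => ?_
  have := intervalIntegral.integral_comp_add_right (a := 0) (b := k) (fun u => q u * p u) (k * i)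
  have hp' : Function.Periodic p k := hper
  have hpi : ∀ x, p (x + k * i) = p x := by
    intro x
    have := hp'.nat_mul i x
    rwa [mul_comm] at this
  simp_rw [hpi] at this
  rw [this]
  congr 1 <;> push_cast <;> ring

lemma mz_I (H : ℝ) (h k : ℕ) (hh : 0 < h) (hk : 0 < k) :
    ∫ u in (0:ℝ)..(h * k), mz_r H h u * mz_r H k u =
      (Nat.gcd h k) * ∫ u in (0:ℝ)..(Nat.gcd h k), mz_r H (Nat.gcd h k) u ^ 2 := by
  rw [mz_J h k _ _ (mz_r_meas H k) (mz_r_meas H h) (mz_r_le H k) (mz_r_le H h) (mz_r_per H k hk)]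
  simp_rw [mz_S H h k hh hk, mul_assoc]
  rw [intervalIntegral.integral_const_mul]
  congr 1
  have hg0 : 0 < Nat.gcd h k := Nat.gcd_pos_of_pos_left _ hh
  obtain ⟨k', e⟩ := Nat.gcd_dvd_right h k
  have hk' : 0 < k' := by
    rcases Nat.eq_zero_or_pos k' with h0 | h0
    · rw [h0] at e; omega
    · exact h0
  set g := Nat.gcd h k with hg
  have := mz_J k' g _ _ (mz_r_meas H g) (mz_r_meas H k) (mz_r_le H g) (mz_r_le H k) (mz_r_per H g hg0)
  have e' : (k : ℝ) = k' * g := by rw [mul_comm]; exact_mod_cast e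
  rw [← e'] at this
  simp_rw [mul_comm (mz_r H g _) (mz_r H k _)]
  rw [this]
  apply intervalIntegral.integral_congr
  intro u _
  simp only
  rw [pow_two]
  congr 1
  conv_lhs => rw [e]
  exact mz_S1 H g k' hg0 hk' u

lemma mz_E_bound (H : ℝ) (hH : 0 < H) (g : ℕ) (hg : 0 < g) :
    ∫ u in (0:ℝ)..g, mz_r H g u ^ 2 ≤ 2 * H := by
  have hg0 : (0 : ℝ) < g := by positivity
  have hb : ∀ u, mz_r H g u ^ 2 ≤ 1 := fun u => by rw [sq_le_one_iff_abs_le_one]; exact mz_r_le H g u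
  have hint : ∀ (a b : ℝ), IntervalIntegrable (fun u => mz_r H g u ^ 2) volume a b := by
    intro a b
    rw [intervalIntegrable_iff]
    refine Measure.integrableOn_of_bounded (M := 1) (by simp) ((mz_r_meas H g).pow_const 2).aestronglyMeasurable (Eventually.of_forall fun x => ?_)
    rw [Real.norm_eq_abs, abs_of_nonneg (sq_nonneg _)]
    exact hb x
  have htriv : ∀ a b : ℝ, a ≤ b → ∫ u in a..b, mz_r H g u ^ 2 ≤ b - a := by
    intro a b hab
    have := intervalIntegral.integral_mono_on hab (hint a b) (intervalIntegrable_const (c := (1:ℝ))) (fun x _ => hb x)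
    simpa using this
  by_cases hc : (g : ℝ) ≤ H
  · have := htriv 0 g hg0.le
    linarith
  · push Not at hc
    rw [← intervalIntegral.integral_add_adjacent_intervals (hint 0 (g - H)) (hint (g - H) g)]
    have h1 := htriv (g - H) g (by linarith)
    have h2 : ∫ u in (0:ℝ)..(g - H), mz_r H g u ^ 2 ≤ ∫ u in (0:ℝ)..(g - H), (H / g) ^ 2 := by
      apply intervalIntegral.integral_mono_on_of_le_Ioo (by linarith) (hint _ _) intervalIntegrable_const
      intro u hu
      have : mz_r H g u = H / g := by
        unfold mz_r
        rw [Int.fract_eq_self.2, Int.fract_eq_self.2]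
        · ring
        · constructor
          · have := hu.1; positivity
          · rw [div_lt_one hg0]; linarith [hu.2]
        · constructor
          · have := hu.1; positivity
          · rw [div_lt_one hg0]; linarith [hu.2]
      rw [this]
    rw [intervalIntegral.integral_const, smul_eq_mul] at h2
    have h3 : (g - H - 0) * (H / g) ^ 2 ≤ H := by
      have : H / g ≤ 1 := by rw [div_le_one hg0]; linarith
      have h4 : 0 ≤ H / g := by positivity
      have h5 : (H / g) * g = H := by field_simp
      nlinarith [mul_nonneg h4 h4]
    linarith

def mz_f (g : ℝ → ℂ) (y u : ℝ) : ℂ :=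
  ∑ k ∈ Finset.Ioc 0 ⌊y⌋₊, mz_b g y k * ((Int.fract (u / k) : ℝ) : ℂ)

lemma mz_f_meas (g : ℝ → ℂ) (y : ℝ) : Measurable (mz_f g y) := by
  unfold mz_f
  refine Finset.measurable_sum _ fun k _ => ?_
  refine measurable_const.mul (Complex.measurable_ofReal.comp ?_)
  fun_prop

lemma mz_f_diff (g : ℝ → ℂ) (y u H : ℝ) :
    mz_f g y (u + H) - mz_f g y u = ∑ k ∈ Finset.Ioc 0 ⌊y⌋₊, mz_b g y k * ((mz_r H k u : ℝ) : ℂ) := by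
  unfold mz_f mz_r
  rw [← Finset.sum_sub_distrib]
  refine Finset.sum_congr rfl fun k _ => ?_
  push_cast; ring

lemma mz_b_le (g : ℝ → ℂ) (y : ℝ) (hy : 1 < y) (Bg : ℝ) (hBg : ∀ v ∈ Set.Icc (0:ℝ) 1, ‖g v‖ ≤ Bg)
    (k : ℕ) (hk : k ∈ Finset.Ioc 0 ⌊y⌋₊) : ‖mz_b g y k‖ ≤ Bg := by
  rw [Finset.mem_Ioc] at hk
  have hk0 : (0 : ℝ) < k := by exact_mod_cast hk.1
  have hky : (k : ℝ) ≤ y := (Nat.le_floor_iff (by linarith)).1 hk.2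
  have hl : 0 < Real.log y := Real.log_pos hy
  have hm : ‖((ArithmeticFunction.moebius k : ℤ) : ℂ)‖ ≤ 1 := by
    rw [Complex.norm_intCast]
    exact_mod_cast ArithmeticFunction.abs_moebius_le_one
  have hv : Real.log (y / k) / Real.log y ∈ Set.Icc (0:ℝ) 1 := by
    constructor
    · apply div_nonneg _ hl.le
      apply Real.log_nonneg
      rwa [one_le_div hk0]
    · rw [div_le_one hl]
      apply Real.log_le_log (by positivity)
      apply div_le_self (by linarith)
      exact_mod_cast hk.1
  unfold mz_b
  rw [norm_mul]
  calc _ ≤ 1 * Bg := mul_le_mul hm (hBg _ hv) (norm_nonneg _) zero_le_one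
    _ = _ := one_mul _

lemma mz_D {g g1 g2 : ℝ → ℂ} {A : ℝ} (hg : mz_C2 g g1 g2 A) (y : ℝ) (hy : Real.exp 1 ≤ y)
    (U : ℝ) (hU : y ^ 2 ≤ U) (H : ℝ) (hH : 0 < H) (Bg : ℝ) (hBg : ∀ v ∈ Set.Icc (0:ℝ) 1, ‖g v‖ ≤ Bg) :
    ∫ u in Set.Ioc U (2 * U), ‖mz_f g y (u + H) - mz_f g y u‖ ^ 2 ≤
      Real.exp (4 * π) * (U * (400 * mz_CA * A ^ 2 * H / Real.log y + 3 * Bg ^ 2 * y ^ 2 * Real.exp (-π * (U / y ^ 2)))) := by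
  have hy1 : 1 < y := by linarith [Real.add_one_le_exp (1:ℝ)]
  have hy0 : 0 < y := by linarith
  have hU0 : 0 < U := by nlinarith
  have hBg0 : 0 ≤ Bg := (norm_nonneg _).trans (hBg 0 (by simp))
  set N := ⌊y⌋₊ with hN
  set w : ℝ → ℝ := fun u => Real.exp (-π * (u / U) ^ 2) with hw
  have hwi : Integrable w := mz_gauss_int U hU0
  set D : ℝ → ℂ := fun u => ∑ k ∈ Finset.Ioc 0 N, mz_b g y k * ((mz_r H k u : ℝ) : ℂ) with hD
  have hrr : ∀ h k : ℕ, Integrable (fun u => w u * (mz_r H h u * mz_r H k u)) := by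
    intro h k
    refine hwi.mul_bdd (c := 1) ((mz_r_meas H h).mul (mz_r_meas H k)).aestronglyMeasurable (Eventually.of_forall fun x => ?_)
    rw [norm_mul]
    exact mul_le_one₀ (mz_r_le H h x) (norm_nonneg _) (mz_r_le H k x)
  have hexp : ∀ u, ((w u * ‖D u‖ ^ 2 : ℝ) : ℂ) = ∑ h ∈ Finset.Ioc 0 N, ∑ k ∈ Finset.Ioc 0 N,
      mz_b g y h * (starRingEnd ℂ) (mz_b g y k) * ((w u * (mz_r H h u * mz_r H k u) : ℝ) : ℂ) := by
    intro u
    push_cast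
    rw [← Complex.mul_conj', hD]
    simp only
    rw [map_sum, Finset.sum_mul_sum, Finset.mul_sum]
    refine Finset.sum_congr rfl fun h _ => ?_
    rw [Finset.mul_sum]
    refine Finset.sum_congr rfl fun k _ => ?_
    rw [map_mul, Complex.conj_ofReal]
    ring
  have hint2 : ∀ h k : ℕ, Integrable (fun u => mz_b g y h * (starRingEnd ℂ) (mz_b g y k) * ((w u * (mz_r H h u * mz_r H k u) : ℝ) : ℂ)) := by
    intro h k
    exact ((hrr h k).ofReal (𝕜 := ℂ)).const_mul _
  have hDint : Integrable (fun u => w u * ‖D u‖ ^ 2) := by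
    have : Integrable (fun u => ((w u * ‖D u‖ ^ 2 : ℝ) : ℂ)) := by
      simp_rw [hexp]
      exact integrable_finsetSum _ fun h _ => integrable_finsetSum _ fun k _ => hint2 h k
    have := this.re
    simpa only [RCLike.re_eq_complex_re, Complex.ofReal_re] using this
  have hmain : ((∫ u, w u * ‖D u‖ ^ 2 : ℝ) : ℂ) = ∑ h ∈ Finset.Ioc 0 N, ∑ k ∈ Finset.Ioc 0 N,
      mz_b g y h * (starRingEnd ℂ) (mz_b g y k) * ((∫ u, w u * (mz_r H h u * mz_r H k u) : ℝ) : ℂ) := by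
    rw [← integral_complex_ofReal]
    simp_rw [hexp]
    rw [integral_finsetSum _ (fun h _ => integrable_finsetSum _ fun k _ => hint2 h k)]
    refine Finset.sum_congr rfl fun h _ => ?_
    rw [integral_finsetSum _ (fun k _ => hint2 h k)]
    refine Finset.sum_congr rfl fun k _ => ?_
    rw [integral_const_mul, integral_complex_ofReal]
  set E : ℕ → ℝ := fun d => d * ∫ u in (0:ℝ)..d, mz_r H d u ^ 2 with hE
  have hEb : ∀ d ∈ Finset.Ioc 0 N, |E d| ≤ 2 * H * d := by
    intro d hd
    have hd0 := (Finset.mem_Ioc.1 hd).1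
    rw [hE]
    simp only
    rw [abs_of_nonneg (mul_nonneg (by positivity) (intervalIntegral.integral_nonneg (by positivity) fun u _ => sq_nonneg _)), mul_comm]
    exact mul_le_mul_of_nonneg_right (mz_E_bound H hH d hd0) (by positivity)
  have hK := mz_K hg y hy E (2 * H) (by positivity) hEb
  set ε := Real.exp (-π * (U / y ^ 2)) with hε
  have herr : ∀ h ∈ Finset.Ioc 0 N, ∀ k ∈ Finset.Ioc 0 N,
      |(∫ u, w u * (mz_r H h u * mz_r H k u)) - U * (E (Nat.gcd h k) / (h * k))| ≤ U * (3 * ε) := by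
    intro h hh k hk
    have hh0 := (Finset.mem_Ioc.1 hh).1
    have hk0 := (Finset.mem_Ioc.1 hk).1
    have hhy : (h : ℝ) ≤ y := (Nat.le_floor_iff hy0.le).1 (Finset.mem_Ioc.1 hh).2
    have hky : (k : ℝ) ≤ y := (Nat.le_floor_iff hy0.le).1 (Finset.mem_Ioc.1 hk).2
    have hh0' : (0:ℝ) < h := by exact_mod_cast hh0
    have hk0' : (0:ℝ) < k := by exact_mod_cast hk0
    have hhk : (h : ℝ) * k ≤ y ^ 2 := by rw [pow_two]; exact mul_le_mul hhy hky hk0'.le hy0.le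
    have hph : Function.Periodic (mz_r H h) h := mz_r_per H h hh0
    have hpk : Function.Periodic (mz_r H k) k := mz_r_per H k hk0
    have := mz_gauss_perQ U (h * k) (by positivity) (hhk.trans hU) (fun u => mz_r H h u * mz_r H k u)
      ((mz_r_meas H h).mul (mz_r_meas H k)) (fun x => by
        rw [abs_mul]; exact mul_le_one₀ (mz_r_le H h x) (abs_nonneg _) (mz_r_le H k x)) (fun x => by
        have e1 := hpk.nat_mul h x
        have e2 := hph.nat_mul k x
        rw [mul_comm] at e2
        rw [e1, e2])
    rw [mz_I H h k hh0 hk0] at this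
    have e : U / (h * k) * (((Nat.gcd h k : ℕ) : ℝ) * ∫ u in (0:ℝ)..(Nat.gcd h k), mz_r H (Nat.gcd h k) u ^ 2) = U * (E (Nat.gcd h k) / (h * k)) := by
      rw [hE]; ring
    rw [e] at this
    refine this.trans ?_
    gcongr
    rw [hε, Real.exp_le_exp]
    have : U / y ^ 2 ≤ U / (h * k) := by gcongr
    nlinarith [Real.pi_pos]
  have hfin : (∫ u, w u * ‖D u‖ ^ 2) ≤ U * (400 * mz_CA * A ^ 2 * H / Real.log y + 3 * Bg ^ 2 * y ^ 2 * ε) := by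
    have h1 : (∫ u, w u * ‖D u‖ ^ 2) ≤ ‖((∫ u, w u * ‖D u‖ ^ 2 : ℝ) : ℂ)‖ := by
      rw [Complex.norm_real]; exact le_abs_self _
    refine h1.trans ?_
    have h2 : ((∫ u, w u * ‖D u‖ ^ 2 : ℝ) : ℂ) = U * (∑ h ∈ Finset.Ioc 0 N, ∑ k ∈ Finset.Ioc 0 N, mz_b g y h * (starRingEnd ℂ) (mz_b g y k) * ((E (Nat.gcd h k)/(h*k):ℝ):ℂ))
        + ∑ h ∈ Finset.Ioc 0 N, ∑ k ∈ Finset.Ioc 0 N, mz_b g y h * (starRingEnd ℂ) (mz_b g y k) * (((∫ u, w u * (mz_r H h u * mz_r H k u)) - U * (E (Nat.gcd h k) / (h * k)) : ℝ) : ℂ) := by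
      rw [hmain, Finset.mul_sum, ← Finset.sum_add_distrib]
      refine Finset.sum_congr rfl fun h _ => ?_
      rw [Finset.mul_sum, ← Finset.sum_add_distrib]
      refine Finset.sum_congr rfl fun k _ => ?_
      push_cast; ring
    rw [h2]
    refine (norm_add_le _ _).trans ?_
    rw [mul_add]
    apply add_le_add
    · rw [norm_mul, Complex.norm_real, Real.norm_eq_abs, abs_of_pos hU0]
      apply mul_le_mul_of_nonneg_left _ hU0.le
      refine hK.trans (le_of_eq ?_)
      ring
    · have hb := mz_b_le g y hy1 Bg hBg
      calc _ ≤ ∑ h ∈ Finset.Ioc 0 N, ∑ k ∈ Finset.Ioc 0 N, Bg * Bg * (U * (3 * ε)) := by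
            refine (norm_sum_le _ _).trans (Finset.sum_le_sum fun h hh => ?_)
            refine (norm_sum_le _ _).trans (Finset.sum_le_sum fun k hk => ?_)
            rw [norm_mul, norm_mul, RCLike.norm_conj, Complex.norm_real, Real.norm_eq_abs]
            exact mul_le_mul (mul_le_mul (hb h hh) (hb k hk) (norm_nonneg _) hBg0) (herr h hh k hk) (abs_nonneg _) (by positivity)
        _ = (N : ℝ) ^ 2 * (Bg * Bg * (U * (3 * ε))) := by
            simp; ring
        _ ≤ y ^ 2 * (Bg * Bg * (U * (3 * ε))) := by
            gcongr
            exact Nat.floor_le hy0.le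
        _ = _ := by ring
  have hlow : ∫ u in Set.Ioc U (2 * U), ‖mz_f g y (u + H) - mz_f g y u‖ ^ 2 ≤ Real.exp (4 * π) * ∫ u, w u * ‖D u‖ ^ 2 := by
    rw [← integral_const_mul]
    refine le_trans ?_ (setIntegral_le_integral (s := Set.Ioc U (2 * U)) (hDint.const_mul _) (Eventually.of_forall fun u => ?_))
    · apply integral_mono_of_nonneg (Eventually.of_forall fun u => sq_nonneg _) (hDint.const_mul _).integrableOn
      refine (ae_restrict_iff' measurableSet_Ioc).2 (Eventually.of_forall fun u hu => ?_)
      simp only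
      rw [mz_f_diff, ← mul_assoc]
      have : 1 ≤ Real.exp (4 * π) * w u := by
        rw [hw]; simp only
        rw [← Real.exp_add]
        apply Real.one_le_exp
        have h1 : u / U ≤ 2 := by rw [div_le_iff₀ hU0]; exact hu.2
        have h2 : 0 ≤ u / U := div_nonneg (hU0.le.trans hu.1.le) hU0.le
        nlinarith [Real.pi_pos, mul_le_mul h1 h1 h2 (by norm_num)]
      exact le_mul_of_one_le_left (sq_nonneg _) this
    · simp only [Pi.zero_apply]
      rw [hw]; positivity
  exact hlow.trans (mul_le_mul_of_nonneg_left hfin (Real.exp_pos _).le)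

open scoped FourierTransform SchwartzMap in
lemma mz_planch (f : ℝ → ℂ) (h1 : Integrable f) (h2 : MemLp f 2 volume) :
    eLpNorm (𝓕 f : ℝ → ℂ) 2 volume = eLpNorm f 2 volume := by
  set F2 := h2.toLp with hF2
  have hT := Lp.fourier_toTemperedDistribution_eq F2
  have hcont : Continuous (𝓕 f : ℝ → ℂ) :=
    VectorFourier.fourierIntegral_continuous Real.continuous_fourierChar (by exact continuous_inner) h1
  have hae : ∀ᵐ x ∂(volume : Measure ℝ), (𝓕 f : ℝ → ℂ) x = ((𝓕 F2 : Lp ℂ 2 volume) : ℝ → ℂ) x := by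
    apply ae_eq_of_integral_contDiff_smul_eq hcont.locallyIntegrable
      ((Lp.memLp (𝓕 F2)).locallyIntegrable (by norm_num))
    intro g hg hgs
    have hg₁ : HasCompactSupport (Complex.ofRealCLM ∘ g) := hgs.comp_left rfl
    have hg₂ : ContDiff ℝ (⊤ : ℕ∞) (Complex.ofRealCLM ∘ g) := by fun_prop
    set φ : 𝓢(ℝ, ℂ) := hg₁.toSchwartzMap hg₂ with hφ
    have hφg : ∀ x, φ x = (g x : ℂ) := fun x => rfl
    have e1 := congrArg (fun T => T φ) hT
    simp only [TemperedDistribution.fourier_apply, Lp.toTemperedDistribution_apply] at e1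
    have e2 : ∫ x, g x • ((𝓕 F2 : Lp ℂ 2 volume) : ℝ → ℂ) x = ∫ x, φ x • ((𝓕 F2 : Lp ℂ 2 volume) : ℝ → ℂ) x := by
      congr 1
    rw [e2, ← e1]
    have e3 : ∫ x, (𝓕 φ) x • (F2 : ℝ → ℂ) x = ∫ x, (𝓕 φ) x • f x := by
      apply integral_congr_ae
      filter_upwards [h2.coeFn_toLp] with x hx
      rw [hF2, hx]
    rw [e3, SchwartzMap.fourier_coe]
    have e4 := VectorFourier.integral_fourierIntegral_smul_eq_flip (μ := volume) (ν := volume) (L := innerₗ ℝ) (f := φ) (g := f) Real.continuous_fourierChar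
      (by exact continuous_inner) φ.integrable h1
    rw [flip_innerₗ] at e4
    exact e4.symm
  rw [eLpNorm_congr_ae hae]
  have e5 := Lp.norm_fourier_eq F2
  rw [Lp.norm_def, Lp.norm_def, ENNReal.toReal_eq_toReal_iff' (Lp.eLpNorm_ne_top _) (Lp.eLpNorm_ne_top _)] at e5
  rw [e5]
  exact eLpNorm_congr_ae h2.coeFn_toLp

lemma mz_lint_exp (φ : ℝ → ENNReal) :
    ∫⁻ u in Set.Ioi (0:ℝ), φ u = ∫⁻ v : ℝ, ENNReal.ofReal (Real.exp (-v)) * φ (Real.exp (-v)) := by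
  have himg : (fun v : ℝ => Real.exp (-v)) '' Set.univ = Set.Ioi 0 := by
    ext u
    simp only [Set.image_univ, Set.mem_range, Set.mem_Ioi]
    constructor
    · rintro ⟨v, rfl⟩; exact Real.exp_pos _
    · intro hu; exact ⟨-Real.log u, by rw [neg_neg, Real.exp_log hu]⟩
  rw [← himg, lintegral_image_eq_lintegral_abs_deriv_mul (f' := fun v => -Real.exp (-v)) MeasurableSet.univ]
  · rw [Measure.restrict_univ]
    simp only [abs_neg, abs_of_pos (Real.exp_pos _)]
  · intro x _
    have := (Real.hasDerivAt_exp (-x)).comp x (hasDerivAt_neg x)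
    rw [mul_neg_one] at this
    exact this.hasDerivWithinAt
  · intro a _ b _ hab
    simpa using hab

lemma mz_lint_scale (φ : ℝ → ENNReal) (c : ℝ) (hc : 0 < c) :
    ∫⁻ t : ℝ, φ (t / c) = ENNReal.ofReal c * ∫⁻ t : ℝ, φ t := by
  have himg : (fun v : ℝ => v / c) '' Set.univ = Set.univ := by
    rw [Set.image_univ, Set.range_eq_univ]
    intro x; exact ⟨x * c, by field_simp⟩
  have h := lintegral_image_eq_lintegral_abs_deriv_mul (f := fun v : ℝ => v / c) (f' := fun v => 1 / c) MeasurableSet.univ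
    (fun x _ => ((hasDerivAt_id x).div_const c).hasDerivWithinAt) (fun a _ b _ hab => by
      simp only at hab; field_simp at hab; exact hab) φ
  rw [himg, Measure.restrict_univ, lintegral_const_mul' _ _ (by simp)] at h
  rw [h, ← mul_assoc, ← ENNReal.ofReal_mul hc.le, abs_of_pos (by positivity), mul_one_div_cancel hc.ne', ENNReal.ofReal_one, one_mul]

lemma mz_L2 (G : ℝ → ℂ) : eLpNorm G 2 volume ^ 2 = ∫⁻ x, ‖G x‖ₑ ^ 2 := by
  have := eLpNorm_nnreal_pow_eq_lintegral (μ := volume) (f := G) (p := 2) (by norm_num)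
  simpa using this

open scoped FourierTransform in
lemma mz_mellinP (F : ℝ → ℂ) (hF : Measurable F) (τ : ℝ) (hc : MellinConvergent F (τ : ℂ)) :
    ∫⁻ t : ℝ, ‖mellin F (τ + t * Complex.I)‖ₑ ^ 2 ≤
      ENNReal.ofReal (2 * π) * ∫⁻ u in Set.Ioi (0:ℝ), ‖F u‖ₑ ^ 2 * ENNReal.ofReal (u ^ (2 * τ - 1)) := by
  set G : ℝ → ℂ := fun v => Real.exp (-τ * v) • F (Real.exp (-v)) with hG
  have hGm : Measurable G := by rw [hG]; fun_prop
  have hnorm : ∀ v, ‖G v‖ₑ ^ 2 = ENNReal.ofReal (Real.exp (-v)) * (‖F (Real.exp (-v))‖ₑ ^ 2 * ENNReal.ofReal ((Real.exp (-v)) ^ (2 * τ - 1))) := by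
    intro v
    rw [hG]
    simp only
    rw [enorm_smul, mul_pow, Real.enorm_eq_ofReal (Real.exp_pos _).le, ← ENNReal.ofReal_pow (Real.exp_pos _).le,
      ← Real.exp_nat_mul, ← Real.exp_mul]
    have hr : ∀ a b c : ENNReal, a * (b * c) = (a * c) * b := fun a b c => by ring
    rw [hr, ← ENNReal.ofReal_mul (Real.exp_pos _).le, ← Real.exp_add]
    congr 3
    push_cast; ring
  have hRHS : ∫⁻ u in Set.Ioi (0:ℝ), ‖F u‖ₑ ^ 2 * ENNReal.ofReal (u ^ (2 * τ - 1)) = ∫⁻ v, ‖G v‖ₑ ^ 2 := by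
    rw [mz_lint_exp]
    simp_rw [hnorm]
  rw [hRHS]
  have hLHS : ∫⁻ t : ℝ, ‖mellin F (τ + t * Complex.I)‖ₑ ^ 2 = ENNReal.ofReal (2 * π) * ∫⁻ t, ‖(𝓕 G : ℝ → ℂ) t‖ₑ ^ 2 := by
    rw [← mz_lint_scale (fun t => ‖(𝓕 G : ℝ → ℂ) t‖ₑ ^ 2) (2 * π) (by positivity)]
    simp_rw [mellin_eq_fourier]
    simp [hG]
  rw [hLHS]
  by_cases htop : ∫⁻ v, ‖G v‖ₑ ^ 2 = ⊤
  · rw [htop, ENNReal.mul_top (by simp [Real.pi_pos])]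
    exact le_top
  have hGi : Integrable G := by
    refine ⟨hGm.aestronglyMeasurable, ?_⟩
    have h2 := hc.2
    rw [HasFiniteIntegral, mz_lint_exp] at h2
    rw [HasFiniteIntegral]
    refine lt_of_eq_of_lt (lintegral_congr fun v => ?_) h2
    rw [hG]
    simp only
    rw [enorm_smul, enorm_smul, ← mul_assoc]
    congr 1
    rw [Real.enorm_eq_ofReal (Real.exp_pos _).le, ← ofReal_norm_eq_enorm, Complex.norm_cpow_eq_rpow_re_of_pos (Real.exp_pos _),
      ← ENNReal.ofReal_mul (Real.exp_pos _).le, ← Real.exp_mul, ← Real.exp_add]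
    congr 2
    simp; ring
  have hG2 : MemLp G 2 volume := by
    refine ⟨hGm.aestronglyMeasurable, ?_⟩
    by_contra h
    rw [not_lt, top_le_iff] at h
    apply htop
    rw [← mz_L2, h]; simp
  have := mz_planch G hGi hG2
  rw [← mz_L2, ← mz_L2, this]

lemma mz_fr_meas : Measurable (fun u : ℝ => ((Int.fract u : ℝ) : ℂ)) := Complex.measurable_ofReal.comp measurable_fract

lemma mz_bdd_locint (F : ℝ → ℂ) (hF : Measurable F) (hb : ∀ x, ‖F x‖ ≤ 1) : LocallyIntegrableOn F (Set.Ioi 0) := by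
  apply LocallyIntegrable.locallyIntegrableOn
  intro x
  refine ⟨Metric.ball x 1, Metric.ball_mem_nhds x one_pos, ?_⟩
  exact Measure.integrableOn_of_bounded (M := 1) (by simp) hF.aestronglyMeasurable (Eventually.of_forall hb)

lemma mz_fr_norm (u : ℝ) : ‖((Int.fract u : ℝ) : ℂ)‖ ≤ 1 := by
  rw [Complex.norm_real, Real.norm_eq_abs, abs_of_nonneg (Int.fract_nonneg u)]
  exact (Int.fract_lt_one u).le

lemma mz_fr_conv (s : ℂ) (h0 : 0 < s.re) (h1 : s.re < 1) : MellinConvergent (fun u : ℝ => ((Int.fract u : ℝ) : ℂ)) (-s) := by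
  refine mellinConvergent_of_isBigO_rpow (a := 0) (b := -1) (mz_bdd_locint _ mz_fr_meas mz_fr_norm) ?_ (by simpa using h0) ?_ (by simpa using h1)
  · refine Asymptotics.IsBigO.of_bound 1 (Eventually.of_forall fun u => ?_)
    simpa using mz_fr_norm u
  · refine Asymptotics.IsBigO.of_bound 1 ?_
    filter_upwards [Ioo_mem_nhdsGT (zero_lt_one (α := ℝ))] with u hu
    rw [Int.fract_eq_self.2 ⟨hu.1.le, hu.2⟩]
    simp

def mz_phi (u : ℝ) : ℂ := Set.indicator (Set.Ioi 1) (fun u : ℝ => ((Int.fract u : ℝ) : ℂ)) u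

lemma mz_phi_norm (u : ℝ) : ‖mz_phi u‖ ≤ 1 := by
  unfold mz_phi
  exact (norm_indicator_le_norm_self _ _).trans (mz_fr_norm u)

lemma mz_phi_meas : Measurable mz_phi := mz_fr_meas.indicator measurableSet_Ioi

lemma mz_phi_top : mz_phi =O[atTop] (fun u : ℝ => u ^ (-(0:ℝ))) := by
  refine Asymptotics.IsBigO.of_bound 1 (Eventually.of_forall fun u => ?_)
  simpa using mz_phi_norm u

lemma mz_phi_bot (b : ℝ) : mz_phi =O[nhdsWithin 0 (Set.Ioi 0)] (fun u : ℝ => u ^ (-b)) := by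
  refine Asymptotics.IsBigO.of_bound 1 ?_
  filter_upwards [Ioo_mem_nhdsGT (zero_lt_one (α := ℝ))] with u hu
  unfold mz_phi
  rw [Set.indicator_of_notMem (by simp [hu.2.le])]
  simp

lemma mz_phi_conv (z : ℂ) (hz : z.re < 0) : MellinConvergent mz_phi z :=
  mellinConvergent_of_isBigO_rpow (a := 0) (b := z.re - 1) (mz_bdd_locint _ mz_phi_meas mz_phi_norm) mz_phi_top hz (mz_phi_bot _) (by linarith)

lemma mz_phi_diff (z : ℂ) (hz : z.re < 0) : DifferentiableAt ℂ (mellin mz_phi) z :=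
  mellin_differentiableAt_of_isBigO_rpow (a := 0) (b := z.re - 1) (mz_bdd_locint _ mz_phi_meas mz_phi_norm) mz_phi_top hz (mz_phi_bot _) (by linarith)

lemma mz_phi_eq (s : ℂ) : mellin mz_phi (-s) = ∫ t in Set.Ioi (1:ℝ), ((Int.fract t : ℝ) : ℂ) * (t : ℂ) ^ (-(s + 1)) := by
  rw [mellin]
  have : ∀ t : ℝ, (t : ℂ) ^ (-s - 1) • mz_phi t = Set.indicator (Set.Ioi 1) (fun t : ℝ => ((Int.fract t : ℝ) : ℂ) * (t : ℂ) ^ (-(s + 1))) t := by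
    intro t
    unfold mz_phi
    by_cases ht : t ∈ Set.Ioi (1:ℝ)
    · rw [Set.indicator_of_mem ht, Set.indicator_of_mem ht, smul_eq_mul, mul_comm]; congr 2; ring
    · rw [Set.indicator_of_notMem ht, Set.indicator_of_notMem ht, smul_zero]
  simp_rw [this]
  rw [setIntegral_indicator measurableSet_Ioi, Set.Ioi_inter_Ioi]
  simp

lemma mz_zeta_big (s : ℂ) (hs : 1 < s.re) : riemannZeta s = s / (s - 1) - s * mellin mz_phi (-s) := by
  have hs1 : s - 1 ≠ 0 := by intro h; rw [sub_eq_zero] at h; rw [h] at hs; simp at hs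
  have hs0 : s ≠ 0 := by intro h; rw [h] at hs; simp at hs; linarith
  have h1 := LSeries_eq_mul_integral_of_nonneg (fun _ => (1:ℝ)) zero_le_one hs (by
    simp only [Finset.sum_const, Nat.card_Icc, Real.rpow_one]
    simp
    exact Asymptotics.isBigO_refl _ _) (fun _ => zero_le_one)
  have h2 : LSeries (fun _ => ((1:ℝ):ℂ)) s = riemannZeta s := by
    have := LSeries_one_eq_riemannZeta hs
    rw [← this]
    congr 1
    try (funext n; simp)
  rw [h2] at h1
  rw [h1, mz_phi_eq]
  have hc := integral_Ioi_cpow_of_lt (a := -s) (by simpa using hs) (zero_lt_one (α := ℝ))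
  have hci := integrableOn_Ioi_cpow_of_lt (a := -s) (by simpa using hs) (zero_lt_one (α := ℝ))
  have hpi := mz_phi_conv (-s) (by simp; linarith)
  have hpi2 : IntegrableOn (fun t : ℝ => ((Int.fract t : ℝ) : ℂ) * (t : ℂ) ^ (-(s + 1))) (Set.Ioi 1) := by
    have := hpi.mono_set (Set.Ioi_subset_Ioi (zero_le_one (α := ℝ)))
    refine this.congr_fun (fun t ht => ?_) measurableSet_Ioi
    unfold mz_phi
    simp only
    rw [Set.indicator_of_mem ht, smul_eq_mul, mul_comm]; congr 2; ring
  have e : ∫ t in Set.Ioi (1:ℝ), (∑ k ∈ Finset.Icc 1 ⌊t⌋₊, ((1:ℝ):ℂ)) * (t:ℂ) ^ (-(s + 1)) =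
      ∫ t in Set.Ioi (1:ℝ), ((t:ℂ) ^ (-s) - ((Int.fract t : ℝ) : ℂ) * (t : ℂ) ^ (-(s + 1))) := by
    apply setIntegral_congr_fun measurableSet_Ioi
    intro t ht
    have ht0 : (0:ℝ) < t := lt_trans one_pos ht
    simp only
    have e1 : (∑ k ∈ Finset.Icc 1 ⌊t⌋₊, ((1:ℝ):ℂ)) = (t : ℂ) - ((Int.fract t : ℝ) : ℂ) := by
      rw [Finset.sum_const, Nat.card_Icc, Int.fract]
      rw [← natCast_floor_eq_intCast_floor ht0.le]
      push_cast
      simp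
    have e2 : (t:ℂ) ^ (-s) = t * (t:ℂ) ^ (-(s+1)) := by
      rw [show -s = 1 + -(s+1) by ring, Complex.cpow_add _ _ (by exact_mod_cast ht0.ne'), Complex.cpow_one]
    rw [e1, e2]; ring
  rw [e, integral_sub hci hpi2, hc]
  have : -s + 1 ≠ 0 := by intro h; apply hs1; linear_combination -h
  rw [mul_sub]
  congr 1
  simp
  rw [show -s + 1 = -(s - 1) by ring, neg_div_neg_eq]
  field_simp

lemma mz_zeta_up (s : ℂ) (hs : 0 < s.re) (hi : 0 < s.im) : riemannZeta s = s / (s - 1) - s * mellin mz_phi (-s) := by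
  set U : Set ℂ := {z | 0 < z.re ∧ 0 < z.im} with hU
  have hUo : IsOpen U := (isOpen_lt continuous_const Complex.continuous_re).inter (isOpen_lt continuous_const Complex.continuous_im)
  have hUc : Convex ℝ U := (convex_halfSpace_re_gt 0).inter (convex_halfSpace_im_gt 0)
  have hne : ∀ z ∈ U, z ≠ 1 := by
    rintro z ⟨_, hz⟩ rfl; simp at hz
  have hf : AnalyticOnNhd ℂ riemannZeta U := by
    apply DifferentiableOn.analyticOnNhd _ hUo
    intro z hz
    exact (differentiableAt_riemannZeta (hne z hz)).differentiableWithinAt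
  have hg : AnalyticOnNhd ℂ (fun s => s / (s - 1) - s * mellin mz_phi (-s)) U := by
    apply DifferentiableOn.analyticOnNhd _ hUo
    intro z hz
    apply DifferentiableAt.differentiableWithinAt
    have h1 : DifferentiableAt ℂ (fun s => mellin mz_phi (-s)) z :=
      DifferentiableAt.comp (g := mellin mz_phi) (f := fun s : ℂ => -s) z (mz_phi_diff (-z) (by simpa using hz.1)) (by fun_prop)
    have h2 : z - 1 ≠ 0 := sub_ne_zero.2 (hne z hz)
    have h3 : DifferentiableAt ℂ (fun s : ℂ => s / (s - 1)) z := by fun_prop (disch := assumption)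
    exact h3.sub (differentiableAt_id.mul h1)
  have hz0 : (2 + Complex.I : ℂ) ∈ U := by simp [hU]
  refine hf.eqOn_of_preconnected_of_eventuallyEq hg hUc.isPreconnected hz0 ?_ (show s ∈ U from ⟨hs, hi⟩)
  have : {z : ℂ | 1 < z.re} ∈ nhds (2 + Complex.I) :=
    (isOpen_lt continuous_const Complex.continuous_re).mem_nhds (by simp)
  filter_upwards [this] with z hz
  exact mz_zeta_big z hz

lemma mz_fr_mellin (s : ℂ) (h0 : 0 < s.re) (h1 : s.re < 1) (hi : 0 < s.im) :
    mellin (fun u : ℝ => ((Int.fract u : ℝ) : ℂ)) (-s) = -riemannZeta s / s := by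
  have hs1 : s - 1 ≠ 0 := by intro h; rw [sub_eq_zero] at h; rw [h] at hi; simp at hi
  have hs0 : s ≠ 0 := by intro h; rw [h] at hi; simp at hi
  have hA := hasMellin_cpow_Ioc 1 (s := -s) (by simp; linarith)
  have hB : HasMellin mz_phi (-s) (mellin mz_phi (-s)) := ⟨mz_phi_conv _ (by simpa using h0), rfl⟩
  have hAB := hasMellin_add hA.1 hB.1
  have e : mellin (fun u : ℝ => ((Int.fract u : ℝ) : ℂ)) (-s) = mellin (fun t => (Set.Ioc (0:ℝ) 1).indicator (fun t : ℝ => (t:ℂ) ^ (1:ℂ)) t + mz_phi t) (-s) := by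
    rw [mellin, mellin]
    apply setIntegral_congr_ae measurableSet_Ioi
    have : ∀ᵐ t : ℝ, t ≠ 1 := by simp [ae_iff]
    filter_upwards [this] with t ht ht0
    congr 1
    unfold mz_phi
    rcases lt_or_gt_of_ne ht with h | h
    · rw [Set.indicator_of_mem (show t ∈ Set.Ioc (0:ℝ) 1 from ⟨ht0, h.le⟩), Set.indicator_of_notMem (by simp [h.le]), Int.fract_eq_self.2 ⟨le_of_lt ht0, h⟩]
      simp
    · rw [Set.indicator_of_notMem (by simp [h]), Set.indicator_of_mem (show t ∈ Set.Ioi (1:ℝ) from h), zero_add]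
  rw [e, hAB.2, hA.2, mz_zeta_up s h0 hi]
  have : -s + 1 ≠ 0 := by intro h; apply hs1; linear_combination -h
  field_simp
  ring

def mz_MB (g : ℝ → ℂ) (y : ℝ) (s : ℂ) : ℂ :=
  ∑ k ∈ Finset.Ioc 0 ⌊y⌋₊, mz_b g y k * (k : ℂ) ^ (-s)

lemma mz_hasMellin_sum (S : Finset ℕ) (F : ℕ → ℝ → ℂ) (s : ℂ) (h : ∀ k ∈ S, MellinConvergent (F k) s) :
    HasMellin (fun u => ∑ k ∈ S, F k u) s (∑ k ∈ S, mellin (F k) s) := by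
  classical
  induction S using Finset.induction_on with
  | empty =>
    refine ⟨?_, by simp [mellin]⟩
    simp [MellinConvergent]
  | insert a S ha ih =>
    have h1 := ih fun k hk => h k (Finset.mem_insert_of_mem hk)
    have h2 := hasMellin_add (h a (Finset.mem_insert_self a S)) h1.1
    rw [h1.2] at h2
    simp only [Finset.sum_insert ha]
    exact h2

lemma mz_frk_eq (k : ℕ) : (fun u : ℝ => ((Int.fract (u / k) : ℝ) : ℂ)) = fun u : ℝ => (fun v : ℝ => ((Int.fract v : ℝ) : ℂ)) ((k : ℝ)⁻¹ * u) := by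
  funext u
  simp only [div_eq_inv_mul]

lemma mz_f_hm (g : ℝ → ℂ) (y : ℝ) (s : ℂ) (h0 : 0 < s.re) (h1 : s.re < 1) :
    MellinConvergent (mz_f g y) (-s) ∧
    (0 < s.im → mellin (mz_f g y) (-s) = -riemannZeta s / s * mz_MB g y s) := by
  have hck : ∀ k ∈ Finset.Ioc 0 ⌊y⌋₊, MellinConvergent (fun u : ℝ => ((Int.fract (u / k) : ℝ) : ℂ)) (-s) := by
    intro k hk
    have hk0 : (0:ℝ) < k := by exact_mod_cast (Finset.mem_Ioc.1 hk).1
    rw [mz_frk_eq]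
    exact (MellinConvergent.comp_mul_left (f := fun v : ℝ => ((Int.fract v : ℝ) : ℂ)) (inv_pos.2 hk0)).2 (mz_fr_conv s h0 h1)
  have hs := mz_hasMellin_sum (Finset.Ioc 0 ⌊y⌋₊) (fun k u => mz_b g y k • ((Int.fract (u / k) : ℝ) : ℂ)) (-s)
    (fun k hk => (hck k hk).const_smul _)
  refine ⟨hs.1, fun hi => ?_⟩
  have e : mz_f g y = fun u => ∑ k ∈ Finset.Ioc 0 ⌊y⌋₊, mz_b g y k • ((Int.fract (u / k) : ℝ) : ℂ) := rfl
  rw [e, hs.2, mz_MB, Finset.mul_sum]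
  refine Finset.sum_congr rfl fun k hk => ?_
  have hk0 : (0:ℝ) < k := by exact_mod_cast (Finset.mem_Ioc.1 hk).1
  rw [mellin_const_smul, mz_frk_eq, mellin_comp_mul_left (fun v : ℝ => ((Int.fract v : ℝ) : ℂ)) _ (inv_pos.2 hk0), mz_fr_mellin s h0 h1 hi, smul_eq_mul, smul_eq_mul]
  have : (((k:ℝ)⁻¹ : ℝ) : ℂ) ^ (-(-s)) = (k:ℂ) ^ (-s) := by
    rw [neg_neg, Complex.cpow_neg, ← Complex.inv_cpow]
    · push_cast; rfl
    · rw [Complex.natCast_arg]; exact Real.pi_pos.ne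
  rw [this]; ring

lemma mz_d_hm (g : ℝ → ℂ) (y : ℝ) (x : ℝ) (hx : 0 < x) (s : ℂ) (h0 : 0 < s.re) (h1 : s.re < 1) :
    MellinConvergent (fun u => mz_f g y ((1 + x) * u) - mz_f g y u) (-s) ∧
    (0 < s.im → mellin (fun u => mz_f g y ((1 + x) * u) - mz_f g y u) (-s) =
      (((1 + x : ℝ) : ℂ) ^ s - 1) * (-riemannZeta s / s * mz_MB g y s)) := by
  obtain ⟨hc, hv⟩ := mz_f_hm g y s h0 h1
  have hx1 : 0 < 1 + x := by linarith
  have h := hasMellin_sub ((MellinConvergent.comp_mul_left hx1).2 hc) hc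
  refine ⟨h.1, fun hi => ?_⟩
  rw [h.2, mellin_comp_mul_left _ _ hx1, hv hi, neg_neg, smul_eq_mul]
  ring

lemma mz_E2 (g : ℝ → ℂ) (y σ x : ℝ) (hx : 0 < x) (h0 : 0 < σ) (h1 : σ < 1) :
    ∫⁻ t in Set.Ioi (0:ℝ), ‖(((1 + x : ℝ) : ℂ) ^ ((σ:ℂ) + t * Complex.I) - 1) *
      (-riemannZeta (σ + t * Complex.I) / (σ + t * Complex.I) * mz_MB g y (σ + t * Complex.I))‖ₑ ^ 2 ≤
    ENNReal.ofReal (2 * π) * ∫⁻ u in Set.Ioi (0:ℝ), ‖mz_f g y ((1 + x) * u) - mz_f g y u‖ₑ ^ 2 * ENNReal.ofReal (u ^ (-2 * σ - 1)) := by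
  have hm : Measurable (fun u => mz_f g y ((1 + x) * u) - mz_f g y u) :=
    ((mz_f_meas g y).comp (measurable_const_mul (1 + x))).sub (mz_f_meas g y)
  have h := mz_mellinP _ hm (-σ) (by
    have := (mz_d_hm g y x hx (σ:ℂ) (by simpa using h0) (by simpa using h1)).1
    push_cast
    exact this)
  rw [show 2 * -σ - 1 = -2 * σ - 1 by ring] at h
  refine le_trans ?_ h
  rw [← lintegral_neg_eq_self (μ := volume)]
  refine le_trans ?_ (setLIntegral_le_lintegral (Set.Ioi (0:ℝ)) _)
  refine setLIntegral_mono_ae' measurableSet_Ioi (Eventually.of_forall fun t ht => ?_)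
  apply le_of_eq
  have := (mz_d_hm g y x hx ((σ:ℂ) + t * Complex.I) (by simpa using h0) (by simpa using h1)).2 (by simpa using ht)
  rw [← this]
  congr 3
  push_cast; ring

lemma mz_sin_lb (θ : ℝ) (h0 : 1 / 8 ≤ θ) (h1 : θ ≤ 5 / 2) : 1 / 16 ≤ Real.sin θ := by
  have hp := Real.pi_gt_three
  have hp2 := Real.pi_lt_d2
  have key : ∀ z : ℝ, 1 / 8 ≤ z → z ≤ π / 2 → 1 / 16 ≤ Real.sin z := by
    intro z hz0 hz1
    have := Real.mul_le_sin (by linarith : 0 ≤ z) hz1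
    refine le_trans ?_ this
    rw [div_mul_eq_mul_div, le_div_iff₀ Real.pi_pos]
    nlinarith
  by_cases h : θ ≤ π / 2
  · exact key θ h0 h
  · rw [← Real.sin_pi_sub]
    have : (3.14:ℝ) < π := Real.pi_gt_d2
    exact key _ (by norm_num at this ⊢; linarith) (by linarith)

lemma mz_fac_lb (T σ t x : ℝ) (hT : 2 ≤ T) (hσ : 0 ≤ σ) (hx0 : 1 / (2 * T) ≤ x) (hx1 : x ≤ 1 / T)
    (ht0 : T / 2 ≤ t) (ht1 : t ≤ 5 * T / 2) :
    1 / 16 ≤ ‖((1 + x : ℝ) : ℂ) ^ ((σ:ℂ) + t * Complex.I) - 1‖ := by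
  have hxp : 0 < x := lt_of_lt_of_le (by positivity) hx0
  have hx1' : 0 < 1 + x := by linarith
  have hxT : x * T ≤ 1 := by rwa [le_div_iff₀ (by linarith)] at hx1
  have hxT0 : 1 ≤ x * (2 * T) := by rwa [div_le_iff₀ (by linarith)] at hx0
  refine le_trans ?_ (Complex.abs_im_le_norm _)
  have hl1 : Real.log (1 + x) ≤ x := by have := Real.log_le_sub_one_of_pos hx1'; linarith
  have hl0 : x / 2 ≤ Real.log (1 + x) := by
    have := Real.one_sub_inv_le_log_of_pos hx1'
    refine le_trans ?_ this
    have hh : 1 - (1 + x)⁻¹ = x / (1 + x) := by field_simp; ring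
    rw [hh]
    apply div_le_div_of_nonneg_left hxp.le (by linarith)
    nlinarith
  have e : (((1 + x : ℝ) : ℂ) ^ ((σ:ℂ) + t * Complex.I) - 1).im = Real.exp (σ * Real.log (1 + x)) * Real.sin (t * Real.log (1 + x)) := by
    rw [Complex.cpow_def_of_ne_zero (by exact_mod_cast hx1'.ne'), ← Complex.ofReal_log hx1'.le]
    rw [Complex.sub_im, Complex.exp_im]
    simp
    ring_nf
  rw [e]
  have hs := mz_sin_lb (t * Real.log (1 + x)) (by nlinarith) (by nlinarith)
  have he : 1 ≤ Real.exp (σ * Real.log (1 + x)) := Real.one_le_exp (mul_nonneg hσ (by linarith))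
  refine le_trans ?_ (le_abs_self _)
  nlinarith

lemma mz_E3 (g : ℝ → ℂ) (y σ x T : ℝ) (hT : 2 ≤ T) (hx0 : 1 / (2 * T) ≤ x) (hx1 : x ≤ 1 / T) (h0 : 0 < σ) (h1 : σ < 1) :
    ∫⁻ t in Set.Icc (T / 2) (5 * T / 2), ‖riemannZeta (σ + t * Complex.I) * mz_MB g y (σ + t * Complex.I)‖ₑ ^ 2 ≤
    ENNReal.ofReal (20000 * T ^ 2) * ∫⁻ u in Set.Ioi (0:ℝ), ‖mz_f g y ((1 + x) * u) - mz_f g y u‖ₑ ^ 2 * ENNReal.ofReal (u ^ (-2 * σ - 1)) := by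
  have hxp : 0 < x := lt_of_lt_of_le (by positivity) hx0
  have h := mz_E2 g y σ x hxp h0 h1
  set J := ∫⁻ u in Set.Ioi (0:ℝ), ‖mz_f g y ((1 + x) * u) - mz_f g y u‖ₑ ^ 2 * ENNReal.ofReal (u ^ (-2 * σ - 1))
  set Q : ℝ → ENNReal := fun t => ‖(((1 + x : ℝ) : ℂ) ^ ((σ:ℂ) + t * Complex.I) - 1) *
      (-riemannZeta (σ + t * Complex.I) / (σ + t * Complex.I) * mz_MB g y (σ + t * Complex.I))‖ₑ ^ 2 with hQ
  have hpt : ∀ t ∈ Set.Icc (T / 2) (5 * T / 2), ‖riemannZeta (σ + t * Complex.I) * mz_MB g y (σ + t * Complex.I)‖ₑ ^ 2 ≤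
      ENNReal.ofReal (2304 * T ^ 2) * Q t := by
    intro t ht
    have hfac := mz_fac_lb T σ t x hT h0.le hx0 hx1 ht.1 ht.2
    have htp : 0 < t := by linarith [ht.1]
    have hsne : (σ + t * Complex.I : ℂ) ≠ 0 := by
      intro h; have := congrArg Complex.im h; simp at this; linarith
    have hsn : ‖(σ + t * Complex.I : ℂ)‖ ≤ 3 * T := by
      refine (norm_add_le _ _).trans ?_
      simp [abs_of_pos h0, abs_of_pos htp]
      linarith [ht.2]
    have hsp : 0 < ‖(σ + t * Complex.I : ℂ)‖ := norm_pos_iff.2 hsne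
    rw [hQ]
    simp only [← ofReal_norm_eq_enorm]
    rw [← ENNReal.ofReal_pow (norm_nonneg _), ← ENNReal.ofReal_pow (norm_nonneg _), ← ENNReal.ofReal_mul (by positivity)]
    apply ENNReal.ofReal_le_ofReal
    rw [show 2304 * T ^ 2 = (48 * T) ^ 2 by ring, ← mul_pow]
    apply pow_le_pow_left₀ (norm_nonneg _)
    rw [norm_mul, norm_mul, norm_mul, norm_div, norm_neg]
    set A := ‖riemannZeta (σ + t * Complex.I)‖
    set B := ‖mz_MB g y (σ + t * Complex.I)‖
    set S := ‖(σ + t * Complex.I : ℂ)‖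
    set E := ‖((1 + x : ℝ) : ℂ) ^ ((σ:ℂ) + t * Complex.I) - 1‖
    have hAB : 0 ≤ A * B := mul_nonneg (norm_nonneg _) (norm_nonneg _)
    rw [show 48 * T * (E * (A / S * B)) = (48 * T * E / S) * (A * B) by ring]
    have : 1 ≤ 48 * T * E / S := by
      rw [le_div_iff₀ hsp]
      nlinarith
    nlinarith
  calc _ ≤ ∫⁻ t in Set.Icc (T / 2) (5 * T / 2), ENNReal.ofReal (2304 * T ^ 2) * Q t :=
        setLIntegral_mono_ae' measurableSet_Icc (Eventually.of_forall hpt)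
    _ = ENNReal.ofReal (2304 * T ^ 2) * ∫⁻ t in Set.Icc (T / 2) (5 * T / 2), Q t := lintegral_const_mul' _ _ ENNReal.ofReal_ne_top
    _ ≤ ENNReal.ofReal (2304 * T ^ 2) * ∫⁻ t in Set.Ioi (0:ℝ), Q t := by
        gcongr
        intro t ht; exact lt_of_lt_of_le (by linarith) ht.1
    _ ≤ ENNReal.ofReal (2304 * T ^ 2) * (ENNReal.ofReal (2 * π) * J) := by gcongr
    _ ≤ _ := by
        rw [← mul_assoc, ← ENNReal.ofReal_mul (by positivity)]
        refine mul_le_mul_left (ENNReal.ofReal_le_ofReal ?_) J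
        have := Real.pi_lt_d2
        nlinarith [sq_nonneg T]

lemma mz_wt (v L K σ : ℝ) (hv : 1 ≤ v) (hL : 0 < L) (hvL : Real.log v ≤ 4 * L) (hσ : |σ - 1 / 2| ≤ K / L) :
    v ^ (1 - 2 * σ) ≤ Real.exp (8 * K) := by
  rw [Real.rpow_def_of_pos (by linarith)]
  apply Real.exp_le_exp.2
  have h0 : 0 ≤ Real.log v := Real.log_nonneg hv
  have h1 : 1 - 2 * σ ≤ 2 * (K / L) := by have := (abs_le.1 hσ).1; linarith
  have hK : 0 ≤ K / L := (abs_nonneg _).trans hσ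
  calc Real.log v * (1 - 2 * σ) ≤ Real.log v * (2 * (K / L)) := by gcongr
    _ ≤ 4 * L * (2 * (K / L)) := by gcongr
    _ = 8 * K := by field_simp; ring

lemma mz_small_id (g : ℝ → ℂ) (y u H : ℝ) (hu : 0 ≤ u) (hH : 0 ≤ H) (hH1 : H ≤ 1) :
    mz_f g y (u + H) - mz_f g y u = mz_beta g y 1 * (H : ℂ) -
      if ⌊u⌋₊ < ⌊u + H⌋₊ then mz_c g y ⌊u + H⌋₊ else 0 := by
  have hle : ⌊u⌋₊ ≤ ⌊u + H⌋₊ := Nat.floor_mono (by linarith)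
  have hle2 : ⌊u + H⌋₊ ≤ ⌊u⌋₊ + 1 := by
    rw [← Nat.floor_add_one hu]; exact Nat.floor_mono (by linarith)
  have hfr : ∀ v : ℝ, 0 ≤ v → ∀ k : ℕ, ((Int.fract (v / k) : ℝ) : ℂ) = (v / k : ℂ) - ((⌊v⌋₊ / k : ℕ) : ℂ) := by
    intro v hv k
    rw [Int.fract, ← natCast_floor_eq_intCast_floor (by positivity), Nat.floor_div_natCast]
    push_cast; rfl
  unfold mz_f mz_beta mz_c
  rw [← Finset.sum_sub_distrib, Finset.sum_mul, Finset.filter_true_of_mem (fun k _ => one_dvd k)]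
  have : (if ⌊u⌋₊ < ⌊u + H⌋₊ then ∑ k ∈ Finset.Ioc 0 ⌊y⌋₊ with k ∣ ⌊u + H⌋₊, mz_b g y k else 0) =
      ∑ k ∈ Finset.Ioc 0 ⌊y⌋₊, mz_b g y k * (((⌊u + H⌋₊ / k : ℕ) : ℂ) - ((⌊u⌋₊ / k : ℕ) : ℂ)) := by
    split_ifs with h
    · have he : ⌊u + H⌋₊ = ⌊u⌋₊ + 1 := by omega
      rw [he, Finset.sum_filter]
      refine Finset.sum_congr rfl fun k _ => ?_
      rw [Nat.succ_div]
      split_ifs <;> simp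
    · have he : ⌊u + H⌋₊ = ⌊u⌋₊ := by omega
      rw [he]; simp
  rw [this, ← Finset.sum_sub_distrib]
  refine Finset.sum_congr rfl fun k hk => ?_
  rw [hfr _ (by linarith), hfr _ hu]
  push_cast
  ring

lemma mz_small_pt (g : ℝ → ℂ) (y u x : ℝ) (M : ℕ) (hu : 0 < u) (hx : 0 < x) (hux : x * u ≤ 1) (hM : (1 + x) * u ≤ M) :
    ‖mz_f g y ((1 + x) * u) - mz_f g y u‖ ^ 2 ≤ 2 * ‖mz_beta g y 1‖ ^ 2 * (x * u) ^ 2 +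
      ∑ m ∈ Finset.Ioc 0 M, (Set.Ico ((m:ℝ) / (1 + x)) m).indicator (fun _ => 2 * ‖mz_c g y m‖ ^ 2) u := by
  have hp : 0 < x * u := by positivity
  rw [show (1 + x) * u = u + x * u by ring, mz_small_id g y u (x * u) hu.le hp.le hux]
  have hnn : ∀ m ∈ Finset.Ioc 0 M, 0 ≤ (Set.Ico ((m:ℝ) / (1 + x)) m).indicator (fun _ => 2 * ‖mz_c g y m‖ ^ 2) u := by
    intro m _
    apply Set.indicator_nonneg
    intro _ _; positivity
  have key : ∀ a b : ℂ, ‖a - b‖ ^ 2 ≤ 2 * ‖a‖ ^ 2 + 2 * ‖b‖ ^ 2 := by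
    intro a b
    have := norm_sub_le a b
    have h2 : ‖a - b‖ ^ 2 ≤ (‖a‖ + ‖b‖) ^ 2 := pow_le_pow_left₀ (norm_nonneg _) this 2
    nlinarith [sq_nonneg (‖a‖ - ‖b‖)]
  refine (key _ _).trans (add_le_add (le_of_eq ?_) ?_)
  · rw [norm_mul, Complex.norm_real, Real.norm_eq_abs, abs_of_pos hp]; ring
  · split_ifs with h
    · set m := ⌊u + x * u⌋₊ with hm
      have hm1 : (m:ℝ) ≤ u + x * u := Nat.floor_le (by linarith)
      have hm2 : u < m := (Nat.floor_lt hu.le).1 h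
      have hmem : m ∈ Finset.Ioc 0 M := by
        rw [Finset.mem_Ioc]
        refine ⟨by omega, ?_⟩
        have : (m:ℝ) ≤ M := by linarith
        exact_mod_cast this
      have hin : u ∈ Set.Ico ((m:ℝ) / (1 + x)) m := by
        refine ⟨?_, hm2⟩
        rw [div_le_iff₀ (by linarith)]; linarith
      have := Finset.single_le_sum hnn hmem
      rwa [Set.indicator_of_mem hin] at this
    · simp only [norm_zero]
      have := Finset.sum_nonneg hnn
      simpa using this

lemma mz_small (g : ℝ → ℂ) (y x T σ K C B : ℝ) (M : ℕ) (hT : 3 ≤ T) (hx : 0 < x) (hx1 : x ≤ 1 / T)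
    (hσ0 : 1 / 4 ≤ σ) (hσ1 : σ ≤ 3 / 4) (hσ : |σ - 1 / 2| ≤ K / Real.log T)
    (hM : M = ⌊2 * T⌋₊) (hC : ∑ m ∈ Finset.Ioc 0 M, ‖mz_c g y m‖ ^ 2 / (m : ℝ) ≤ C) (hB : ‖mz_beta g y 1‖ ≤ B) :
    ∫⁻ u in Set.Ioc (0:ℝ) T, ‖mz_f g y ((1 + x) * u) - mz_f g y u‖ₑ ^ 2 * ENNReal.ofReal (u ^ (-2 * σ - 1)) ≤
      ENNReal.ofReal ((4 * B ^ 2 + 16 * C) * Real.exp (8 * K) / T) := by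
  have hT0 : 0 < T := by linarith
  have hL : 0 < Real.log T := Real.log_pos (by linarith)
  have hxT : x * T ≤ 1 := by rwa [le_div_iff₀ (by linarith)] at hx1
  have hB0 : 0 ≤ B := (norm_nonneg _).trans hB
  have hpt : ∀ u ∈ Set.Ioc (0:ℝ) T, ‖mz_f g y ((1 + x) * u) - mz_f g y u‖ₑ ^ 2 * ENNReal.ofReal (u ^ (-2 * σ - 1)) ≤
      ENNReal.ofReal (2 * B ^ 2 * x ^ 2 * u ^ (1 - 2 * σ)) +
      ∑ m ∈ Finset.Ioc 0 M, (Set.Ico ((m:ℝ) / (1 + x)) m).indicator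
        (fun _ => ENNReal.ofReal (16 * Real.exp (8 * K) * (‖mz_c g y m‖ ^ 2 / m ^ 2))) u := by
    intro u hu
    have hu0 : 0 < u := hu.1
    have hxu : x * u ≤ 1 := by nlinarith [hu.2]
    have hMb : (1 + x) * u ≤ M := by
      have h1 : 2 * T < (⌊2 * T⌋₊ : ℝ) + 1 := Nat.lt_floor_add_one _
      rw [hM]; nlinarith [hu.2]
    have h1 := mz_small_pt g y u x M hu0 hx hxu hMb
    have hr : 0 ≤ u ^ (-2 * σ - 1) := Real.rpow_nonneg hu0.le _
    have e1 : (x * u) ^ 2 * u ^ (-2 * σ - 1) = x ^ 2 * u ^ (1 - 2 * σ) := by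
      rw [mul_pow, mul_assoc]
      congr 1
      rw [← Real.rpow_natCast, ← Real.rpow_add hu0]
      congr 1; push_cast; ring
    have hm : ∀ m ∈ Finset.Ioc 0 M, (Set.Ico ((m:ℝ) / (1 + x)) m).indicator (fun _ => 2 * ‖mz_c g y m‖ ^ 2) u * u ^ (-2 * σ - 1) ≤
        (Set.Ico ((m:ℝ) / (1 + x)) m).indicator (fun _ => 16 * Real.exp (8 * K) * (‖mz_c g y m‖ ^ 2 / m ^ 2)) u := by
      intro m hm
      rw [Finset.mem_Ioc] at hm
      have hm1 : (1:ℝ) ≤ m := by exact_mod_cast hm.1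
      by_cases hin : u ∈ Set.Ico ((m:ℝ) / (1 + x)) m
      · rw [Set.indicator_of_mem hin, Set.indicator_of_mem hin]
        have hmT : (m:ℝ) ≤ 2 * T := by
          have : (m:ℝ) ≤ M := by exact_mod_cast hm.2
          rw [hM] at this
          exact this.trans (Nat.floor_le (by linarith))
        have hu2 : (m:ℝ) / 2 ≤ u := by
          refine le_trans ?_ hin.1
          apply div_le_div_of_nonneg_left (by linarith) (by linarith)
          nlinarith
        have hw := mz_wt m (Real.log T) K σ hm1 hL (by
          calc Real.log m ≤ Real.log (T ^ 2) := Real.log_le_log (by linarith) (by nlinarith)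
            _ = 2 * Real.log T := by rw [Real.log_pow]; push_cast; rfl
            _ ≤ 4 * Real.log T := by linarith) hσ
        have h3 : u ^ (-2 * σ - 1) ≤ 8 * Real.exp (8 * K) / m ^ 2 := by
          calc u ^ (-2 * σ - 1) ≤ ((m:ℝ) / 2) ^ (-2 * σ - 1) :=
                Real.rpow_le_rpow_of_nonpos (by linarith) hu2 (by linarith)
            _ = (m:ℝ) ^ (1 - 2 * σ) / m ^ 2 * 2 ^ (2 * σ + 1) := by
                rw [Real.div_rpow (by linarith) (by norm_num), div_eq_mul_inv, ← Real.rpow_neg (by norm_num), ← Real.rpow_natCast (m:ℝ) 2, ← Real.rpow_sub (by linarith)]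
                congr 2 <;> (push_cast; ring)
            _ ≤ Real.exp (8 * K) / m ^ 2 * 8 := by
                have : (2:ℝ) ^ (2 * σ + 1) ≤ 2 ^ (3:ℝ) := Real.rpow_le_rpow_of_exponent_le (by norm_num) (by linarith)
                have h8 : (2:ℝ) ^ (3:ℝ) = 8 := by norm_num
                rw [h8] at this
                gcongr
            _ = _ := by ring
        calc 2 * ‖mz_c g y m‖ ^ 2 * u ^ (-2 * σ - 1) ≤ 2 * ‖mz_c g y m‖ ^ 2 * (8 * Real.exp (8 * K) / m ^ 2) := by gcongr
          _ = _ := by ring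
      · rw [Set.indicator_of_notMem hin, Set.indicator_of_notMem hin, zero_mul]
    have hind : ∀ m ∈ Finset.Ioc 0 M, (Set.Ico ((m:ℝ) / (1 + x)) m).indicator
        (fun _ => ENNReal.ofReal (16 * Real.exp (8 * K) * (‖mz_c g y m‖ ^ 2 / m ^ 2))) u =
        ENNReal.ofReal ((Set.Ico ((m:ℝ) / (1 + x)) m).indicator (fun _ => 16 * Real.exp (8 * K) * (‖mz_c g y m‖ ^ 2 / m ^ 2)) u) := by
      intro m _
      by_cases hin : u ∈ Set.Ico ((m:ℝ) / (1 + x)) m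
      · rw [Set.indicator_of_mem hin, Set.indicator_of_mem hin]
      · rw [Set.indicator_of_notMem hin, Set.indicator_of_notMem hin, ENNReal.ofReal_zero]
    have hnn : ∀ m ∈ Finset.Ioc 0 M, 0 ≤ (Set.Ico ((m:ℝ) / (1 + x)) m).indicator (fun _ => 16 * Real.exp (8 * K) * (‖mz_c g y m‖ ^ 2 / m ^ 2)) u := by
      intro m _
      apply Set.indicator_nonneg
      intro _ _; positivity
    have hq : 0 ≤ u ^ (1 - 2 * σ) := Real.rpow_nonneg hu0.le _
    rw [Finset.sum_congr rfl hind, ← ENNReal.ofReal_sum_of_nonneg hnn, ← ENNReal.ofReal_add (by positivity) (Finset.sum_nonneg hnn),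
      ← ofReal_norm_eq_enorm, ← ENNReal.ofReal_pow (norm_nonneg _), ← ENNReal.ofReal_mul (by positivity)]
    apply ENNReal.ofReal_le_ofReal
    refine (mul_le_mul_of_nonneg_right h1 hr).trans ?_
    rw [add_mul, Finset.sum_mul]
    refine add_le_add ?_ (Finset.sum_le_sum hm)
    rw [mul_assoc, e1, ← mul_assoc]
    gcongr
  refine (setLIntegral_mono_ae' measurableSet_Ioc (Eventually.of_forall hpt)).trans ?_
  have hmeas : Measurable fun u : ℝ => ENNReal.ofReal (2 * B ^ 2 * x ^ 2 * u ^ (1 - 2 * σ)) := by fun_prop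
  rw [lintegral_add_left hmeas, lintegral_finsetSum _ (fun m _ => measurable_const.indicator measurableSet_Ico)]
  have hI1 : ∫⁻ u in Set.Ioc (0:ℝ) T, ENNReal.ofReal (2 * B ^ 2 * x ^ 2 * u ^ (1 - 2 * σ)) ≤ ENNReal.ofReal (4 * B ^ 2 * Real.exp (8 * K) / T) := by
    have hint : IntegrableOn (fun u : ℝ => 2 * B ^ 2 * x ^ 2 * u ^ (1 - 2 * σ)) (Set.Ioc 0 T) := by
      apply Integrable.const_mul
      have := (intervalIntegral.intervalIntegrable_rpow' (a := 0) (b := T) (r := 1 - 2 * σ) (by linarith))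
      rw [intervalIntegrable_iff_integrableOn_Ioc_of_le hT0.le] at this
      exact this
    rw [← ofReal_integral_eq_lintegral_ofReal hint ((ae_restrict_iff' measurableSet_Ioc).2 (Eventually.of_forall fun u hu => by
      have : 0 ≤ u ^ (1 - 2 * σ) := Real.rpow_nonneg hu.1.le _
      simp only [Pi.zero_apply]; positivity))]
    apply ENNReal.ofReal_le_ofReal
    rw [integral_const_mul, ← intervalIntegral.integral_of_le hT0.le, integral_rpow (Or.inl (by linarith)),
      Real.zero_rpow (by linarith), sub_zero]
    have hw := mz_wt T (Real.log T) K σ (by linarith) hL (by linarith) hσ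
    rw [Real.rpow_add_one hT0.ne']
    have hden : (1:ℝ) / (1 - 2 * σ + 1) ≤ 2 := by
      rw [div_le_iff₀ (by linarith)]; linarith
    have hx2 : x ^ 2 ≤ 1 / T ^ 2 := by rw [← one_div_pow]; exact pow_le_pow_left₀ hx.le hx1 2
    have hw0 : 0 ≤ T ^ (1 - 2 * σ) := Real.rpow_nonneg hT0.le _
    calc 2 * B ^ 2 * x ^ 2 * (T ^ (1 - 2 * σ) * T / (1 - 2 * σ + 1)) = 2 * B ^ 2 * x ^ 2 * (T ^ (1 - 2 * σ) * T * (1 / (1 - 2 * σ + 1))) := by ring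
      _ ≤ 2 * B ^ 2 * (1 / T ^ 2) * (Real.exp (8 * K) * T * 2) := by
          have : 0 ≤ 1 / (1 - 2 * σ + 1) := div_nonneg zero_le_one (by linarith)
          exact mul_le_mul (by gcongr) (mul_le_mul (by gcongr) hden this (by positivity)) (by positivity) (by positivity)
      _ = _ := by field_simp; ring
  have hI2 : ∀ m ∈ Finset.Ioc 0 M, ∫⁻ u in Set.Ioc (0:ℝ) T, (Set.Ico ((m:ℝ) / (1 + x)) m).indicator
        (fun _ => ENNReal.ofReal (16 * Real.exp (8 * K) * (‖mz_c g y m‖ ^ 2 / m ^ 2))) u ≤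
        ENNReal.ofReal (16 * Real.exp (8 * K) / T * (‖mz_c g y m‖ ^ 2 / m)) := by
    intro m hm
    have hm1 : (1:ℝ) ≤ m := by exact_mod_cast (Finset.mem_Ioc.1 hm).1
    refine (setLIntegral_le_lintegral _ _).trans ?_
    rw [lintegral_indicator measurableSet_Ico, setLIntegral_const, Real.volume_Ico, ← ENNReal.ofReal_mul (by positivity)]
    apply ENNReal.ofReal_le_ofReal
    have : (m:ℝ) - m / (1 + x) ≤ m / T := by
      have h1 : (m:ℝ) - m / (1 + x) = m * (x / (1 + x)) := by field_simp; ring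
      rw [h1, div_eq_mul_one_div (m:ℝ) T]
      have : x / (1 + x) ≤ x := div_le_self hx.le (by linarith)
      exact mul_le_mul_of_nonneg_left (this.trans hx1) (by linarith)
    calc 16 * Real.exp (8 * K) * (‖mz_c g y m‖ ^ 2 / m ^ 2) * ((m:ℝ) - m / (1 + x)) ≤
        16 * Real.exp (8 * K) * (‖mz_c g y m‖ ^ 2 / m ^ 2) * (m / T) := by gcongr
      _ = _ := by field_simp
  refine (add_le_add hI1 (Finset.sum_le_sum hI2)).trans ?_
  rw [← ENNReal.ofReal_sum_of_nonneg (fun m _ => by positivity), ← ENNReal.ofReal_add (by positivity) (Finset.sum_nonneg fun m _ => by positivity)]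
  apply ENNReal.ofReal_le_ofReal
  rw [← Finset.mul_sum]
  calc _ ≤ 4 * B ^ 2 * Real.exp (8 * K) / T + 16 * Real.exp (8 * K) / T * C := by gcongr
    _ = _ := by ring

lemma mz_f_le (g : ℝ → ℂ) (y : ℝ) (hy : 1 < y) (Bg : ℝ) (hBg : ∀ v ∈ Set.Icc (0:ℝ) 1, ‖g v‖ ≤ Bg) (u : ℝ) :
    ‖mz_f g y u‖ ≤ Bg * y := by
  have hB0 : 0 ≤ Bg := (norm_nonneg _).trans (hBg 0 (by simp))
  unfold mz_f
  refine (norm_sum_le _ _).trans ?_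
  calc _ ≤ ∑ k ∈ Finset.Ioc 0 ⌊y⌋₊, Bg := by
        refine Finset.sum_le_sum fun k hk => ?_
        rw [norm_mul]
        calc _ ≤ Bg * 1 := mul_le_mul (mz_b_le g y hy Bg hBg k hk) (mz_fr_norm _) (norm_nonneg _) hB0
          _ = Bg := mul_one _
    _ = ⌊y⌋₊ * Bg := by simp
    _ ≤ y * Bg := by gcongr; exact Nat.floor_le (by linarith)
    _ = _ := mul_comm _ _

lemma mz_dd_le (g : ℝ → ℂ) (y : ℝ) (hy : 1 < y) (Bg : ℝ) (hBg : ∀ v ∈ Set.Icc (0:ℝ) 1, ‖g v‖ ≤ Bg) (u v : ℝ) :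
    ‖mz_f g y u - mz_f g y v‖ ^ 2 ≤ 4 * Bg ^ 2 * y ^ 2 := by
  have h := (norm_sub_le (mz_f g y u) (mz_f g y v)).trans (add_le_add (mz_f_le g y hy Bg hBg u) (mz_f_le g y hy Bg hBg v))
  calc _ ≤ (Bg * y + Bg * y) ^ 2 := pow_le_pow_left₀ (norm_nonneg _) h 2
    _ = _ := by ring

lemma mz_tail (g : ℝ → ℂ) (y x T σ Bg : ℝ) (hT : 3 ≤ T) (hy : 1 < y) (hyT : y ^ 2 ≤ T)
    (hBg : ∀ v ∈ Set.Icc (0:ℝ) 1, ‖g v‖ ≤ Bg) (hσ0 : 1 / 4 ≤ σ) :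
    ∫⁻ u in Set.Ioi (T ^ 4), ‖mz_f g y ((1 + x) * u) - mz_f g y u‖ₑ ^ 2 * ENNReal.ofReal (u ^ (-2 * σ - 1)) ≤
      ENNReal.ofReal (8 * Bg ^ 2 / T) := by
  have hT0 : 0 < T := by linarith
  have hT4 : 0 < T ^ 4 := by positivity
  calc _ ≤ ∫⁻ u in Set.Ioi (T ^ 4), ENNReal.ofReal (4 * Bg ^ 2 * y ^ 2 * u ^ (-2 * σ - 1)) := by
        refine setLIntegral_mono_ae' measurableSet_Ioi (Eventually.of_forall fun u hu => ?_)
        have hu0 : 0 < u := hT4.trans hu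
        rw [← ofReal_norm_eq_enorm, ← ENNReal.ofReal_pow (norm_nonneg _), ← ENNReal.ofReal_mul (by positivity)]
        apply ENNReal.ofReal_le_ofReal
        exact mul_le_mul_of_nonneg_right (mz_dd_le g y hy Bg hBg _ _) (Real.rpow_nonneg hu0.le _)
    _ = ENNReal.ofReal (∫ u in Set.Ioi (T ^ 4), 4 * Bg ^ 2 * y ^ 2 * u ^ (-2 * σ - 1)) := by
        rw [← ofReal_integral_eq_lintegral_ofReal ((integrableOn_Ioi_rpow_of_lt (by linarith) hT4).const_mul _)
          ((ae_restrict_iff' measurableSet_Ioi).2 (Eventually.of_forall fun u hu => by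
            have : 0 ≤ u ^ (-2 * σ - 1) := Real.rpow_nonneg (hT4.trans hu).le _
            simp only [Pi.zero_apply]; positivity))]
    _ ≤ _ := by
        apply ENNReal.ofReal_le_ofReal
        rw [integral_const_mul, integral_Ioi_rpow_of_lt (by linarith) hT4]
        have e : -(T ^ 4) ^ (-2 * σ - 1 + 1) / (-2 * σ - 1 + 1) = (T ^ 4) ^ (-2 * σ) * (1 / (2 * σ)) := by
          rw [show -2 * σ - 1 + 1 = -(2 * σ) by ring, neg_div_neg_eq, div_eq_mul_one_div]
          congr 2; ring
        rw [e]
        have h1 : (T ^ 4 : ℝ) ^ (-2 * σ) ≤ 1 / T ^ 2 := by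
          calc (T ^ 4 : ℝ) ^ (-2 * σ) ≤ (T ^ 4 : ℝ) ^ (-(1 / 2) : ℝ) := Real.rpow_le_rpow_of_exponent_le (one_le_pow₀ (by linarith)) (by linarith)
            _ = 1 / T ^ 2 := by
              rw [Real.rpow_neg hT4.le, ← Real.sqrt_eq_rpow, show T ^ 4 = (T ^ 2) ^ 2 by ring, Real.sqrt_sq (by positivity), one_div]
        have h2 : 1 / (2 * σ) ≤ 2 := by rw [div_le_iff₀ (by linarith)]; linarith
        calc 4 * Bg ^ 2 * y ^ 2 * ((T ^ 4) ^ (-2 * σ) * (1 / (2 * σ))) ≤ 4 * Bg ^ 2 * T * ((1 / T ^ 2) * 2) := by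
              have : 0 ≤ 1 / (2 * σ) := div_nonneg zero_le_one (by linarith)
              exact mul_le_mul (by gcongr) (mul_le_mul h1 h2 this (by positivity)) (by positivity) (by positivity)
          _ = _ := by field_simp; ring

lemma mz_D' {g g1 g2 : ℝ → ℂ} {A : ℝ} (hg : mz_C2 g g1 g2 A) (y : ℝ) (hy : Real.exp 1 ≤ y) (U : ℝ) (hU : y ^ 2 ≤ U)
    (H : ℝ) (hH : 0 < H) (Bg : ℝ) (hBg : ∀ v ∈ Set.Icc (0:ℝ) 1, ‖g v‖ ≤ Bg) :
    ∫⁻ u in Set.Ioc U (2 * U), ‖mz_f g y (u + H) - mz_f g y u‖ₑ ^ 2 ≤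
     ENNReal.ofReal (Real.exp (4 * π) * (U * (400 * mz_CA * A ^ 2 * H / Real.log y + 3 * Bg ^ 2 * y ^ 2 * Real.exp (-π * (U / y ^ 2))))) := by
  have hy1 : 1 < y := lt_of_lt_of_le (by have := Real.add_one_lt_exp (x := 1) one_ne_zero; linarith) hy
  have h := mz_D hg y hy U hU H hH Bg hBg
  refine le_trans ?_ (ENNReal.ofReal_le_ofReal h)
  have hm : Measurable fun u => ‖mz_f g y (u + H) - mz_f g y u‖ ^ 2 :=
    ((((mz_f_meas g y).comp (measurable_add_const H)).sub (mz_f_meas g y)).norm).pow_const 2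
  have hint : IntegrableOn (fun u => ‖mz_f g y (u + H) - mz_f g y u‖ ^ 2) (Set.Ioc U (2 * U)) := by
    refine Measure.integrableOn_of_bounded (M := 4 * Bg ^ 2 * y ^ 2) (by simp) hm.aestronglyMeasurable (Eventually.of_forall fun u => ?_)
    rw [Real.norm_eq_abs, abs_of_nonneg (by positivity)]
    exact mz_dd_le g y hy1 Bg hBg _ _
  rw [ofReal_integral_eq_lintegral_ofReal hint (Eventually.of_forall fun u => by simp only [Pi.zero_apply]; positivity)]
  refine le_of_eq (lintegral_congr fun u => ?_)
  rw [← ofReal_norm_eq_enorm, ← ENNReal.ofReal_pow (norm_nonneg _)]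

lemma mz_f2_meas (g : ℝ → ℂ) (y : ℝ) : Measurable fun p : ℝ × ℝ => ‖mz_f g y (p.1 + p.2) - mz_f g y p.1‖ₑ ^ 2 :=
  ((((mz_f_meas g y).comp (measurable_fst.add measurable_snd)).sub ((mz_f_meas g y).comp measurable_fst)).enorm).pow_const 2

lemma mz_f3_meas (g : ℝ → ℂ) (y σ : ℝ) : Measurable fun p : ℝ × ℝ =>
    ‖mz_f g y ((1 + p.1) * p.2) - mz_f g y p.2‖ₑ ^ 2 * ENNReal.ofReal (p.2 ^ (-2 * σ - 1)) := by
  refine Measurable.mul (((((mz_f_meas g y).comp (by fun_prop)).sub ((mz_f_meas g y).comp measurable_snd)).enorm).pow_const 2) ?_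
  fun_prop

lemma mz_block0 {g g1 g2 : ℝ → ℂ} {A : ℝ} (hg : mz_C2 g g1 g2 A) (y : ℝ) (hy : Real.exp 1 ≤ y) (U T σ : ℝ) (hT : 0 < T) (hU : y ^ 2 ≤ U)
    (hσ0 : 1 / 4 ≤ σ) (Bg : ℝ) (hBg : ∀ v ∈ Set.Icc (0:ℝ) 1, ‖g v‖ ≤ Bg) :
    ∫⁻ x in Set.Icc (1 / (2 * T)) (1 / T), ∫⁻ u in Set.Ioc U (2 * U),
      ‖mz_f g y ((1 + x) * u) - mz_f g y u‖ₑ ^ 2 * ENNReal.ofReal (u ^ (-2 * σ - 1)) ≤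
     ENNReal.ofReal (U ^ (-2 * σ - 1) * (1 / U) * ((Real.exp (4 * π) * (U * (400 * mz_CA * A ^ 2 * (2 * U / T) / Real.log y +
       3 * Bg ^ 2 * y ^ 2 * Real.exp (-π * (U / y ^ 2))))) * (2 * U / T))) := by
  have hy0 : 0 < y := (Real.exp_pos 1).trans_le hy
  have hy1 : 1 < y := lt_of_lt_of_le (by have := Real.add_one_lt_exp (x := 1) one_ne_zero; linarith) hy
  have hU0 : 0 < U := lt_of_lt_of_le (by positivity) hU
  have hly : 0 < Real.log y := Real.log_pos hy1
  have hCA := mz_CA_nonneg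
  set BD := Real.exp (4 * π) * (U * (400 * mz_CA * A ^ 2 * (2 * U / T) / Real.log y + 3 * Bg ^ 2 * y ^ 2 * Real.exp (-π * (U / y ^ 2)))) with hBD
  have hBD0 : 0 ≤ BD := by positivity
  rw [lintegral_lintegral_swap ((mz_f3_meas g y σ).aemeasurable)]
  have hin : ∀ u ∈ Set.Ioc U (2 * U), ∫⁻ x in Set.Icc (1 / (2 * T)) (1 / T),
      ‖mz_f g y ((1 + x) * u) - mz_f g y u‖ₑ ^ 2 * ENNReal.ofReal (u ^ (-2 * σ - 1)) ≤
      ENNReal.ofReal (U ^ (-2 * σ - 1) * (1 / U)) * ∫⁻ H in Set.Icc (U / (2 * T)) (2 * U / T), ‖mz_f g y (u + H) - mz_f g y u‖ₑ ^ 2 := by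
    intro u hu
    have hu0 : 0 < u := hU0.trans hu.1
    rw [lintegral_mul_const' _ _ ENNReal.ofReal_ne_top]
    have h1 : ∫⁻ x in Set.Icc (1 / (2 * T)) (1 / T), ‖mz_f g y ((1 + x) * u) - mz_f g y u‖ₑ ^ 2 ≤
        ENNReal.ofReal (1 / U) * ∫⁻ H in Set.Icc (U / (2 * T)) (2 * U / T), ‖mz_f g y (u + H) - mz_f g y u‖ₑ ^ 2 := by
      have hs := mz_lint_scale ((Set.Icc (U / (2 * T)) (2 * U / T)).indicator fun H => ‖mz_f g y (u + H) - mz_f g y u‖ₑ ^ 2) (1 / u) (by positivity)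
      rw [lintegral_indicator measurableSet_Icc] at hs
      calc _ ≤ ∫⁻ x, (Set.Icc (U / (2 * T)) (2 * U / T)).indicator (fun H => ‖mz_f g y (u + H) - mz_f g y u‖ₑ ^ 2) (x / (1 / u)) := by
            rw [← lintegral_indicator measurableSet_Icc]
            refine lintegral_mono fun x => ?_
            by_cases hx : x ∈ Set.Icc (1 / (2 * T)) (1 / T)
            · have hmem : x / (1 / u) ∈ Set.Icc (U / (2 * T)) (2 * U / T) := by
                rw [div_div_eq_mul_div, div_one]
                constructor
                · calc U / (2 * T) = 1 / (2 * T) * U := by ring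
                    _ ≤ x * u := mul_le_mul hx.1 hu.1.le hU0.le (le_trans (by positivity) hx.1)
                · calc x * u ≤ 1 / T * (2 * U) := mul_le_mul hx.2 hu.2 hu0.le (by positivity)
                    _ = _ := by ring
              rw [Set.indicator_of_mem hx, Set.indicator_of_mem hmem, div_div_eq_mul_div, div_one]
              rw [show (1 + x) * u = u + x * u by ring]
            · rw [Set.indicator_of_notMem hx]; exact zero_le
        _ = _ := hs
        _ ≤ _ := by
            refine mul_le_mul_left (ENNReal.ofReal_le_ofReal ?_) _
            exact one_div_le_one_div_of_le hU0 hu.1.le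
    have h2 : ENNReal.ofReal (u ^ (-2 * σ - 1)) ≤ ENNReal.ofReal (U ^ (-2 * σ - 1)) :=
      ENNReal.ofReal_le_ofReal (Real.rpow_le_rpow_of_nonpos hU0 hu.1.le (by linarith))
    refine (mul_le_mul' h1 h2).trans (le_of_eq ?_)
    rw [ENNReal.ofReal_mul (Real.rpow_nonneg hU0.le _)]
    ring
  refine (setLIntegral_mono_ae' measurableSet_Ioc (Eventually.of_forall hin)).trans ?_
  rw [lintegral_const_mul' _ _ ENNReal.ofReal_ne_top, lintegral_lintegral_swap ((mz_f2_meas g y).aemeasurable),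
    ENNReal.ofReal_mul (mul_nonneg (Real.rpow_nonneg hU0.le _) (by positivity))]
  gcongr
  calc _ ≤ ∫⁻ H in Set.Icc (U / (2 * T)) (2 * U / T), ENNReal.ofReal BD := by
        refine setLIntegral_mono_ae' measurableSet_Icc (Eventually.of_forall fun H hH => ?_)
        have hH0 : 0 < H := lt_of_lt_of_le (by positivity) hH.1
        refine (mz_D' hg y hy U hU H hH0 Bg hBg).trans (ENNReal.ofReal_le_ofReal ?_)
        rw [hBD]
        have := hH.2
        gcongr
    _ = ENNReal.ofReal BD * ENNReal.ofReal (2 * U / T - U / (2 * T)) := by rw [setLIntegral_const, Real.volume_Icc]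
    _ ≤ _ := by
        rw [← ENNReal.ofReal_mul hBD0]
        apply ENNReal.ofReal_le_ofReal
        have : 0 ≤ U / (2 * T) := by positivity
        exact mul_le_mul_of_nonneg_left (by linarith) hBD0

lemma mz_block {g g1 g2 : ℝ → ℂ} {A : ℝ} (hg : mz_C2 g g1 g2 A) (y : ℝ) (hy : Real.exp 1 ≤ y) (U T σ K ϑ : ℝ) (hT : 3 ≤ T) (hyT : y ^ 2 ≤ T)
    (hTU : T ≤ U) (hUT : U ≤ T ^ 4) (hϑ : 0 < ϑ) (hyϑ : Real.log y = ϑ * Real.log T)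
    (hexp : y ^ 2 * Real.exp (-π * (T / y ^ 2)) ≤ 1 / Real.log T) (hσ : |σ - 1 / 2| ≤ K / Real.log T)
    (hσ0 : 1 / 4 ≤ σ) (Bg : ℝ) (hBg : ∀ v ∈ Set.Icc (0:ℝ) 1, ‖g v‖ ≤ Bg) :
    ∫⁻ x in Set.Icc (1 / (2 * T)) (1 / T), ∫⁻ u in Set.Ioc U (2 * U),
      ‖mz_f g y ((1 + x) * u) - mz_f g y u‖ₑ ^ 2 * ENNReal.ofReal (u ^ (-2 * σ - 1)) ≤
     ENNReal.ofReal (2 * Real.exp (8 * K) * Real.exp (4 * π) * (800 * mz_CA * A ^ 2 / ϑ + 3 * Bg ^ 2) / (T ^ 2 * Real.log T)) := by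
  refine (mz_block0 hg y hy U T σ (by linarith) (hyT.trans hTU) hσ0 Bg hBg).trans (ENNReal.ofReal_le_ofReal ?_)
  have hT0 : 0 < T := by linarith
  have hU0 : 0 < U := by linarith
  have hy0 : 0 < y := (Real.exp_pos 1).trans_le hy
  have hL : 0 < Real.log T := Real.log_pos (by linarith)
  have hCA := mz_CA_nonneg
  have htiny : y ^ 2 * Real.exp (-π * (U / y ^ 2)) ≤ U / (T * Real.log T) := by
    calc y ^ 2 * Real.exp (-π * (U / y ^ 2)) ≤ y ^ 2 * Real.exp (-π * (T / y ^ 2)) := by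
          gcongr _ * Real.exp ?_
          rw [neg_mul, neg_mul, neg_le_neg_iff]
          gcongr
      _ ≤ 1 / Real.log T := hexp
      _ ≤ (U / T) * (1 / Real.log T) := le_mul_of_one_le_left (by positivity) ((one_le_div hT0).2 hTU)
      _ = _ := by field_simp
  have hw := mz_wt U (Real.log T) K σ (by linarith) hL (by
    calc Real.log U ≤ Real.log (T ^ 4) := Real.log_le_log hU0 hUT
      _ = 4 * Real.log T := by rw [Real.log_pow]; push_cast; rfl) hσ
  have e : U ^ (-2 * σ - 1) * (1 / U) * U ^ 3 = U ^ (1 - 2 * σ) := by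
    have : U ^ (-2 * σ - 1) * (1 / U) * U ^ 3 = U ^ (-2 * σ - 1) * U ^ 2 := by field_simp
    rw [this, ← Real.rpow_natCast, ← Real.rpow_add hU0]; congr 1; push_cast; ring
  have hr0 : 0 ≤ U ^ (-2 * σ - 1) := Real.rpow_nonneg hU0.le _
  calc _ ≤ U ^ (-2 * σ - 1) * (1 / U) * ((Real.exp (4 * π) * (U * (400 * mz_CA * A ^ 2 * (2 * U / T) / (ϑ * Real.log T) +
       3 * Bg ^ 2 * (U / (T * Real.log T))))) * (2 * U / T)) := by
        rw [hyϑ, mul_assoc (3 * Bg ^ 2)]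
        gcongr
    _ = (U ^ (-2 * σ - 1) * (1 / U) * U ^ 3) * (2 * Real.exp (4 * π) * (800 * mz_CA * A ^ 2 / ϑ + 3 * Bg ^ 2) / (T ^ 2 * Real.log T)) := by
        field_simp; ring
    _ = U ^ (1 - 2 * σ) * (2 * Real.exp (4 * π) * (800 * mz_CA * A ^ 2 / ϑ + 3 * Bg ^ 2) / (T ^ 2 * Real.log T)) := by rw [e]
    _ ≤ Real.exp (8 * K) * (2 * Real.exp (4 * π) * (800 * mz_CA * A ^ 2 / ϑ + 3 * Bg ^ 2) / (T ^ 2 * Real.log T)) := by gcongr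
    _ = _ := by ring

lemma mz_dyad (T u : ℝ) (N : ℕ) (h0 : T < u) (h1 : u ≤ T * 2 ^ N) : ∃ j ∈ Finset.range N, u ∈ Set.Ioc (T * 2 ^ j) (2 * (T * 2 ^ j)) := by
  induction N with
  | zero => simp at h1; linarith
  | succ n ih =>
    by_cases h : u ≤ T * 2 ^ n
    · obtain ⟨j, hj, hu⟩ := ih h
      exact ⟨j, Finset.mem_range.2 (by have := Finset.mem_range.1 hj; omega), hu⟩
    · refine ⟨n, Finset.mem_range.2 (by omega), not_le.1 h, ?_⟩
      rw [pow_succ] at h1; linarith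

lemma mz_E6 {g g1 g2 : ℝ → ℂ} {A : ℝ} (hg : mz_C2 g g1 g2 A) (y : ℝ) (hy : Real.exp 1 ≤ y) (T σ K ϑ C B : ℝ) (hT : 3 ≤ T) (hyT : y ^ 2 ≤ T)
    (hϑ : 0 < ϑ) (hyϑ : Real.log y = ϑ * Real.log T)
    (hexp : y ^ 2 * Real.exp (-π * (T / y ^ 2)) ≤ 1 / Real.log T) (hσ : |σ - 1 / 2| ≤ K / Real.log T)
    (hσ0 : 1 / 4 ≤ σ) (hσ1 : σ ≤ 3 / 4) (Bg : ℝ) (hBg : ∀ v ∈ Set.Icc (0:ℝ) 1, ‖g v‖ ≤ Bg) (hC0 : 0 ≤ C)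
    (hC : ∑ m ∈ Finset.Ioc 0 ⌊2 * T⌋₊, ‖mz_c g y m‖ ^ 2 / (m : ℝ) ≤ C) (hB : ‖mz_beta g y 1‖ ≤ B) :
    ∫⁻ t in Set.Icc (T / 2) (5 * T / 2), ‖riemannZeta (σ + t * Complex.I) * mz_MB g y (σ + t * Complex.I)‖ₑ ^ 2 ≤
    ENNReal.ofReal (20000 * ((4 * B ^ 2 + 16 * C) * Real.exp (8 * K) + 8 * Bg ^ 2 +
      12 * (2 * Real.exp (8 * K) * Real.exp (4 * π) * (800 * mz_CA * A ^ 2 / ϑ + 3 * Bg ^ 2))) * T) := by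
  set I := ∫⁻ t in Set.Icc (T / 2) (5 * T / 2), ‖riemannZeta (σ + t * Complex.I) * mz_MB g y (σ + t * Complex.I)‖ₑ ^ 2 with hI
  have hT0 : 0 < T := by linarith
  have hCA := mz_CA_nonneg
  have hL1 : 1 ≤ Real.log T := by
    rw [Real.le_log_iff_exp_le hT0]; have := Real.exp_one_lt_d9; linarith
  have hL : 0 < Real.log T := by linarith
  have hy1 : 1 < y := lt_of_lt_of_le (by have := Real.add_one_lt_exp (x := 1) one_ne_zero; linarith) hy
  set C1 := (4 * B ^ 2 + 16 * C) * Real.exp (8 * K) with hC1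
  set C2 := 2 * Real.exp (8 * K) * Real.exp (4 * π) * (800 * mz_CA * A ^ 2 / ϑ + 3 * Bg ^ 2) with hC2
  have hC10 : 0 ≤ C1 := by positivity
  have hC20 : 0 ≤ C2 := by positivity
  set q : ℝ → ℝ → ENNReal := fun x u => ‖mz_f g y ((1 + x) * u) - mz_f g y u‖ₑ ^ 2 * ENNReal.ofReal (u ^ (-2 * σ - 1)) with hq
  set N := ⌈3 * Real.log T / Real.log 2⌉₊ with hN
  have hl2 : 0.69 < Real.log 2 := by have := Real.log_two_gt_d9; linarith
  have hl20 : 0 < Real.log 2 := by linarith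
  have hN6 : (N:ℝ) ≤ 6 * Real.log T := by
    have h1 : (N:ℝ) < 3 * Real.log T / Real.log 2 + 1 := Nat.ceil_lt_add_one (by positivity)
    have h2 : 3 * Real.log T / Real.log 2 ≤ 5 * Real.log T := by
      rw [div_le_iff₀ hl20]; nlinarith
    linarith
  have hNT : T ^ 4 ≤ T * 2 ^ N := by
    have h1 : 3 * Real.log T / Real.log 2 ≤ N := Nat.le_ceil _
    rw [div_le_iff₀ hl20] at h1
    have : T ^ 3 ≤ 2 ^ N := by
      rw [← Real.log_le_log_iff (by positivity) (by positivity), Real.log_pow, Real.log_pow]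
      push_cast; linarith
    calc T ^ 4 = T * T ^ 3 := by ring
      _ ≤ _ := by gcongr
  have hjT : ∀ j ∈ Finset.range N, T * 2 ^ j ≤ T ^ 4 := by
    intro j hj
    have h1 : (j:ℝ) < 3 * Real.log T / Real.log 2 := Nat.lt_ceil.1 (Finset.mem_range.1 hj)
    rw [lt_div_iff₀ hl20] at h1
    have : (2:ℝ) ^ j ≤ T ^ 3 := by
      rw [← Real.log_le_log_iff (by positivity) (by positivity), Real.log_pow, Real.log_pow]
      push_cast; linarith
    calc T * 2 ^ j ≤ T * T ^ 3 := by gcongr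
      _ = _ := by ring
  have hcov : Set.Ioi (0:ℝ) ⊆ (Set.Ioc 0 T ∪ Set.Ioi (T ^ 4)) ∪ ⋃ j ∈ Finset.range N, Set.Ioc (T * 2 ^ j) (2 * (T * 2 ^ j)) := by
    intro u hu
    by_cases h1 : u ≤ T
    · exact Or.inl (Or.inl ⟨hu, h1⟩)
    by_cases h2 : T ^ 4 < u
    · exact Or.inl (Or.inr h2)
    right
    obtain ⟨j, hj, huj⟩ := mz_dyad T u N (not_le.1 h1) ((not_lt.1 h2).trans hNT)
    exact Set.mem_biUnion hj huj
  have hJ : ∀ x ∈ Set.Icc (1 / (2 * T)) (1 / T), ∫⁻ u in Set.Ioi (0:ℝ), q x u ≤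
      ENNReal.ofReal ((C1 + 8 * Bg ^ 2) / T) + ∑ j ∈ Finset.range N, ∫⁻ u in Set.Ioc (T * 2 ^ j) (2 * (T * 2 ^ j)), q x u := by
    intro x hx
    have hx0 : 0 < x := lt_of_lt_of_le (by positivity) hx.1
    have hs := mz_small g y x T σ K C B ⌊2 * T⌋₊ hT hx0 hx.2 hσ0 hσ1 hσ rfl hC hB
    have ht := mz_tail g y x T σ Bg hT hy1 hyT hBg hσ0
    calc _ ≤ ∫⁻ u in (Set.Ioc 0 T ∪ Set.Ioi (T ^ 4)) ∪ ⋃ j ∈ Finset.range N, Set.Ioc (T * 2 ^ j) (2 * (T * 2 ^ j)), q x u := lintegral_mono_set hcov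
      _ ≤ ((∫⁻ u in Set.Ioc 0 T, q x u) + ∫⁻ u in Set.Ioi (T ^ 4), q x u) + ∑ j ∈ Finset.range N, ∫⁻ u in Set.Ioc (T * 2 ^ j) (2 * (T * 2 ^ j)), q x u := by
          refine (lintegral_union_le _ _ _).trans (add_le_add (lintegral_union_le _ _ _) ?_)
          have : ∀ M : ℕ, ∫⁻ u in ⋃ j ∈ Finset.range M, Set.Ioc (T * 2 ^ j) (2 * (T * 2 ^ j)), q x u ≤
              ∑ j ∈ Finset.range M, ∫⁻ u in Set.Ioc (T * 2 ^ j) (2 * (T * 2 ^ j)), q x u := by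
            intro M
            induction M with
            | zero => simp
            | succ M ih =>
              rw [Finset.sum_range_succ, Finset.range_add_one, Finset.set_biUnion_insert, Set.union_comm]
              exact (lintegral_union_le _ _ _).trans (add_le_add ih le_rfl)
          exact this N
      _ ≤ _ := by
          gcongr
          refine (add_le_add hs ht).trans (le_of_eq ?_)
          rw [← ENNReal.ofReal_add (by positivity) (by positivity)]
          congr 1; ring
  have hvol : volume (Set.Icc (1 / (2 * T)) (1 / T)) = ENNReal.ofReal (1 / (2 * T)) := by
    rw [Real.volume_Icc]; congr 1; field_simp; norm_num
  have hmain : I * ENNReal.ofReal (1 / (2 * T)) ≤ ENNReal.ofReal (20000 * T ^ 2) * ENNReal.ofReal ((C1 + 8 * Bg ^ 2) / T * (1 / (2 * T)) + 6 * Real.log T * (C2 / (T ^ 2 * Real.log T))) := by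
    calc I * ENNReal.ofReal (1 / (2 * T)) = ∫⁻ x in Set.Icc (1 / (2 * T)) (1 / T), I := by rw [setLIntegral_const, hvol]
      _ ≤ ∫⁻ x in Set.Icc (1 / (2 * T)) (1 / T), ENNReal.ofReal (20000 * T ^ 2) *
          (ENNReal.ofReal ((C1 + 8 * Bg ^ 2) / T) + ∑ j ∈ Finset.range N, ∫⁻ u in Set.Ioc (T * 2 ^ j) (2 * (T * 2 ^ j)), q x u) := by
          refine setLIntegral_mono_ae' measurableSet_Icc (Eventually.of_forall fun x hx => ?_)
          refine (mz_E3 g y σ x T (by linarith) hx.1 hx.2 (by linarith) (by linarith)).trans ?_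
          exact mul_le_mul_right (hJ x hx) _
      _ = ENNReal.ofReal (20000 * T ^ 2) * (ENNReal.ofReal ((C1 + 8 * Bg ^ 2) / T) * ENNReal.ofReal (1 / (2 * T)) +
          ∑ j ∈ Finset.range N, ∫⁻ x in Set.Icc (1 / (2 * T)) (1 / T), ∫⁻ u in Set.Ioc (T * 2 ^ j) (2 * (T * 2 ^ j)), q x u) := by
          rw [lintegral_const_mul' _ _ ENNReal.ofReal_ne_top, lintegral_add_left measurable_const, setLIntegral_const, hvol,
            lintegral_finsetSum _ (fun j _ => Measurable.lintegral_prod_right' (mz_f3_meas g y σ))]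
      _ ≤ ENNReal.ofReal (20000 * T ^ 2) * (ENNReal.ofReal ((C1 + 8 * Bg ^ 2) / T * (1 / (2 * T))) +
          ∑ j ∈ Finset.range N, ENNReal.ofReal (C2 / (T ^ 2 * Real.log T))) := by
          rw [← ENNReal.ofReal_mul (by positivity)]
          refine mul_le_mul_right (add_le_add le_rfl (Finset.sum_le_sum fun j hj => ?_)) _
          exact mz_block hg y hy (T * 2 ^ j) T σ K ϑ hT hyT (le_mul_of_one_le_right hT0.le (one_le_pow₀ (by norm_num))) (hjT j hj) hϑ hyϑ hexp hσ hσ0 Bg hBg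
      _ ≤ _ := by
          refine mul_le_mul_right ?_ _
          rw [Finset.sum_const, Finset.card_range, nsmul_eq_mul, ← ENNReal.ofReal_natCast, ← ENNReal.ofReal_mul (by positivity), ← ENNReal.ofReal_add (by positivity) (by positivity)]
          apply ENNReal.ofReal_le_ofReal
          gcongr
  have h2T : I = I * ENNReal.ofReal (1 / (2 * T)) * ENNReal.ofReal (2 * T) := by
    rw [mul_assoc, ← ENNReal.ofReal_mul (by positivity), one_div_mul_cancel (by positivity), ENNReal.ofReal_one, mul_one]
  rw [h2T]
  refine (mul_le_mul_left hmain _).trans (le_of_eq ?_)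
  rw [← ENNReal.ofReal_mul (by positivity), ← ENNReal.ofReal_mul (by positivity)]
  congr 1
  field_simp
  ring

lemma mz_E {g g1 g2 : ℝ → ℂ} {A : ℝ} (hg : mz_C2 g g1 g2 A) (ϑ K : ℝ) (hϑ : 0 < ϑ) (hϑ1 : ϑ < 1 / 2) :
    ∃ C : ℝ, 0 ≤ C ∧ ∀ᶠ T : ℝ in atTop, ∀ σ : ℝ, |σ - 1 / 2| ≤ K / Real.log T →
      ∫⁻ t in Set.Icc (T / 2) (5 * T / 2), ‖riemannZeta (σ + t * Complex.I) * mz_MB g (T ^ ϑ) (σ + t * Complex.I)‖ₑ ^ 2 ≤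
        ENNReal.ofReal (C * T) := by
  obtain ⟨C, Y0, hC0, hY0, hC⟩ := mz_C hg (2 / ϑ)
  have hgc : Continuous g := continuous_iff_continuousAt.2 fun x => (hg.h1 x).continuousAt
  obtain ⟨Bg, hBg⟩ := (isCompact_Icc (a := (0:ℝ)) (b := 1)).exists_bound_of_continuousOn hgc.continuousOn
  set B := 10 * A * mz_Psi 1 with hB
  refine ⟨20000 * ((4 * B ^ 2 + 16 * C) * Real.exp (8 * K) + 8 * Bg ^ 2 +
      12 * (2 * Real.exp (8 * K) * Real.exp (4 * π) * (800 * mz_CA * A ^ 2 / ϑ + 3 * Bg ^ 2))), ?_, ?_⟩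
  rotate_left
  · have hlog := Real.tendsto_log_atTop
    have hex : ∀ᶠ T : ℝ in atTop, T * Real.exp (-π * T ^ (1 - 2 * ϑ)) ≤ 1 / Real.log T := by
      have hr : 0 < 1 - 2 * ϑ := by linarith
      have h1 := (tendsto_rpow_mul_exp_neg_mul_atTop_nhds_zero (2 / (1 - 2 * ϑ)) π Real.pi_pos).comp (tendsto_rpow_atTop hr)
      filter_upwards [h1.eventually_le_const one_pos, eventually_ge_atTop 3] with T hT hT3
      have hT0 : 0 < T := by linarith
      have hL : 0 < Real.log T := Real.log_pos (by linarith)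
      simp only [Function.comp] at hT
      rw [← Real.rpow_mul hT0.le, mul_div_cancel₀ _ hr.ne', Real.rpow_two] at hT
      rw [le_div_iff₀ hL]
      have h2 : Real.log T ≤ T := by have := Real.log_le_sub_one_of_pos hT0; linarith
      calc T * Real.exp (-π * T ^ (1 - 2 * ϑ)) * Real.log T ≤ T * Real.exp (-π * T ^ (1 - 2 * ϑ)) * T := by gcongr
        _ = T ^ 2 * Real.exp (-π * T ^ (1 - 2 * ϑ)) := by ring
        _ ≤ 1 := hT
    filter_upwards [eventually_ge_atTop 3, hlog.eventually_ge_atTop (Y0 / ϑ), hlog.eventually_ge_atTop (1 / ϑ), hlog.eventually_ge_atTop (4 * K), hex]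
      with T hT hTY hTϑ hTK hexT σ hσ
    have hT0 : 0 < T := by linarith
    have hL : 0 < Real.log T := Real.log_pos (by linarith)
    have hyϑ : Real.log (T ^ ϑ) = ϑ * Real.log T := Real.log_rpow hT0 ϑ
    rw [div_le_iff₀ hϑ] at hTY hTϑ
    have hy : Real.exp 1 ≤ T ^ ϑ := by
      rw [← Real.le_log_iff_exp_le (by positivity), hyϑ]; linarith
    have hy1 : 1 < T ^ ϑ := lt_of_lt_of_le (by have := Real.add_one_lt_exp (x := 1) one_ne_zero; linarith) hy
    have hy2 : (T ^ ϑ) ^ 2 = T ^ (2 * ϑ) := by rw [← Real.rpow_natCast, ← Real.rpow_mul hT0.le]; congr 1; push_cast; ring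
    have hyT : (T ^ ϑ) ^ 2 ≤ T := by
      rw [hy2]
      calc T ^ (2 * ϑ) ≤ T ^ (1:ℝ) := Real.rpow_le_rpow_of_exponent_le (by linarith) (by linarith)
        _ = T := Real.rpow_one T
    have hs := hσ
    have hK4 : K / Real.log T ≤ 1 / 4 := by rw [div_le_iff₀ hL]; linarith
    rw [abs_le] at hs
    have hexp : (T ^ ϑ) ^ 2 * Real.exp (-π * (T / (T ^ ϑ) ^ 2)) ≤ 1 / Real.log T := by
      refine le_trans ?_ hexT
      have : T / (T ^ ϑ) ^ 2 = T ^ (1 - 2 * ϑ) := by rw [hy2, Real.rpow_sub hT0, Real.rpow_one]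
      rw [this]
      gcongr
    have hMB : ‖mz_beta g (T ^ ϑ) 1‖ ≤ B := by
      refine (mz_beta_bound hg (T ^ ϑ) hy1 1 one_pos).trans ?_
      have hA : 0 ≤ B := by
        have h1 : 0 ≤ A := (norm_nonneg _).trans hg.b1
        have h2 : 0 ≤ mz_Psi 1 := by unfold mz_Psi; simp
        positivity
      push_cast
      rw [one_mul]
      apply div_le_self hA
      rw [hyϑ]; linarith
    refine mz_E6 hg (T ^ ϑ) hy T σ K ϑ C B hT hyT hϑ hyϑ hexp hσ (by linarith) (by linarith) Bg hBg hC0 ?_ hMB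
    apply hC (T ^ ϑ) hy1 (by rw [hyϑ]; linarith)
    rw [hyϑ]
    have h2 : 2 / ϑ * (ϑ * Real.log T) = 2 * Real.log T := by field_simp
    rw [h2]
    have hf : (0:ℝ) < (⌊2 * T⌋₊ : ℝ) := by
      have : 0 < ⌊2 * T⌋₊ := Nat.floor_pos.2 (by linarith)
      exact_mod_cast this
    calc Real.log (⌊2 * T⌋₊ : ℝ) ≤ Real.log (T ^ 2) := Real.log_le_log hf ((Nat.floor_le (by linarith)).trans (by nlinarith))
      _ = 2 * Real.log T := by rw [Real.log_pow]; push_cast; rfl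
  · have := mz_CA_nonneg
    positivity

lemma mz_fac1 (U : Set ℂ) (hU : IsOpen U) (a : ℂ) (ha : a ∈ U) (k : ℕ) : ∀ f : ℂ → ℂ,
    DifferentiableOn ℂ f U → (k : ℕ∞) ≤ analyticOrderAt f a →
    ∃ h : ℂ → ℂ, DifferentiableOn ℂ h U ∧ ∀ z, f z = (z - a) ^ k * h z := by
  induction k with
  | zero => intro f hf _; exact ⟨f, hf, fun z => by simp⟩
  | succ k ih =>
    intro f hf hk
    have hUa : U ∈ nhds a := hU.mem_nhds ha
    have hd : DifferentiableOn ℂ (dslope f a) U := (Complex.differentiableOn_dslope hUa).2 hf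
    have hfa : f a = 0 := by
      by_contra hne
      have : analyticOrderAt f a = 0 := analyticOrderAt_eq_zero.2 (Or.inr hne)
      rw [this] at hk
      simp at hk
    have hfe : ∀ z, f z = (z - a) * dslope f a z := by
      intro z
      have := sub_smul_dslope f a z
      rw [smul_eq_mul, hfa, sub_zero] at this
      exact this.symm
    have hda : AnalyticAt ℂ (dslope f a) a := hd.analyticAt hUa
    have hla : AnalyticAt ℂ (fun z : ℂ => z - a) a := by fun_prop
    have hl1 : analyticOrderAt (fun z : ℂ => z - a) a = 1 := by
      have : ((1 : ℕ) : ℕ∞) = 1 := rfl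
      rw [← this, hla.analyticOrderAt_eq_natCast]
      exact ⟨fun _ => 1, by fun_prop, one_ne_zero, by simp⟩
    have ho : analyticOrderAt f a = 1 + analyticOrderAt (dslope f a) a := by
      have : f = (fun z : ℂ => z - a) * dslope f a := funext fun z => hfe z
      conv_lhs => rw [this]
      rw [analyticOrderAt_mul hla hda, hl1]
    have hk' : (k : ℕ∞) ≤ analyticOrderAt (dslope f a) a := by
      rw [ho] at hk
      push_cast at hk
      rw [add_comm] at hk
      exact (ENat.add_le_add_iff_left (by simp)).1 hk
    obtain ⟨h, hh, hz⟩ := ih _ hd hk'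
    exact ⟨h, hh, fun z => by rw [hfe z, hz z]; ring⟩

lemma mz_fac (U : Set ℂ) (hU : IsOpen U) (S : Finset ℂ) (m : ℂ → ℕ) : ∀ f : ℂ → ℂ,
    DifferentiableOn ℂ f U → (∀ a ∈ S, a ∈ U ∧ (m a : ℕ∞) ≤ analyticOrderAt f a) →
    ∃ h : ℂ → ℂ, DifferentiableOn ℂ h U ∧ ∀ z, f z = (∏ a ∈ S, (z - a) ^ m a) * h z := by
  classical
  induction S using Finset.induction_on with
  | empty => intro f hf _; exact ⟨f, hf, fun z => by simp⟩
  | insert a S haS ih =>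
    intro f hf hm
    obtain ⟨haU, hma⟩ := hm a (Finset.mem_insert_self _ _)
    obtain ⟨h, hh, hz⟩ := mz_fac1 U hU a haU (m a) f hf hma
    obtain ⟨h2, hh2, hz2⟩ := ih h hh (by
      intro b hb
      obtain ⟨hbU, hmb⟩ := hm b (Finset.mem_insert_of_mem hb)
      refine ⟨hbU, hmb.trans (le_of_eq ?_)⟩
      have hba : b ≠ a := by rintro rfl; exact haS hb
      have : f = (fun z : ℂ => (z - a) ^ m a) * h := funext fun z => hz z
      rw [this, analyticOrderAt_mul (by fun_prop) (hh.analyticAt (hU.mem_nhds hbU))]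
      have : analyticOrderAt (fun z : ℂ => (z - a) ^ m a) b = 0 :=
        analyticOrderAt_eq_zero.2 (Or.inr (pow_ne_zero _ (sub_ne_zero.2 hba)))
      rw [this, zero_add])
    exact ⟨h2, hh2, fun z => by rw [hz z, hz2 z, Finset.prod_insert haS]; ring⟩

lemma mz_circ (U : Set ℂ) (hU : IsOpen U) (h : ℂ → ℂ) (hh : DifferentiableOn ℂ h U) (w : ℂ) (R : ℝ)
    (hR : 0 < R) (hball : Metric.closedBall w R ⊆ U) :
    ENNReal.ofReal (2 * π) * ‖h w‖ₑ ^ 2 ≤ ∫⁻ θ in Set.Ioo (-π) π, ‖h (circleMap w R θ)‖ₑ ^ 2 := by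
  have hd : DiffContOnCl ℂ (fun z => h z ^ 2) (Metric.ball w |R|) := by
    rw [abs_of_pos hR]
    apply DifferentiableOn.diffContOnCl
    rw [closure_ball _ hR.ne']
    exact (hh.mono hball).pow 2
  have h1 := hd.circleAverage
  rw [Real.circleAverage_def] at h1
  have hper : Function.Periodic (fun θ => h (circleMap w R θ) ^ 2) (2 * π) := by
    intro θ
    simp only [periodic_circleMap w R θ]
  have h2 := hper.intervalIntegral_add_eq 0 (-π)
  rw [zero_add, show -π + 2 * π = π by ring] at h2
  rw [h2, intervalIntegral.integral_of_le (by linarith [Real.pi_pos]), integral_Ioc_eq_integral_Ioo] at h1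
  have h3 : (2 * π : ℝ) • h w ^ 2 = ∫ θ in Set.Ioo (-π) π, h (circleMap w R θ) ^ 2 := by
    rw [← h1, smul_smul, mul_inv_cancel₀ (by positivity), one_smul]
  have h4 := enorm_integral_le_lintegral_enorm (μ := volume.restrict (Set.Ioo (-π) π)) (fun θ => h (circleMap w R θ) ^ 2)
  rw [← h3, enorm_smul] at h4
  simp only [enorm_pow] at h4
  rwa [Real.enorm_of_nonneg (by positivity)] at h4

lemma mz_circ2 (U : Set ℂ) (hU : IsOpen U) (G : ℂ → ℂ) (hG : DifferentiableOn ℂ G U) (S : Finset ℂ)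
    (m : ℂ → ℕ) (w : ℂ) (r R : ℝ) (hr : 0 < r) (hR : 3 * r ≤ R) (hball : Metric.closedBall w R ⊆ U)
    (hS : ∀ a ∈ S, ‖w - a‖ ≤ r) (hm : ∀ a ∈ S, (m a : ℕ∞) ≤ analyticOrderAt G a) :
    ENNReal.ofReal (2 * π) * (‖G w‖ₑ ^ 2 * 4 ^ (∑ a ∈ S, m a)) ≤
      ∫⁻ θ in Set.Ioo (-π) π, ‖G (circleMap w R θ)‖ₑ ^ 2 := by
  obtain ⟨h, hh, hz⟩ := mz_fac U hU S m G hG (fun a ha => ⟨hball (by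
    rw [Metric.mem_closedBall, dist_comm, dist_eq_norm]; linarith [hS a ha]), hm a ha⟩)
  have h1 := mz_circ U hU h hh w R (by linarith) hball
  set Q : ℂ → ℂ := fun z => ∏ a ∈ S, (z - a) ^ m a
  have hQ : ∀ θ : ℝ, ‖Q w‖ * 2 ^ (∑ a ∈ S, m a) ≤ ‖Q (circleMap w R θ)‖ := by
    intro θ
    simp only [Q, norm_prod, norm_pow]
    rw [← Finset.prod_pow_eq_pow_sum, ← Finset.prod_mul_distrib]
    apply Finset.prod_le_prod
    · intros; positivity
    · intro a ha
      rw [← mul_pow]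
      apply pow_le_pow_left₀ (by positivity)
      have h2 : ‖circleMap w R θ - w‖ = R := by
        rw [circleMap_sub_center, norm_circleMap_zero, abs_of_pos (by linarith)]
      have h3 : ‖circleMap w R θ - w‖ ≤ ‖circleMap w R θ - a‖ + ‖w - a‖ := by
        have := norm_sub_le (circleMap w R θ - a) (w - a)
        simpa using this
      have := hS a ha
      linarith
  have hQe : ∀ θ : ℝ, ‖Q w‖ₑ ^ 2 * 4 ^ (∑ a ∈ S, m a) ≤ ‖Q (circleMap w R θ)‖ₑ ^ 2 := by
    intro θ
    have h4 : ‖Q w‖ₑ * 2 ^ (∑ a ∈ S, m a) ≤ ‖Q (circleMap w R θ)‖ₑ := by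
      rw [← ofReal_norm_eq_enorm, ← ofReal_norm_eq_enorm]
      have : (2 : ENNReal) ^ (∑ a ∈ S, m a) = ENNReal.ofReal (2 ^ (∑ a ∈ S, m a)) := by
        rw [ENNReal.ofReal_pow (by norm_num)]; simp
      rw [this, ← ENNReal.ofReal_mul (norm_nonneg _)]
      exact ENNReal.ofReal_le_ofReal (hQ θ)
    calc _ = (‖Q w‖ₑ * 2 ^ (∑ a ∈ S, m a)) ^ 2 := by
          rw [mul_pow, ← pow_mul, mul_comm _ 2, pow_mul]; norm_num
      _ ≤ _ := by gcongr
  have hc : ‖Q w‖ₑ ^ 2 * 4 ^ (∑ a ∈ S, m a) ≠ ⊤ := by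
    apply ENNReal.mul_ne_top
    · exact ENNReal.pow_ne_top enorm_ne_top
    · exact ENNReal.pow_ne_top (by norm_num)
  calc _ = (‖Q w‖ₑ ^ 2 * 4 ^ (∑ a ∈ S, m a)) * (ENNReal.ofReal (2 * π) * ‖h w‖ₑ ^ 2) := by
        rw [show G w = Q w * h w from hz w, enorm_mul]; ring
    _ ≤ (‖Q w‖ₑ ^ 2 * 4 ^ (∑ a ∈ S, m a)) * ∫⁻ θ in Set.Ioo (-π) π, ‖h (circleMap w R θ)‖ₑ ^ 2 := by gcongr
    _ = ∫⁻ θ in Set.Ioo (-π) π, (‖Q w‖ₑ ^ 2 * 4 ^ (∑ a ∈ S, m a)) * ‖h (circleMap w R θ)‖ₑ ^ 2 :=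
        (lintegral_const_mul' _ _ hc).symm
    _ ≤ _ := by
        apply lintegral_mono
        intro θ
        simp only
        rw [show G (circleMap w R θ) = Q (circleMap w R θ) * h (circleMap w R θ) from hz _, enorm_mul, mul_pow]
        gcongr
        exact hQe θ

lemma mz_polar (F : ℂ → ENNReal) (hF : Measurable F) (w : ℂ) (r : ℝ) (hr : 0 < r) (X : ENNReal)
    (hX : ∀ R, 3 * r ≤ R → R ≤ 4 * r → X ≤ ∫⁻ θ in Set.Ioo (-π) π, F (circleMap w R θ)) :
    ENNReal.ofReal (r ^ 2) * X ≤ ∫⁻ z in Metric.closedBall w (4 * r), F z := by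
  set f : ℂ → ENNReal := fun p => (Metric.closedBall w (4 * r)).indicator F (w + p)
  have hfm : Measurable f := (hF.indicator Metric.isClosed_closedBall.measurableSet).comp (by fun_prop)
  have h1 : ∫⁻ z in Metric.closedBall w (4 * r), F z = ∫⁻ p, f p := by
    rw [← lintegral_indicator Metric.isClosed_closedBall.measurableSet]
    exact (lintegral_add_left_eq_self _ w).symm
  rw [h1, ← Complex.lintegral_comp_polarCoord_symm f, polarCoord_target]
  have hm2 : Measurable (fun p : ℝ × ℝ => ENNReal.ofReal p.1 • f (Complex.polarCoord.symm p)) := by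
    have : Measurable (fun p : ℝ × ℝ => Complex.polarCoord.symm p) := by
      simp only [Complex.polarCoord_symm_apply]
      fun_prop
    exact (by fun_prop : Measurable fun p : ℝ × ℝ => ENNReal.ofReal p.1).mul (hfm.comp this)
  calc ENNReal.ofReal (r ^ 2) * X ≤ ENNReal.ofReal (3 * r) * X * ENNReal.ofReal r := by
        rw [mul_right_comm, ← ENNReal.ofReal_mul (by positivity)]
        gcongr
        nlinarith
    _ = ∫⁻ R in Set.Icc (3 * r) (4 * r), ENNReal.ofReal (3 * r) * X := by
        rw [setLIntegral_const, Real.volume_Icc]; congr 2; ring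
    _ ≤ ∫⁻ R in Set.Icc (3 * r) (4 * r), ∫⁻ θ in Set.Ioo (-π) π, ENNReal.ofReal R • f (Complex.polarCoord.symm (R, θ)) := by
        apply setLIntegral_mono' measurableSet_Icc
        rintro R ⟨hR1, hR2⟩
        simp only [smul_eq_mul]
        rw [lintegral_const_mul' _ _ ENNReal.ofReal_ne_top]
        refine mul_le_mul' (ENNReal.ofReal_le_ofReal hR1) ((hX R hR1 hR2).trans (le_of_eq ?_))
        apply lintegral_congr
        intro θ
        have e : w + Complex.polarCoord.symm (R, θ) = circleMap w R θ := by
          rw [Complex.polarCoord_symm_apply, circleMap, Complex.exp_mul_I]; simp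
        simp only [f, e]
        rw [Set.indicator_of_mem]
        rw [Metric.mem_closedBall, dist_eq_norm, circleMap_sub_center, norm_circleMap_zero, abs_of_pos (by linarith)]
        exact hR2
    _ ≤ ∫⁻ R in Set.Ioi 0, ∫⁻ θ in Set.Ioo (-π) π, ENNReal.ofReal R • f (Complex.polarCoord.symm (R, θ)) :=
        lintegral_mono_set (fun R hR => lt_of_lt_of_le (by positivity) hR.1)
    _ = _ := by
        rw [Measure.volume_eq_prod, ← Measure.prod_restrict, lintegral_prod _ hm2.aemeasurable]

lemma mz_ball (U : Set ℂ) (hU : IsOpen U) (G : ℂ → ℂ) (hGm : Measurable G) (hG : DifferentiableOn ℂ G U) (S : Finset ℂ)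
    (m : ℂ → ℕ) (w : ℂ) (r : ℝ) (hr : 0 < r) (hball : Metric.closedBall w (4 * r) ⊆ U)
    (hS : ∀ a ∈ S, ‖w - a‖ ≤ r) (hm : ∀ a ∈ S, (m a : ℕ∞) ≤ analyticOrderAt G a) :
    ENNReal.ofReal (r ^ 2) * (‖G w‖ₑ ^ 2 * 4 ^ (∑ a ∈ S, m a)) ≤
      ∫⁻ z in Metric.closedBall w (4 * r), ‖G z‖ₑ ^ 2 := by
  apply mz_polar (fun z => ‖G z‖ₑ ^ 2) (by fun_prop) w r hr
  intro R h1 h2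
  refine le_trans ?_ (mz_circ2 U hU G hG S m w r R hr h1 ((Metric.closedBall_subset_closedBall h2).trans hball) hS hm)
  have : (1 : ENNReal) ≤ ENNReal.ofReal (2 * π) := by
    rw [ENNReal.one_le_ofReal]; linarith [Real.pi_gt_three]
  exact le_mul_of_one_le_left' this

lemma mz_box (F : ℂ → ENNReal) (hF : Measurable F) (x t r : ℝ) :
    ∫⁻ z in Metric.closedBall (x + t * Complex.I : ℂ) r, F z ≤
      ∫⁻ s in Set.Icc (t - r) (t + r), ∫⁻ σ in Set.Icc (x - r) (x + r), F (σ + s * Complex.I) := by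
  have h1 : Metric.closedBall (x + t * Complex.I : ℂ) r ⊆
      Complex.measurableEquivRealProd ⁻¹' (Set.Icc (x - r) (x + r) ×ˢ Set.Icc (t - r) (t + r)) := by
    intro z hz
    rw [Metric.mem_closedBall, dist_eq_norm] at hz
    have h1 := (Complex.abs_re_le_norm _).trans hz
    have h2 := (Complex.abs_im_le_norm _).trans hz
    simp only [Complex.sub_re, Complex.add_re, Complex.ofReal_re, Complex.mul_re, Complex.I_re, Complex.I_im, Complex.ofReal_im, Complex.sub_im, Complex.add_im, Complex.mul_im] at h1 h2
    rw [abs_le] at h1 h2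
    simp only [Set.mem_preimage, Complex.measurableEquivRealProd_apply, Set.mem_prod, Set.mem_Icc]
    refine ⟨⟨?_, ?_⟩, ?_, ?_⟩ <;> linarith
  refine (lintegral_mono_set h1).trans (le_of_eq ?_)
  have h2 := (Complex.volume_preserving_equiv_real_prod).setLIntegral_comp_preimage_emb Complex.measurableEquivRealProd.measurableEmbedding
    (fun p : ℝ × ℝ => F (p.1 + p.2 * Complex.I)) (Set.Icc (x - r) (x + r) ×ˢ Set.Icc (t - r) (t + r))
  simp only [Complex.measurableEquivRealProd_apply, Complex.re_add_im] at h2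
  rw [h2, Measure.volume_eq_prod, ← Measure.prod_restrict, lintegral_prod_symm]
  exact (hF.comp (by fun_prop : Measurable fun p : ℝ × ℝ => (p.1 + p.2 * Complex.I : ℂ))).aemeasurable

lemma mz_count (J : Finset ℤ) (x c : ℝ) (hc : 0 ≤ c) : ((J.filter (fun j : ℤ => |(j:ℝ) - x| ≤ c)).card : ℝ) ≤ 2 * c + 1 := by
  have h1 : J.filter (fun j : ℤ => |(j:ℝ) - x| ≤ c) ⊆ Finset.Icc ⌈x - c⌉ ⌊x + c⌋ := by
    intro j hj
    rw [Finset.mem_filter, abs_le] at hj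
    rw [Finset.mem_Icc, Int.ceil_le, Int.le_floor]
    constructor <;> linarith [hj.2.1, hj.2.2]
  have h2 := Finset.card_le_card h1
  rw [Int.card_Icc] at h2
  have h3 : ((⌊x + c⌋ + 1 - ⌈x - c⌉).toNat : ℝ) ≤ 2 * c + 1 := by
    rcases le_total 0 (⌊x + c⌋ + 1 - ⌈x - c⌉) with h | h
    · have : (((⌊x + c⌋ + 1 - ⌈x - c⌉).toNat : ℤ) : ℝ) = ((⌊x + c⌋ + 1 - ⌈x - c⌉ : ℤ) : ℝ) := by
        rw [Int.toNat_of_nonneg h]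
      have h5 : (((⌊x + c⌋ + 1 - ⌈x - c⌉).toNat : ℤ) : ℝ) = ((⌊x + c⌋ + 1 - ⌈x - c⌉).toNat : ℝ) := by norm_cast
      rw [← h5, this]
      push_cast
      linarith [Int.floor_le (x + c), Int.le_ceil (x - c)]
    · rw [Int.toNat_of_nonpos h]; simp; linarith
  exact le_trans (by exact_mod_cast h2) h3

lemma mz_overlap (H : ℝ → ENNReal) (hH : Measurable H) (J : Finset ℤ) (L c T N : ℝ) (hL : 0 < L) (hc : 0 ≤ c)
    (hN : 2 * c + 1 ≤ N) (hJ : ∀ j ∈ J, T / 2 ≤ j / L - c / L ∧ j / L + c / L ≤ 5 * T / 2) :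
    ∑ j ∈ J, ∫⁻ t in Set.Icc ((j:ℝ) / L - c / L) (j / L + c / L), H t ≤
      ENNReal.ofReal N * ∫⁻ t in Set.Icc (T / 2) (5 * T / 2), H t := by
  have h1 : ∀ j ∈ J, ∫⁻ t in Set.Icc ((j:ℝ) / L - c / L) (j / L + c / L), H t =
      ∫⁻ t in Set.Icc (T / 2) (5 * T / 2), (Set.Icc ((j:ℝ) / L - c / L) (j / L + c / L)).indicator H t := by
    intro j hj
    rw [setLIntegral_indicator measurableSet_Icc, Set.inter_eq_left.2]
    exact Set.Icc_subset_Icc (hJ j hj).1 (hJ j hj).2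
  rw [Finset.sum_congr rfl h1, ← lintegral_finsetSum _ (fun j _ => hH.indicator measurableSet_Icc),
    ← lintegral_const_mul' _ _ ENNReal.ofReal_ne_top]
  apply lintegral_mono
  intro t
  simp only [Set.indicator_apply]
  rw [← Finset.sum_filter, Finset.sum_const, nsmul_eq_mul]
  refine mul_le_mul' ?_ le_rfl
  rw [← ENNReal.ofReal_natCast]
  apply ENNReal.ofReal_le_ofReal
  refine le_trans ?_ ((mz_count J (t * L) c hc).trans hN)
  norm_cast
  apply Finset.card_le_card
  intro j
  simp only [Finset.mem_filter, Set.mem_Icc]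
  rintro ⟨hj, h1, h2⟩
  refine ⟨hj, ?_⟩
  rw [← sub_div, div_le_iff₀ hL] at h1
  rw [← add_div, le_div_iff₀ hL] at h2
  rw [abs_le]
  constructor <;> linarith

lemma mz_F (U : Set ℂ) (hU : IsOpen U) (G : ℂ → ℂ) (hGm : Measurable G) (hG : DifferentiableOn ℂ G U)
    (hUp : ∀ z : ℂ, 0 < z.im → z ∈ U)
    (Z : Finset ℝ) (m : ℝ → ℕ) (α a L r T N : ℝ) (X : ENNReal) (hL : 0 < L) (ha : 0 ≤ a) (hα : |α| ≤ a / L) (hr : r = (1 + a) / L)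
    (hZ : ∀ γ ∈ Z, T < γ ∧ γ ≤ 2 * T) (hm : ∀ γ ∈ Z, (m γ : ℕ∞) ≤ analyticOrderAt G (1 / 2 + γ * Complex.I))
    (hT : 6 * r ≤ T / 2) (hT0 : 0 < T) (hN : 10 * (1 + a) + 1 ≤ N)
    (hX : ∀ σ : ℝ, |σ - 1 / 2| ≤ 4 * r → ∫⁻ t in Set.Icc (T / 2) (5 * T / 2), ‖G (σ + t * Complex.I)‖ₑ ^ 2 ≤ X) :
    ENNReal.ofReal (r ^ 2) * ∑ γ ∈ Z, (m γ : ENNReal) * ‖G (1 / 2 + γ * Complex.I + α * Complex.I)‖ₑ ^ 2 ≤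
      ENNReal.ofReal N * (ENNReal.ofReal (8 * r) * X) := by
  classical
  have hr0 : 0 < r := by rw [hr]; positivity
  set H : ℝ → ENNReal := fun t => ∫⁻ σ in Set.Icc (1 / 2 - 4 * r) (1 / 2 + 4 * r), ‖G (σ + t * Complex.I)‖ₑ ^ 2 with hHdef
  have hFm : Measurable (fun p : ℝ × ℝ => ‖G (p.2 + p.1 * Complex.I)‖ₑ ^ 2) :=
    ((hGm.comp (by fun_prop : Measurable fun p : ℝ × ℝ => (p.2 + p.1 * Complex.I : ℂ))).enorm).pow_const 2
  have hHm : Measurable H := hFm.lintegral_prod_right'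
  set J : Finset ℤ := Z.image (fun γ => ⌊γ * L⌋) with hJdef
  have hLr : 1 / L ≤ r := by rw [hr]; gcongr; linarith
  have hcell : ∀ j ∈ J, ∀ γ ∈ Z, ⌊γ * L⌋ = j → (j : ℝ) / L ≤ γ ∧ γ < j / L + 1 / L := by
    intro j _ γ _ h
    have := Int.floor_eq_iff.1 h
    rw [div_le_iff₀ hL, ← add_div, lt_div_iff₀ hL]
    exact this
  have hX2 : ∫⁻ t in Set.Icc (T / 2) (5 * T / 2), H t ≤ ENNReal.ofReal (8 * r) * X := by
    rw [hHdef, lintegral_lintegral_swap hFm.aemeasurable]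
    calc _ ≤ ∫⁻ σ in Set.Icc (1 / 2 - 4 * r) (1 / 2 + 4 * r), X := by
          apply setLIntegral_mono' measurableSet_Icc
          intro σ hσ
          apply hX
          rw [abs_le]; constructor <;> linarith [hσ.1, hσ.2]
      _ = _ := by
          rw [setLIntegral_const, Real.volume_Icc, mul_comm]; congr 2; ring
  have hc5 : 5 * (1 + a) / L = 5 * r := by rw [hr]; ring
  have hov := mz_overlap H hHm J L (5 * (1 + a)) T N hL (by positivity) (by linarith) (by
    intro j hj
    obtain ⟨γ, hγ, rfl⟩ := Finset.mem_image.1 hj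
    obtain ⟨h1, h2⟩ := hcell _ hj γ hγ rfl
    obtain ⟨h3, h4⟩ := hZ γ hγ
    rw [hc5]
    constructor <;> linarith)
  refine le_trans ?_ (hov.trans (mul_le_mul' le_rfl hX2))
  rw [← Finset.sum_fiberwise_of_maps_to (s := Z) (t := J) (g := fun γ => ⌊γ * L⌋) (fun γ hγ => Finset.mem_image_of_mem _ hγ), Finset.mul_sum]
  apply Finset.sum_le_sum
  intro j hj
  set Zj := Z.filter (fun γ => ⌊γ * L⌋ = j) with hZj
  set B := ∫⁻ t in Set.Icc ((j:ℝ) / L - 5 * (1 + a) / L) (j / L + 5 * (1 + a) / L), H t with hB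
  set n := ∑ γ ∈ Zj, m γ with hn
  have key : ∀ γ ∈ Zj, ENNReal.ofReal (r ^ 2) * (‖G (1 / 2 + γ * Complex.I + α * Complex.I)‖ₑ ^ 2 * 4 ^ n) ≤ B := by
    intro γ hγ
    obtain ⟨hγZ, hγj⟩ := Finset.mem_filter.1 hγ
    obtain ⟨h1, h2⟩ := hcell j hj γ hγZ hγj
    obtain ⟨h3, h4⟩ := hZ γ hγZ
    obtain ⟨h5, h6⟩ := abs_le.1 hα
    have har : a / L ≤ r := by rw [hr]; gcongr; linarith
    have har2 : 1 / L + a / L = r := by rw [hr]; ring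
    have hinj : Function.Injective (fun γ : ℝ => (1 / 2 + γ * Complex.I : ℂ)) := by
      intro x y h
      simpa using h
    have hw : (1 / 2 + γ * Complex.I + α * Complex.I : ℂ) = ((1 / 2 : ℝ) : ℂ) + ((γ + α : ℝ) : ℂ) * Complex.I := by
      push_cast; ring
    have hb := mz_ball U hU G hGm hG (Zj.image (fun γ : ℝ => (1 / 2 + γ * Complex.I : ℂ)))
      (fun z => m z.im) (1 / 2 + γ * Complex.I + α * Complex.I) r hr0 (by
        intro z hz
        apply hUp
        rw [Metric.mem_closedBall, dist_eq_norm, hw] at hz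
        have h7 := (Complex.abs_im_le_norm _).trans hz
        rw [abs_le] at h7
        simp at h7
        linarith) (by
        intro b hb
        obtain ⟨γ', hγ', rfl⟩ := Finset.mem_image.1 hb
        obtain ⟨hγZ', hγj'⟩ := Finset.mem_filter.1 hγ'
        obtain ⟨h1', h2'⟩ := hcell j hj γ' hγZ' hγj'
        have : (1 / 2 + γ * Complex.I + α * Complex.I - (1 / 2 + γ' * Complex.I) : ℂ) = ((γ - γ' + α : ℝ) : ℂ) * Complex.I := by
          push_cast; ring
        rw [this, norm_mul, Complex.norm_I, mul_one, Complex.norm_real, Real.norm_eq_abs, abs_le]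
        constructor <;> linarith) (by
        intro b hb
        obtain ⟨γ', hγ', rfl⟩ := Finset.mem_image.1 hb
        have := hm γ' (Finset.mem_filter.1 hγ').1
        simpa using this)
    rw [Finset.sum_image (fun x _ y _ h => hinj h)] at hb
    have : ∑ x ∈ Zj, m ((1 / 2 + (x:ℂ) * Complex.I).im) = n := by
      rw [hn]; apply Finset.sum_congr rfl; intro x _; congr 1; simp
    rw [this] at hb
    refine hb.trans ?_
    rw [hw]
    refine (mz_box (fun z => ‖G z‖ₑ ^ 2) (by fun_prop) _ _ _).trans ?_
    rw [hB, hc5]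
    apply lintegral_mono_set
    apply Set.Icc_subset_Icc <;> linarith
  have h4 : (4 : ENNReal) ^ n ≠ 0 := by simp
  have h4' : (4 : ENNReal) ^ n ≠ ⊤ := ENNReal.pow_ne_top (by norm_num)
  rw [← ENNReal.mul_le_mul_iff_left h4 h4']
  calc _ = ∑ γ ∈ Zj, (m γ : ENNReal) * (ENNReal.ofReal (r ^ 2) * (‖G (1 / 2 + γ * Complex.I + α * Complex.I)‖ₑ ^ 2 * 4 ^ n)) := by
        rw [Finset.mul_sum, Finset.sum_mul]
        apply Finset.sum_congr rfl; intro γ _; ring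
    _ ≤ ∑ γ ∈ Zj, (m γ : ENNReal) * B := Finset.sum_le_sum (fun γ hγ => mul_le_mul' le_rfl (key γ hγ))
    _ = (n : ENNReal) * B := by rw [← Finset.sum_mul, hn]; push_cast; rfl
    _ ≤ B * 4 ^ n := by
        rw [mul_comm]
        refine mul_le_mul' le_rfl ?_
        have : n ≤ 4 ^ n := (Nat.lt_pow_self (by norm_num)).le
        exact_mod_cast this

lemma mz_polyexp (c : ℂ) (Q : Polynomial ℂ) (x : ℝ) :
    HasDerivAt (fun x : ℝ => Q.eval (x:ℂ) * Complex.exp (c * (1 - x)))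
      ((Polynomial.derivative Q - Polynomial.C c * Q).eval (x:ℂ) * Complex.exp (c * (1 - x))) x := by
  have h1 : HasDerivAt (fun z : ℂ => Q.eval z * Complex.exp (c * (1 - z)))
      ((Polynomial.derivative Q).eval (x:ℂ) * Complex.exp (c * (1 - x)) + Q.eval (x:ℂ) * (Complex.exp (c * (1 - x)) * (c * (-1)))) x := by
    apply (Q.hasDerivAt (x:ℂ)).mul
    apply HasDerivAt.cexp
    apply HasDerivAt.const_mul
    exact (hasDerivAt_id (x:ℂ)).const_sub 1
  convert h1.comp_ofReal using 1
  simp only [Polynomial.eval_sub, Polynomial.eval_mul, Polynomial.eval_C]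
  ring

lemma mz_gC2 (c : ℂ) (P : Polynomial ℝ) (hP : P.eval 0 = 0) :
    ∃ g1 g2 A, mz_C2 (fun x : ℝ => ((P.eval x : ℝ) : ℂ) * Complex.exp (c * (1 - x))) g1 g2 A := by
  have e : (fun x : ℝ => ((P.eval x : ℝ) : ℂ) * Complex.exp (c * (1 - x))) =
      fun x : ℝ => (P.map Complex.ofRealHom).eval (x:ℂ) * Complex.exp (c * (1 - x)) := by
    funext x
    congr 1
    rw [Polynomial.eval_map]
    exact (Polynomial.eval₂_hom Complex.ofRealHom x).symm
  set Q := P.map Complex.ofRealHom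
  set D : Polynomial ℂ → Polynomial ℂ := fun Q => Polynomial.derivative Q - Polynomial.C c * Q
  refine ⟨fun x : ℝ => (D Q).eval (x:ℂ) * Complex.exp (c * (1 - x)), fun x : ℝ => (D (D Q)).eval (x:ℂ) * Complex.exp (c * (1 - x)), ?_⟩
  apply mz_C2_exists
  · rw [e]; exact mz_polyexp c Q
  · exact mz_polyexp c (D Q)
  · fun_prop
  · simp [hP]

lemma mz_moll (κ η ϑ : ℝ) (P : Polynomial ℝ) (T : ℝ) (hϑ : 0 < ϑ) (hT : 1 < T) (s : ℂ) :
    moll T ϑ P (s + 2 * π * Complex.I * η / Real.log T) =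
      mz_MB (fun x : ℝ => ((P.eval x : ℝ) : ℂ) * Complex.exp ((-2 * π * Complex.I * (η - κ) * ϑ) * (1 - x)))
        (T ^ ϑ) (s + 2 * π * Complex.I * κ / Real.log T) := by
  have hL : 0 < Real.log T := Real.log_pos hT
  have hLc : (Real.log T : ℂ) ≠ 0 := by exact_mod_cast hL.ne'
  have hT0 : 0 < T := by linarith
  have hy : 0 < T ^ ϑ := Real.rpow_pos_of_pos hT0 _
  unfold moll mz_MB mz_b
  have : Finset.Icc 1 ⌊T ^ ϑ⌋₊ = Finset.Ioc 0 ⌊T ^ ϑ⌋₊ := by ext; simp [Nat.succ_le_iff]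
  rw [this]
  apply Finset.sum_congr rfl
  intro n hn
  have hn0 : 0 < n := (Finset.mem_Ioc.1 hn).1
  have hnc : (n : ℂ) ≠ 0 := by exact_mod_cast hn0.ne'
  have hnr : (0 : ℝ) < n := by exact_mod_cast hn0
  have key : (n : ℂ) ^ (-(s + 2 * π * Complex.I * η / Real.log T)) =
      Complex.exp ((-2 * π * Complex.I * (η - κ) * ϑ) * (1 - (Real.log (T ^ ϑ / n) / Real.log (T ^ ϑ) : ℝ))) *
      (n : ℂ) ^ (-(s + 2 * π * Complex.I * κ / Real.log T)) := by
    rw [Complex.cpow_def_of_ne_zero hnc, Complex.cpow_def_of_ne_zero hnc, ← Complex.exp_add]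
    congr 1
    rw [Real.log_div hy.ne' hnr.ne', Real.log_rpow hT0, ← Complex.natCast_log]
    have hϑc : (ϑ : ℂ) ≠ 0 := by exact_mod_cast hϑ.ne'
    rw [Complex.ofReal_div, Complex.ofReal_sub, Complex.ofReal_mul]
    field_simp
    ring
  rw [key]
  ring

lemma mz_ord (γ : ℝ) (hγ : γ ≠ 0) : (ordMult γ : ℕ∞) ≤ analyticOrderAt riemannZeta (1 / 2 + γ * Complex.I) := by
  have hne : (1 / 2 + γ * Complex.I : ℂ) ≠ 1 := by
    intro h
    have := congrArg Complex.im h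
    simp at this
    exact hγ this
  have han : AnalyticAt ℂ riemannZeta (1 / 2 + γ * Complex.I) := by
    have hd : DifferentiableOn ℂ riemannZeta {1}ᶜ := fun z hz => (differentiableAt_riemannZeta hz).differentiableWithinAt
    exact hd.analyticAt (isOpen_compl_singleton.mem_nhds hne)
  rw [natCast_le_analyticOrderAt_iff_iteratedDeriv_eq_zero han]
  intro i hi
  have := Nat.notMem_of_lt_sInf hi
  simpa using this

lemma mz_MB_diff (g : ℝ → ℂ) (y : ℝ) : Differentiable ℂ (mz_MB g y) := by
  unfold mz_MB
  intro s
  apply DifferentiableAt.fun_sum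
  intro k hk
  have hk0 : (k : ℂ) ≠ 0 := by exact_mod_cast (Finset.mem_Ioc.1 hk).1.ne'
  apply DifferentiableAt.const_mul
  exact (differentiableAt_id.neg).const_cpow (Or.inl hk0)

lemma mz_zeta_meas : Measurable riemannZeta := by
  apply measurable_of_continuousOn_compl_singleton 1
  intro z hz
  exact (differentiableAt_riemannZeta hz).continuousAt.continuousWithinAt

lemma mz_G_ord (g : ℝ → ℂ) (y γ : ℝ) (hγ : γ ≠ 0) :
    (ordMult γ : ℕ∞) ≤ analyticOrderAt (fun z => riemannZeta z * mz_MB g y z) (1 / 2 + γ * Complex.I) := by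
  have hne : (1 / 2 + γ * Complex.I : ℂ) ≠ 1 := by
    intro h
    have := congrArg Complex.im h
    simp at this
    exact hγ this
  have han : AnalyticAt ℂ riemannZeta (1 / 2 + γ * Complex.I) := by
    have hd : DifferentiableOn ℂ riemannZeta {1}ᶜ := fun z hz => (differentiableAt_riemannZeta hz).differentiableWithinAt
    exact hd.analyticAt (isOpen_compl_singleton.mem_nhds hne)
  have := analyticOrderAt_mul han ((mz_MB_diff g y).analyticAt (1 / 2 + γ * Complex.I))
  have e : (fun z => riemannZeta z * mz_MB g y z) = riemannZeta * mz_MB g y := rfl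
  rw [e, this]
  exact (mz_ord γ hγ).trans le_self_add

/-- Assume RH. Fix reals `κ, η`, a number `0 < ϑ < 1/2`, and a polynomial `P` with
`P(0) = 0`. Then as `T → ∞`,
`Σ_{T<γ≤2T} |ζ(ρ + 2πiκ/log T) M(ρ + 2πiη/log T, P)|² ≪ T log T`,
where `ρ = 1/2 + iγ` runs over the nontrivial zeros with ordinate in `(T, 2T]`, counted
with multiplicity. -/
theorem mollified_zeta_moment (hRH : RiemannHypothesis) (κ η ϑ : ℝ)
    (hϑ₀ : 0 < ϑ) (hϑ₁ : ϑ < 1 / 2) (P : Polynomial ℝ) (hP : P.eval 0 = 0) :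
    ∃ C : ℝ, 0 < C ∧ ∀ᶠ T : ℝ in atTop,
      (∑ᶠ γ ∈ {γ : ℝ | T < γ ∧ γ ≤ 2 * T ∧ riemannZeta (1 / 2 + γ * Complex.I) = 0},
        (ordMult γ : ℝ) *
          ‖riemannZeta ((1 / 2 + γ * Complex.I) + 2 * π * Complex.I * κ / Real.log T) *
            moll T ϑ P ((1 / 2 + γ * Complex.I) + 2 * π * Complex.I * η / Real.log T)‖ ^ 2)
        ≤ C * (T * Real.log T) := by
  obtain ⟨g1, g2, A, hg⟩ := mz_gC2 (-2 * π * Complex.I * (η - κ) * ϑ) P hP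
  set g : ℝ → ℂ := fun x : ℝ => ((P.eval x : ℝ) : ℂ) * Complex.exp ((-2 * π * Complex.I * (η - κ) * ϑ) * (1 - x)) with hgdef
  set a : ℝ := 2 * π * |κ| with ha
  have ha0 : 0 ≤ a := by positivity
  obtain ⟨C, hC0, hC⟩ := mz_E hg ϑ (4 * (1 + a)) hϑ₀ hϑ₁
  set N : ℝ := 10 * (1 + a) + 1 with hN
  refine ⟨N * 8 * C + 1, by positivity, ?_⟩
  filter_upwards [hC, eventually_ge_atTop (12 * (1 + a)), eventually_ge_atTop (Real.exp 1)] with T hE hT1 hT2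
  have hT0 : 1 < T := lt_of_lt_of_le (by simp) hT2
  have hL1 : 1 ≤ Real.log T := by
    rw [Real.le_log_iff_exp_le (by linarith)]; exact hT2
  set L := Real.log T with hLdef
  have hL : 0 < L := by linarith
  have hTL : 0 < T * L := by positivity
  set f : ℝ → ℝ := fun γ => (ordMult γ : ℝ) *
          ‖riemannZeta ((1 / 2 + γ * Complex.I) + 2 * π * Complex.I * κ / L) *
            moll T ϑ P ((1 / 2 + γ * Complex.I) + 2 * π * Complex.I * η / L)‖ ^ 2 with hf
  set s : Set ℝ := {γ : ℝ | T < γ ∧ γ ≤ 2 * T ∧ riemannZeta (1 / 2 + γ * Complex.I) = 0} with hs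
  change (∑ᶠ γ ∈ s, f γ) ≤ _
  by_cases hinf : (s ∩ Function.support f).Infinite
  · rw [finsum_mem_eq_zero_of_infinite hinf]; positivity
  have hfin : (s ∩ Function.support f).Finite := Set.not_infinite.1 hinf
  set Z := hfin.toFinset with hZ
  have hZs : ∀ γ ∈ Z, T < γ ∧ γ ≤ 2 * T := by
    intro γ hγ
    have := (hfin.mem_toFinset.1 hγ).1
    exact ⟨this.1, this.2.1⟩
  rw [finsum_mem_eq_sum_of_inter_support_eq (t := Z) f (by
    rw [hZ, hfin.coe_toFinset, Set.inter_assoc, Set.inter_self])]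
  set r := (1 + a) / L with hr
  have hr0 : 0 < r := by positivity
  set α : ℝ := 2 * π * κ / L with hα
  set G : ℂ → ℂ := fun z => riemannZeta z * mz_MB g (T ^ ϑ) z with hG
  have hmain := mz_F {1}ᶜ isOpen_compl_singleton G
    (mz_zeta_meas.mul (mz_MB_diff g (T ^ ϑ)).continuous.measurable)
    (fun z hz => ((differentiableAt_riemannZeta hz).mul (mz_MB_diff g (T ^ ϑ) z)).differentiableWithinAt)
    (by
      intro z hz h
      rw [Set.mem_singleton_iff] at h
      rw [h] at hz; simp at hz)
    Z ordMult α a L r T N (ENNReal.ofReal (C * T)) hL ha0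
    (by rw [hα, ha, abs_div, abs_of_pos hL, abs_mul, abs_of_pos (by positivity : 0 < 2 * π)]) hr hZs
    (fun γ hγ => mz_G_ord g _ γ (by linarith [(hZs γ hγ).1]))
    (by
      have : r ≤ 1 + a := div_le_self (by positivity) hL1
      linarith) (by linarith) le_rfl
    (by
      intro σ hσ
      apply hE σ
      rw [hr] at hσ
      rw [mul_div_assoc]; exact hσ)
  have hterm : ∀ γ ∈ Z, (ordMult γ : ENNReal) * ‖G (1 / 2 + γ * Complex.I + α * Complex.I)‖ₑ ^ 2 = ENNReal.ofReal (f γ) := by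
    intro γ _
    simp only [hf]
    rw [ENNReal.ofReal_mul (by positivity), ENNReal.ofReal_natCast, ENNReal.ofReal_pow (norm_nonneg _), ofReal_norm_eq_enorm,
      mz_moll κ η ϑ P T hϑ₀ hT0]
    have : (1 / 2 + γ * Complex.I + α * Complex.I : ℂ) = 1 / 2 + γ * Complex.I + 2 * π * Complex.I * κ / L := by
      rw [hα]; push_cast; ring
    rw [this]
  rw [Finset.sum_congr rfl hterm, ← ENNReal.ofReal_sum_of_nonneg (fun γ _ => by simp only [hf]; positivity),
    ← ENNReal.ofReal_mul (by positivity), ← ENNReal.ofReal_mul (by positivity), ← ENNReal.ofReal_mul (by positivity),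
    ENNReal.ofReal_le_ofReal_iff (by positivity)] at hmain
  have h2 : r * ∑ γ ∈ Z, f γ ≤ N * 8 * (C * T) := by
    have : r * (r * ∑ γ ∈ Z, f γ) ≤ r * (N * 8 * (C * T)) := by
      calc _ = r ^ 2 * ∑ γ ∈ Z, f γ := by ring
        _ ≤ _ := hmain
        _ = _ := by ring
    exact le_of_mul_le_mul_left this hr0
  have hS0 : 0 ≤ ∑ γ ∈ Z, f γ := Finset.sum_nonneg (fun γ _ => by simp only [hf]; positivity)
  have h3 : (1 / L) * ∑ γ ∈ Z, f γ ≤ N * 8 * (C * T) := by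
    refine le_trans ?_ h2
    gcongr
    rw [hr]; gcongr; linarith
  rw [one_div, inv_mul_le_iff₀ hL] at h3
  nlinarith
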